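/- arXiv:math/0212156 — 3 statements merged into one kernel-verified Lean document; each statement's English description precedes it below -/
import Mathlib

section
/- Let p_1, …, p_k ∈ (0,1) with p_1 + ⋯ + p_k = 1, and let K ∈ ℕ. Then there exist an integer L ≥ 0 and a rational function Q(n, w_1, …, w_k) = ∑_{i,j⃗} c_{i,j⃗} n^i w_1^{j_1}⋯w_k^{j_k}, where c_{0,0⃗} = 1 and c_{i,j⃗} ≠ 0 only when −L ≤ i < 0 and 0 ≤ j_1 + ⋯ + j_k < −2i (so n^L·Q is a polynomial and Q(n,w) = 1 + o(1) uniformly for ‖w‖ ≤ C√(n log n)), such that for every n ∈ ℕ and all reals w_1, …, w_k with ∑ w_i = 0 and with each m_i := p_i·n + w_i a nonnegative integer, the multinomial probability B_p(n; m_1, …, m_k) = (n!/(m_1!⋯m_k!))·p_1^{m_1}⋯p_k^{m_k} satisfies B_p(n; m_1, …, m_k) = (2πn)^{−(k−1)/2}·(p_1⋯p_k)^{−1/2}·exp(−∑_{i=1}^k w_i²/(2 p_i n))·Q(n, w_1, …, w_k) + O(n^{−K}). -/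
open Finset
open scoped BigOperators

/-!
Stirling's remainder `s n` has differences `s n - s (n + 1) = x ^ 2 * h x` with `x = n⁻¹` and `h`
analytic, so solving this difference equation coefficientwise expands `s n` in powers of `n⁻¹`.
Writing `m_t = p_t n (1 + v_t)`, the logarithm of the multinomial probability then equals that of
the Gaussian density plus a correction made of Stirling remainders, `log (1 + v_t)` and `n` times
the third-order remainder of `(1 + v_t) log (1 + v_t)`.

For `|w| ≤ n ^ (5 / 8)` the monomials `n ^ i w ^ j` with `i < 0` and `|j| ≤ -3i / 2` are small and
span an algebra in which the correction has an expansion to any order; so does its exponential.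
Outside this region a Chernoff bound makes the multinomial probability and the Gaussian density
both smaller than any power of `n`.
-/

namespace MultinomialExpansion

open Filter Topology Asymptotics Polynomial

section Taylor

theorem exists_log_one_add_eq : ∃ F : ℝ → ℝ, AnalyticAt ℝ F 0 ∧
    ∀ z, Real.log (1 + z) = z - z ^ 2 / 2 + z ^ 3 * F z := by
  have hlog : AnalyticAt ℝ (fun z : ℝ ↦ Real.log (1 + z)) 0 :=
    AnalyticAt.log (by fun_prop) (by norm_num)
  have hderiv : deriv (fun z : ℝ ↦ Real.log (1 + z)) =ᶠ[𝓝 0] fun z ↦ (1 + z)⁻¹ := by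
    filter_upwards [lt_mem_nhds neg_one_lt_zero] with z hz
    simpa using (((hasDerivAt_id z).const_add 1).log (by simp; linarith)).deriv
  have hderiv₂ : iteratedDeriv 2 (fun z : ℝ ↦ Real.log (1 + z)) 0 = -1 := by
    rw [iteratedDeriv_succ, iteratedDeriv_one, hderiv.deriv_eq]
    simpa using (((hasDerivAt_id (0 : ℝ)).const_add 1).fun_inv (by simp)).deriv
  obtain ⟨F, hF, hlogF⟩ := hlog.exists_eq_sum_add_pow_mul 3
  refine ⟨F, hF, fun z ↦ ?_⟩
  rw [hlogF z]
  simp only [sum_range_succ, sum_range_zero, iteratedDeriv_zero, iteratedDeriv_one, hderiv₂,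
    hderiv.self_of_nhds, Nat.factorial, smul_eq_mul, add_zero, Real.log_one]
  norm_num
  ring

theorem exists_inv_one_add_pow_eq (r : ℕ) : ∃ F : ℝ → ℝ, AnalyticAt ℝ F 0 ∧
    ∀ z, ((1 + z)⁻¹) ^ r = 1 - r * z + z ^ 2 * F z := by
  have hpow : AnalyticAt ℝ (fun z : ℝ ↦ ((1 + z)⁻¹) ^ r) 0 :=
    (AnalyticAt.fun_inv (by fun_prop) (by norm_num)).fun_pow r
  have hderiv : deriv (fun z : ℝ ↦ ((1 + z)⁻¹) ^ r) 0 = -r := by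
    simpa using ((((hasDerivAt_id (0 : ℝ)).const_add 1).fun_inv (by simp)).fun_pow r).deriv
  obtain ⟨F, hF, hpowF⟩ := hpow.exists_eq_sum_add_pow_mul 2
  refine ⟨F, hF, fun z ↦ ?_⟩
  rw [hpowF z]
  simp only [sum_range_succ, sum_range_zero, iteratedDeriv_zero, iteratedDeriv_one, hderiv,
    Nat.factorial, smul_eq_mul]
  norm_num
  ring

theorem exists_one_add_mul_log_one_add_eq : ∃ H : ℝ → ℝ, AnalyticAt ℝ H 0 ∧
    ∀ z, (1 + z) * Real.log (1 + z) = z + z ^ 2 / 2 + z ^ 3 * H z := by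
  obtain ⟨F, hF, hlog⟩ := exists_log_one_add_eq
  refine ⟨fun z ↦ -1 / 2 + (1 + z) * F z, by fun_prop, fun z ↦ ?_⟩
  rw [hlog]
  ring

end Taylor

section Stirling

theorem isBigO_of_sub_succ_isBigO {E : Type*} [NormedAddCommGroup E] {d : ℕ → E} {b : ℕ → ℝ}
    (hd : Tendsto d atTop (𝓝 0)) (hb : Tendsto b atTop (𝓝 0))
    (hb_anti : ∀ᶠ n in atTop, b (n + 1) ≤ b n)
    (h : (fun n ↦ d n - d (n + 1)) =O[atTop] fun n ↦ b n - b (n + 1)) : d =O[atTop] b := by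
  obtain ⟨C, hC⟩ := h.bound
  obtain ⟨n₀, hn₀⟩ := eventually_atTop.1 (hC.and hb_anti)
  have hstep : ∀ n ≥ n₀, C * b (n + 1) - ‖d (n + 1)‖ ≤ C * b n - ‖d n‖ := fun n hn ↦ by
    obtain ⟨hdn, hbn⟩ := hn₀ n hn
    rw [Real.norm_of_nonneg (sub_nonneg.2 hbn)] at hdn
    linarith [norm_sub_norm_le (d n) (d (n + 1))]
  have hlim : Tendsto (fun n ↦ C * b n - ‖d n‖) atTop (𝓝 0) := by
    simpa using (hb.const_mul C).sub hd.norm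
  refine IsBigO.of_bound |C| (eventually_atTop.2 ⟨n₀, fun n hn ↦ ?_⟩)
  have hnonneg : 0 ≤ C * b n - ‖d n‖ := le_of_tendsto hlim <| eventually_atTop.2
    ⟨n, fun j hj ↦ Nat.le_induction le_rfl (fun i hi ih ↦ (hstep i (hn.trans hi)).trans ih) j hj⟩
  calc ‖d n‖ ≤ C * b n := sub_nonneg.1 hnonneg
    _ ≤ |C| * ‖b n‖ := (le_abs_self _).trans_eq (abs_mul _ _)

theorem inv_pow_add_two_le {x : ℝ} (hx : 1 ≤ x) (r : ℕ) :
    x⁻¹ ^ (r + 2) ≤ 2 * (x⁻¹ ^ (r + 1) - (x + 1)⁻¹ ^ (r + 1)) := by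
  have hle : (x + 1)⁻¹ ≤ x⁻¹ := by gcongr; linarith
  have hgap : x⁻¹ ^ 2 ≤ 2 * (x⁻¹ - (x + 1)⁻¹) := by
    have : 2 * (x⁻¹ - (x + 1)⁻¹) - x⁻¹ ^ 2 = (x - 1) / (x ^ 2 * (x + 1)) := by
      field_simp
      ring
    have : 0 ≤ (x - 1) / (x ^ 2 * (x + 1)) := div_nonneg (by linarith) (by positivity)
    linarith
  calc x⁻¹ ^ (r + 2) = x⁻¹ ^ r * x⁻¹ ^ 2 := pow_add _ _ _
    _ ≤ x⁻¹ ^ r * (2 * (x⁻¹ - (x + 1)⁻¹)) := by gcongr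
    _ = 2 * (x⁻¹ ^ (r + 1) - x⁻¹ ^ r * (x + 1)⁻¹) := by ring
    _ ≤ 2 * (x⁻¹ ^ (r + 1) - (x + 1)⁻¹ ^ r * (x + 1)⁻¹) := by gcongr
    _ = 2 * (x⁻¹ ^ (r + 1) - (x + 1)⁻¹ ^ (r + 1)) := by rw [← pow_succ]

theorem isBigO_inv_pow_of_sub_succ_isBigO {E : Type*} [NormedAddCommGroup E] {d : ℕ → E}
    (hd : Tendsto d atTop (𝓝 0)) (r : ℕ)
    (h : (fun n ↦ d n - d (n + 1)) =O[atTop] fun n : ℕ ↦ (n : ℝ)⁻¹ ^ (r + 2)) :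
    d =O[atTop] fun n : ℕ ↦ (n : ℝ)⁻¹ ^ (r + 1) := by
  have hlim : Tendsto (fun n : ℕ ↦ (n : ℝ)⁻¹ ^ (r + 1)) atTop (𝓝 0) := by
    simpa using (tendsto_inv_atTop_nhds_zero_nat (𝕜 := ℝ)).pow (r + 1)
  have hgap : ∀ n : ℕ, 1 ≤ n → (n : ℝ)⁻¹ ^ (r + 2) ≤
      2 * ((n : ℝ)⁻¹ ^ (r + 1) - ((n + 1 : ℕ) : ℝ)⁻¹ ^ (r + 1)) := fun n hn ↦ by
    simpa using inv_pow_add_two_le (Nat.one_le_cast.2 hn) r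
  refine isBigO_of_sub_succ_isBigO hd hlim ?_ (h.trans (IsBigO.of_bound 2 ?_))
  · filter_upwards [eventually_ge_atTop 1] with n hn
    linarith [hgap n hn, show 0 ≤ (n : ℝ)⁻¹ ^ (r + 2) by positivity]
  · filter_upwards [eventually_ge_atTop 1] with n hn
    rw [Real.norm_of_nonneg (by positivity)]
    exact (hgap n hn).trans (by gcongr; exact le_abs_self _)

/-- The operator `P(x) ↦ P(x) - P(x / (1 + x))` sends `x ^ r` to `r x ^ (r + 1) + O(x ^ (r + 2))`,
so a right-hand side vanishing to second order can be matched one coefficient at a time. -/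
theorem exists_polynomial_sub_eval_div_one_add {h : ℝ → ℝ} (hh : AnalyticAt ℝ h 0) (r : ℕ) :
    ∃ (P : ℝ[X]) (u : ℝ → ℝ), P.coeff 0 = 0 ∧ AnalyticAt ℝ u 0 ∧
      ∀ x, x ^ 2 * h x = P.eval x - P.eval (x / (1 + x)) + x ^ (r + 2) * u x := by
  induction r with
  | zero => exact ⟨0, h, by simp, hh, fun x ↦ by simp⟩
  | succ r ih =>
    obtain ⟨P, u, hP, hu, hPu⟩ := ih
    obtain ⟨v, hv, huv⟩ := hu.exists_eq_sum_add_pow_mul 1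
    obtain ⟨F, hF, hpow⟩ := exists_inv_one_add_pow_eq (r + 1)
    set c := u 0 / (r + 1) with hc
    refine ⟨P + C c * X ^ (r + 1), fun x ↦ v x + c * F x, by simp [hP], by fun_prop,
      fun x ↦ ?_⟩
    have hu_eq : u x = c * (r + 1) + x * v x := by
      rw [hc, div_mul_cancel₀ _ (by positivity)]
      simpa using huv x
    rw [hPu x, hu_eq]
    simp only [eval_add, eval_mul, eval_C, eval_pow, eval_X, div_eq_mul_inv, mul_pow, hpow]
    push_cast
    ring

/-- The remainder `log n! - (log √(2πn) + n log n - n)` in Stirling's formula. -/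
noncomputable def stirlingRemainder (n : ℕ) : ℝ :=
  Real.log (Stirling.stirlingSeq n) - Real.log √Real.pi

theorem log_factorial_eq_add_stirlingRemainder {n : ℕ} (hn : n ≠ 0) :
    Real.log n.factorial =
      n * Real.log n - n + Real.log (2 * Real.pi) / 2 + Real.log n / 2 + stirlingRemainder n := by
  have hn' : (0 : ℝ) < n := by positivity
  rw [stirlingRemainder, Stirling.log_stirlingSeq_formula, Real.log_mul two_ne_zero hn'.ne',
    Real.log_div hn'.ne' (Real.exp_ne_zero _), Real.log_exp,
    Real.log_mul two_ne_zero Real.pi_ne_zero, Real.log_sqrt Real.pi_nonneg]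
  ring

theorem tendsto_stirlingRemainder : Tendsto stirlingRemainder atTop (𝓝 0) := by
  have hlog := (Stirling.tendsto_stirlingSeq_sqrt_pi.log (by positivity)).sub_const
    (Real.log √Real.pi)
  rwa [sub_self] at hlog

theorem stirlingRemainder_sub_succ {n : ℕ} (hn : n ≠ 0) :
    stirlingRemainder n - stirlingRemainder (n + 1) =
      ((n : ℝ) + 1 / 2) * Real.log (1 + (n : ℝ)⁻¹) - 1 := by
  have hdiv : 1 + (n : ℝ)⁻¹ = (n + 1) / n := by field_simp
  simp (disch := positivity) only [stirlingRemainder, Stirling.log_stirlingSeq_formula, hdiv,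
    Nat.factorial_succ, Nat.cast_mul, Nat.cast_succ, Real.log_div, Real.log_mul, Real.log_exp]
  ring

theorem exists_stirlingRemainder_sub_succ_eq : ∃ h : ℝ → ℝ, AnalyticAt ℝ h 0 ∧
    ∀ n : ℕ, n ≠ 0 →
      stirlingRemainder n - stirlingRemainder (n + 1) = (n : ℝ)⁻¹ ^ 2 * h (n : ℝ)⁻¹ := by
  obtain ⟨F, hF, hlog⟩ := exists_log_one_add_eq
  refine ⟨fun x ↦ -1 / 4 + (1 + x / 2) * F x, by fun_prop, fun n hn ↦ ?_⟩
  rw [stirlingRemainder_sub_succ hn, hlog]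
  field_simp
  ring

theorem exists_polynomial_stirlingRemainder_sub_isBigO (r : ℕ) : ∃ P : ℝ[X], P.coeff 0 = 0 ∧
    (fun n : ℕ ↦ stirlingRemainder n - P.eval (n : ℝ)⁻¹) =O[atTop]
      fun n : ℕ ↦ (n : ℝ)⁻¹ ^ (r + 1) := by
  obtain ⟨h, hh, hdiff⟩ := exists_stirlingRemainder_sub_succ_eq
  obtain ⟨P, u, hP, hu, hPu⟩ := exists_polynomial_sub_eval_div_one_add hh r
  have hinv := tendsto_inv_atTop_nhds_zero_nat (𝕜 := ℝ)
  have hPlim : Tendsto (fun n : ℕ ↦ P.eval (n : ℝ)⁻¹) atTop (𝓝 0) := by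
    have hP0 : P.eval 0 = 0 := by rw [← coeff_zero_eq_eval_zero, hP]
    exact hP0 ▸ (P.continuous.tendsto 0).comp hinv
  have hu_bdd : (fun n : ℕ ↦ u (n : ℝ)⁻¹) =O[atTop] fun _ ↦ (1 : ℝ) :=
    (hu.continuousAt.tendsto.comp hinv).isBigO_one ℝ
  refine ⟨P, hP, isBigO_inv_pow_of_sub_succ_isBigO
    (by simpa using tendsto_stirlingRemainder.sub hPlim) r ?_⟩
  refine ((isBigO_refl (fun n : ℕ ↦ (n : ℝ)⁻¹ ^ (r + 2)) atTop).mul hu_bdd).congr' ?_ (by simp)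
  filter_upwards [eventually_ne_atTop 0] with n hn
  have hsucc : (n : ℝ)⁻¹ / (1 + (n : ℝ)⁻¹) = ((n + 1 : ℕ) : ℝ)⁻¹ := by
    push_cast
    field_simp
  have hstep := hPu (n : ℝ)⁻¹
  rw [hsucc] at hstep
  linarith [hdiff n hn]

end Stirling

/-- An algebra `terms` of functions that are all `O(size)` along `filter`, where `size → 0`. It
serves as a supply of terms for asymptotic expansions whose errors are measured in powers of
`size`. -/
structure AsymptoticScale (α : Type*) where
  filter : Filter α
  size : α → ℝ
  terms : NonUnitalSubalgebra ℝ (α → ℝ)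
  tendsto_size : Tendsto size filter (𝓝 0)
  isBigO_size : ∀ f ∈ terms, f =O[filter] size

namespace AsymptoticScale

variable {α : Type*} (S : AsymptoticScale α)

/-- `f` agrees with an element of `S.terms` up to any prescribed power of `S.size`. -/
def HasExpansion (f : α → ℝ) : Prop :=
  ∀ K : ℕ, ∃ a ∈ S.terms, (fun x ↦ f x - a x) =O[S.filter] fun x ↦ S.size x ^ K

variable {S} {f g : α → ℝ}

theorem HasExpansion.isBigO_size (hf : S.HasExpansion f) : f =O[S.filter] S.size := by
  obtain ⟨a, ha, hfa⟩ := hf 1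
  simp only [pow_one] at hfa
  simpa using hfa.add (S.isBigO_size a ha)

theorem HasExpansion.tendsto_zero (hf : S.HasExpansion f) : Tendsto f S.filter (𝓝 0) :=
  hf.isBigO_size.trans_tendsto S.tendsto_size

theorem hasExpansion_of_mem_terms (hf : f ∈ S.terms) : S.HasExpansion f :=
  fun K ↦ ⟨f, hf, by simpa using isBigO_zero _ _⟩

theorem HasExpansion.mul (hf : S.HasExpansion f) (hg : S.HasExpansion g) :
    S.HasExpansion (f * g) := fun K ↦ by
  obtain ⟨a, ha, hfa⟩ := hf K
  obtain ⟨b, hb, hgb⟩ := hg K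
  have hf_bdd : f =O[S.filter] fun _ ↦ (1 : ℝ) := hf.tendsto_zero.isBigO_one ℝ
  have hb_bdd : b =O[S.filter] fun _ ↦ (1 : ℝ) :=
    (hasExpansion_of_mem_terms hb).tendsto_zero.isBigO_one ℝ
  refine ⟨a * b, mul_mem ha hb, ?_⟩
  refine ((hf_bdd.mul hgb).add ((hfa.mul hb_bdd).congr_right fun x ↦ mul_comm _ _)).congr ?_ ?_
  · exact fun x ↦ by simp only [Pi.mul_apply]; ring
  · exact fun x ↦ one_mul _

variable (S) in
/-- The algebra of all functions with an expansion to arbitrary order in `S.terms`. -/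
def expandable : NonUnitalSubalgebra ℝ (α → ℝ) where
  carrier := {f | S.HasExpansion f}
  zero_mem' := hasExpansion_of_mem_terms (zero_mem _)
  add_mem' {f g} hf hg K := by
    obtain ⟨a, ha, hfa⟩ := hf K
    obtain ⟨b, hb, hgb⟩ := hg K
    exact ⟨a + b, add_mem ha hb, (hfa.add hgb).congr_left fun x ↦ (add_sub_add_comm _ _ _ _).symm⟩
  smul_mem' c f hf K := by
    obtain ⟨a, ha, hfa⟩ := hf K
    exact ⟨c • a, SMulMemClass.smul_mem c ha,
      (hfa.const_smul_left c).congr_left fun x ↦ smul_sub c _ _⟩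
  mul_mem' := HasExpansion.mul

theorem terms_le_expandable : S.terms ≤ S.expandable :=
  fun _ ↦ hasExpansion_of_mem_terms

theorem mem_expandable_of_forall_isBigO
    (h : ∀ K : ℕ, ∃ g ∈ S.expandable, (fun x ↦ f x - g x) =O[S.filter] fun x ↦ S.size x ^ K) :
    f ∈ S.expandable := fun K ↦ by
  obtain ⟨g, hg, hfg⟩ := h K
  obtain ⟨a, ha, hga⟩ := hg K
  exact ⟨a, ha, by simpa using hfg.add hga⟩

theorem mem_expandable_congr (hf : f ∈ S.expandable) (h : f =ᶠ[S.filter] g) :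
    g ∈ S.expandable :=
  mem_expandable_of_forall_isBigO fun _ ↦ ⟨f, hf,
    (isBigO_zero _ _).congr' (h.mono fun x hx ↦ by simp [hx]) .rfl⟩

theorem pow_mem_expandable (hf : f ∈ S.expandable) {i : ℕ} (hi : i ≠ 0) :
    f ^ i ∈ S.expandable := by
  induction i, Nat.one_le_iff_ne_zero.2 hi using Nat.le_induction with
  | base => simpa using hf
  | succ i _ ih => exact pow_succ f i ▸ mul_mem (ih (by omega)) hf

theorem size_pow_succ_isBigO (K : ℕ) :
    (fun x ↦ S.size x ^ (K + 1)) =O[S.filter] fun x ↦ S.size x ^ K := by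
  have hsize : S.size =O[S.filter] fun _ ↦ (1 : ℝ) := S.tendsto_size.isBigO_one ℝ
  simpa [pow_succ] using (isBigO_refl (fun x ↦ S.size x ^ K) S.filter).mul hsize

theorem comp_sub_mem_expandable {G : ℝ → ℝ} (hG : AnalyticAt ℝ G 0) (hf : f ∈ S.expandable) :
    (fun x ↦ G (f x) - G 0) ∈ S.expandable := by
  refine mem_expandable_of_forall_isBigO fun K ↦ ?_
  obtain ⟨H, hH, hGH⟩ := hG.exists_eq_sum_add_pow_mul (K + 1)
  have hH_bdd : (fun x ↦ H (f x)) =O[S.filter] fun _ ↦ (1 : ℝ) :=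
    (hH.continuousAt.tendsto.comp (HasExpansion.tendsto_zero hf)).isBigO_one ℝ
  have hremainder : (fun x ↦ f x ^ (K + 1) * H (f x)) =O[S.filter] fun x ↦ S.size x ^ K := by
    simpa using (((HasExpansion.isBigO_size hf).pow (K + 1)).trans (size_pow_succ_isBigO K)).mul
      hH_bdd
  refine ⟨∑ i ∈ range K, (iteratedDeriv (i + 1) G 0 / (i + 1).factorial) • f ^ (i + 1),
    sum_mem fun i _ ↦ SMulMemClass.smul_mem _ (pow_mem_expandable hf i.succ_ne_zero),
    hremainder.congr_left fun x ↦ ?_⟩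
  simp only [hGH (f x), sum_range_succ' _ K, Finset.sum_apply, Pi.smul_apply, Pi.pow_apply,
    smul_eq_mul, iteratedDeriv_zero, pow_zero, Nat.factorial_zero, Nat.cast_one, div_one,
    mul_comm_div, mul_comm]
  ring

theorem mul_comp_mem_expandable {G : ℝ → ℝ} (hG : AnalyticAt ℝ G 0) (hf : f ∈ S.expandable)
    (hg : g ∈ S.expandable) : (fun x ↦ g x * G (f x)) ∈ S.expandable := by
  have hsplit : (fun x ↦ g x * G (f x)) = (g * fun x ↦ G (f x) - G 0) + G 0 • g := by
    ext x
    simp only [Pi.add_apply, Pi.mul_apply, Pi.smul_apply, smul_eq_mul]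
    ring
  exact hsplit ▸ add_mem (mul_mem hg (comp_sub_mem_expandable hG hf)) (SMulMemClass.smul_mem _ hg)

theorem eval_mem_expandable {P : ℝ[X]} (hP : P.coeff 0 = 0) (hf : f ∈ S.expandable) :
    (fun x ↦ P.eval (f x)) ∈ S.expandable := by
  have hP_analytic : AnalyticAt ℝ (fun x ↦ P.eval x) 0 := by
    simpa using AnalyticAt.aeval_polynomial (𝕜 := ℝ) (analyticAt_id (z := (0 : ℝ))) P
  simpa [← coeff_zero_eq_eval_zero, hP] using comp_sub_mem_expandable hP_analytic hf

theorem comp_natCast_mem_expandable {s : ℕ → ℝ}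
    (hs : ∀ r : ℕ, ∃ P : ℝ[X], P.coeff 0 = 0 ∧
      (fun n : ℕ ↦ s n - P.eval (n : ℝ)⁻¹) =O[atTop] fun n : ℕ ↦ (n : ℝ)⁻¹ ^ (r + 1))
    {ν : α → ℕ} (hν : Tendsto ν S.filter atTop)
    (hν_inv : (fun x ↦ (ν x : ℝ)⁻¹) ∈ S.expandable) : (fun x ↦ s (ν x)) ∈ S.expandable := by
  refine mem_expandable_of_forall_isBigO fun K ↦ ?_
  obtain ⟨P, hP, hsP⟩ := hs K
  exact ⟨_, eval_mem_expandable hP hν_inv, (hsP.comp_tendsto hν).trans <|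
    ((HasExpansion.isBigO_size hν_inv).pow (K + 1)).trans (size_pow_succ_isBigO K)⟩

end AsymptoticScale

section Monomials

variable {ι : Type*} [Fintype ι]

/-- The size `n = ∑ t, m t` of an occupation vector, as a real number. -/
def total (m : ι → ℕ) : ℝ := (∑ t, m t : ℕ)

/-- The deviation `w_t = m_t - p_t n` of an occupation number from its mean. -/
def deviation (p : ι → ℝ) (m : ι → ℕ) (t : ι) : ℝ := m t - p t * total m

/-- The monomial `n ^ i * ∏ t, w_t ^ j_t` with exponents `x = (i, j)`, as a function of `m`. -/
noncomputable def monomialFun (p : ι → ℝ) (x : ℤ × (ι → ℕ)) (m : ι → ℕ) : ℝ :=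
  total m ^ x.1 * ∏ t, deviation p m t ^ x.2 t

/-- The exponents `(i, j)` with `i < 0` and `|j| ≤ -3i/2`. This is the cone spanned by the exponents
of `n⁻¹` and `w_t³ / n²`; all monomials with such exponents are uniformly small for
`|w| ≤ n ^ (5 / 8)`. -/
def admissibleExponents (ι : Type*) [Fintype ι] : Set (ℤ × (ι → ℕ)) :=
  {x | x.1 < 0 ∧ 2 * ((∑ t, x.2 t : ℕ) : ℤ) ≤ -3 * x.1}

theorem add_mem_admissibleExponents {x y : ℤ × (ι → ℕ)} (hx : x ∈ admissibleExponents ι)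
    (hy : y ∈ admissibleExponents ι) : x + y ∈ admissibleExponents ι := by
  obtain ⟨hx₁, hx₂⟩ := hx
  obtain ⟨hy₁, hy₂⟩ := hy
  refine ⟨add_neg hx₁ hy₁, ?_⟩
  simp only [Prod.fst_add, Prod.snd_add, Pi.add_apply, sum_add_distrib]
  push_cast at *
  linarith

theorem monomialFun_mul_monomialFun (p : ι → ℝ) {x y : ℤ × (ι → ℕ)}
    (hx : x ∈ admissibleExponents ι) (hy : y ∈ admissibleExponents ι) :
    monomialFun p x * monomialFun p y = monomialFun p (x + y) := by
  ext m
  have hne : x.1 + y.1 ≠ 0 := (add_neg hx.1 hy.1).ne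
  simp only [monomialFun, Pi.mul_apply, Prod.fst_add, Prod.snd_add, Pi.add_apply, pow_add,
    prod_mul_distrib, zpow_add' (Or.inr (Or.inl hne))]
  ring

/-- The algebra of correction terms: the span of the monomials with admissible exponents. -/
noncomputable def correctionTerms (p : ι → ℝ) : NonUnitalSubalgebra ℝ ((ι → ℕ) → ℝ) where
  __ := Submodule.span ℝ (monomialFun p '' admissibleExponents ι)
  mul_mem' {a b} ha hb := by
    have hab := Submodule.mul_mem_mul ha hb
    rw [Submodule.span_mul_span] at hab
    refine Submodule.span_mono ?_ hab
    rintro _ ⟨_, ⟨x, hx, rfl⟩, _, ⟨y, hy, rfl⟩, rfl⟩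
    exact ⟨x + y, add_mem_admissibleExponents hx hy, (monomialFun_mul_monomialFun p hx hy).symm⟩

theorem monomialFun_mem_correctionTerms (p : ι → ℝ) {x : ℤ × (ι → ℕ)}
    (hx : x ∈ admissibleExponents ι) : monomialFun p x ∈ correctionTerms p :=
  Submodule.subset_span ⟨x, hx, rfl⟩

theorem exists_finset_sum_of_mem_correctionTerms {p : ι → ℝ} {a : (ι → ℕ) → ℝ}
    (ha : a ∈ correctionTerms p) :
    ∃ (L : ℕ) (S : Finset (ℤ × (ι → ℕ))) (c : ℤ × (ι → ℕ) → ℝ), c (0, 0) = 1 ∧ (0, 0) ∈ S ∧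
      (∀ x ∈ S, x = (0, 0) ∨ -(L : ℤ) ≤ x.1 ∧ x ∈ admissibleExponents ι) ∧
      ∀ m, 1 + a m = ∑ x ∈ S, c x * monomialFun p x m := by
  classical
  obtain ⟨l, hl, rfl⟩ := (Finsupp.mem_span_image_iff_linearCombination ℝ).1 ha
  have hzero : ((0, 0) : ℤ × (ι → ℕ)) ∉ l.support := fun h ↦ lt_irrefl _ (hl h).1
  refine ⟨l.support.sup fun x ↦ x.1.natAbs, insert (0, 0) l.support,
    Function.update l (0, 0) 1, Function.update_self .., mem_insert_self .., fun x hx ↦ ?_,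
    fun m ↦ ?_⟩
  · refine (mem_insert.1 hx).imp_right fun hx ↦ ⟨?_, hl hx⟩
    have : x.1.natAbs ≤ l.support.sup fun x ↦ x.1.natAbs := le_sup (f := fun x ↦ x.1.natAbs) hx
    omega
  · rw [sum_insert hzero, Function.update_self, Finsupp.linearCombination_apply, Finsupp.sum,
      Finset.sum_apply]
    refine congrArg₂ _ (by simp [monomialFun]) (sum_congr rfl fun x hx ↦ ?_)
    rw [Function.update_of_ne (ne_of_mem_of_not_mem hx hzero), Pi.smul_apply, smul_eq_mul]

theorem tendsto_total_cofinite : Tendsto (total (ι := ι)) cofinite atTop := by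
  classical
  refine tendsto_atTop.2 fun b ↦ eventually_cofinite.2 ?_
  refine (Set.finite_Iic fun _ : ι ↦ ⌈b⌉₊).subset fun m hm t ↦ ?_
  have hmt : m t ≤ ∑ s, m s := single_le_sum (fun _ _ ↦ Nat.zero_le _) (mem_univ t)
  have htotal : total m < ⌈b⌉₊ := (not_le.1 hm).trans_le (Nat.le_ceil b)
  exact hmt.trans (Nat.cast_lt.1 htotal).le

theorem sum_deviation {p : ι → ℝ} (hsum : ∑ t, p t = 1) (m : ι → ℕ) :
    ∑ t, deviation p m t = 0 := by
  simp [deviation, sum_sub_distrib, ← sum_mul, hsum, total]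

theorem abs_deviation_le_total {p : ι → ℝ} {t : ι} (hp : p t ∈ Set.Icc 0 1) (m : ι → ℕ) :
    |deviation p m t| ≤ total m := by
  have hmt : (m t : ℝ) ≤ total m :=
    Nat.cast_le.2 (single_le_sum (fun _ _ ↦ Nat.zero_le _) (mem_univ t))
  have hmt_nonneg : (0 : ℝ) ≤ m t := Nat.cast_nonneg _
  have htotal : 0 ≤ total m := hmt_nonneg.trans hmt
  have hmean_nonneg : 0 ≤ p t * total m := mul_nonneg hp.1 htotal
  have hmean_le : p t * total m ≤ total m := mul_le_of_le_one_left htotal hp.2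
  exact abs_le.2 ⟨by unfold deviation; linarith, by unfold deviation; linarith⟩

theorem abs_monomialFun_le {p : ι → ℝ} {m : ι → ℕ} {b : ℝ} (hb : ∀ t, |deviation p m t| ≤ b)
    (x : ℤ × (ι → ℕ)) : |monomialFun p x m| ≤ total m ^ x.1 * b ^ ∑ t, x.2 t := by
  have htotal : 0 ≤ total m := Nat.cast_nonneg _
  rw [monomialFun, abs_mul, abs_of_nonneg (zpow_nonneg htotal _), abs_prod, ← prod_pow_eq_pow_sum]
  simp only [abs_pow]
  gcongr with t
  exact hb t

theorem exists_isBigO_total_pow {p : ι → ℝ} (hp : ∀ t, p t ∈ Set.Icc 0 1) {a : (ι → ℕ) → ℝ}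
    (ha : a ∈ correctionTerms p) : ∃ D : ℕ, a =O[cofinite] fun m ↦ total m ^ D := by
  have hpow : ∀ {D E : ℕ}, D ≤ E →
      (fun m : ι → ℕ ↦ total m ^ D) =O[cofinite] fun m ↦ total m ^ E :=
    fun h ↦ .pow_of_le_right (tendsto_total_cofinite.eventually_ge_atTop 1) h
  induction ha using Submodule.span_induction with
  | mem _ h =>
    obtain ⟨x, hx, rfl⟩ := h
    refine ⟨∑ t, x.2 t, IsBigO.of_bound' ?_⟩
    filter_upwards [tendsto_total_cofinite.eventually_ge_atTop 1] with m hm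
    have hb : ∀ t, |deviation p m t| ≤ total m := fun t ↦ abs_deviation_le_total (hp t) m
    rw [Real.norm_of_nonneg (by positivity : 0 ≤ total m ^ ∑ t, x.2 t)]
    exact (abs_monomialFun_le hb x).trans
      (mul_le_of_le_one_left (by positivity) (zpow_le_one_of_nonpos₀ hm hx.1.le))
  | zero => exact ⟨0, isBigO_zero _ _⟩
  | add a b _ _ iha ihb =>
    obtain ⟨D, hD⟩ := iha
    obtain ⟨E, hE⟩ := ihb
    exact ⟨max D E, (hD.trans (hpow (le_max_left _ _))).add (hE.trans (hpow (le_max_right _ _)))⟩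
  | smul c a _ iha => exact iha.imp fun D hD ↦ hD.const_smul_left c

end Monomials

section Central

variable {ι : Type*} [Fintype ι] (p : ι → ℝ)

/-- The central region, in which every deviation is at most `n ^ (5 / 8)`. Any exponent strictly
between `1 / 2` (the standard deviation) and `2 / 3` (so that `w ^ 3 / n ^ 2` is small) would do. -/
def centralRegion : Set (ι → ℕ) :=
  {m | ∀ t, |deviation p m t| ≤ total m ^ (5 / 8 : ℝ)}

/-- The filter expressing that `n → ∞` within the central region. -/
def central : Filter (ι → ℕ) := cofinite ⊓ 𝓟 (centralRegion p)

theorem eventually_mem_centralRegion : ∀ᶠ m in central p, m ∈ centralRegion p :=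
  mem_inf_of_right (mem_principal_self _)

theorem tendsto_total_central : Tendsto total (central p) atTop :=
  tendsto_total_cofinite.mono_left inf_le_left

theorem monomialFun_isBigO_central {x : ℤ × (ι → ℕ)} (hx : x ∈ admissibleExponents ι) :
    monomialFun p x =O[central p] fun m ↦ total m ^ (-(1 / 16) : ℝ) := by
  refine IsBigO.of_bound' ?_
  filter_upwards [eventually_mem_centralRegion p,
    (tendsto_total_central p).eventually_ge_atTop 1] with m hm htotal
  have hpos : 0 < total m := one_pos.trans_le htotal
  have hexponent : (x.1 : ℝ) + 5 / 8 * (∑ t, x.2 t : ℕ) ≤ -(1 / 16) := by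
    obtain ⟨hx₁, hx₂⟩ := hx
    have hx₁' : (x.1 : ℝ) ≤ -1 := by exact_mod_cast Int.le_sub_one_of_lt hx₁
    have hx₂' : 2 * ((∑ t, x.2 t : ℕ) : ℝ) ≤ -3 * x.1 := by exact_mod_cast hx₂
    linarith
  rw [Real.norm_of_nonneg (by positivity : 0 ≤ total m ^ (-(1 / 16) : ℝ))]
  calc ‖monomialFun p x m‖ ≤ total m ^ x.1 * (total m ^ (5 / 8 : ℝ)) ^ ∑ t, x.2 t :=
        abs_monomialFun_le hm x
    _ = total m ^ ((x.1 : ℝ) + 5 / 8 * (∑ t, x.2 t : ℕ)) := by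
        rw [Real.rpow_add hpos, Real.rpow_intCast, Real.rpow_mul_natCast hpos.le]
    _ ≤ total m ^ (-(1 / 16) : ℝ) := Real.rpow_le_rpow_of_exponent_le htotal hexponent

theorem isBigO_central_of_mem_correctionTerms {a : (ι → ℕ) → ℝ} (ha : a ∈ correctionTerms p) :
    a =O[central p] fun m ↦ total m ^ (-(1 / 16) : ℝ) := by
  induction ha using Submodule.span_induction with
  | mem _ h =>
    obtain ⟨x, hx, rfl⟩ := h
    exact monomialFun_isBigO_central p hx
  | zero => exact isBigO_zero _ _
  | add a b _ _ iha ihb => exact iha.add ihb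
  | smul c a _ iha => exact iha.const_smul_left c

/-- The scale of expansions in correction terms, valid in the central region. -/
noncomputable def centralScale : AsymptoticScale (ι → ℕ) where
  filter := central p
  size m := total m ^ (-(1 / 16) : ℝ)
  terms := correctionTerms p
  tendsto_size := (tendsto_rpow_neg_atTop (by norm_num)).comp (tendsto_total_central p)
  isBigO_size _ := isBigO_central_of_mem_correctionTerms p

theorem correctionTerms_le_expandable : correctionTerms p ≤ (centralScale p).expandable :=
  AsymptoticScale.terms_le_expandable (S := centralScale p)

/-- The relative deviation `v_t = w_t / (p_t n)`, so that `m_t = p_t n (1 + v_t)`. -/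
noncomputable def relativeDeviation (m : ι → ℕ) (t : ι) : ℝ := deviation p m t / (p t * total m)

theorem total_zpow_mul_deviation_pow_mem_expandable (t : ι) {i : ℤ} {j : ℕ} (hi : i < 0)
    (hij : 2 * (j : ℤ) ≤ -3 * i) :
    (fun m ↦ total m ^ i * deviation p m t ^ j) ∈ (centralScale p).expandable := by
  classical
  have hmem : (i, Pi.single t j) ∈ admissibleExponents ι := ⟨hi, by simpa using hij⟩
  convert correctionTerms_le_expandable p (monomialFun_mem_correctionTerms p hmem) using 1
  ext m
  simp [monomialFun, Pi.single_apply, pow_ite, Finset.prod_ite_eq']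

theorem relativeDeviation_mem_expandable (t : ι) :
    (relativeDeviation p · t) ∈ (centralScale p).expandable := by
  convert SMulMemClass.smul_mem (p t)⁻¹ (total_zpow_mul_deviation_pow_mem_expandable p t
    (i := -1) (j := 1) (by norm_num) (by norm_num)) using 1
  ext m
  simp only [relativeDeviation, Pi.smul_apply, smul_eq_mul, zpow_neg_one, pow_one]
  ring

theorem tendsto_relativeDeviation_central (t : ι) :
    Tendsto (relativeDeviation p · t) (central p) (𝓝 0) :=
  AsymptoticScale.HasExpansion.tendsto_zero (relativeDeviation_mem_expandable p t)

theorem inv_total_mem_expandable : (fun m ↦ (total m)⁻¹) ∈ (centralScale p).expandable := by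
  have hmem : ((-1, 0) : ℤ × (ι → ℕ)) ∈ admissibleExponents ι := ⟨by simp, by simp⟩
  convert correctionTerms_le_expandable p (monomialFun_mem_correctionTerms p hmem) using 1
  ext m
  simp [monomialFun]

variable {p}

theorem natCast_eq_mul_one_add_relativeDeviation {t : ι} (hp : p t ≠ 0) {m : ι → ℕ}
    (hm : total m ≠ 0) : (m t : ℝ) = p t * total m * (1 + relativeDeviation p m t) := by
  unfold relativeDeviation deviation
  field_simp
  ring

theorem inv_natCast_mem_expandable {t : ι} (hp : p t ≠ 0) :
    (fun m ↦ (m t : ℝ)⁻¹) ∈ (centralScale p).expandable := by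
  have hinv : AnalyticAt ℝ (fun z : ℝ ↦ (1 + z)⁻¹) 0 :=
    AnalyticAt.fun_inv (by fun_prop) (by norm_num)
  refine AsymptoticScale.mem_expandable_congr
    (SMulMemClass.smul_mem (p t)⁻¹ (AsymptoticScale.mul_comp_mem_expandable hinv
      (relativeDeviation_mem_expandable p t) (inv_total_mem_expandable p))) ?_
  filter_upwards [(tendsto_total_central p).eventually_ne_atTop 0] with m hm
  rw [natCast_eq_mul_one_add_relativeDeviation hp hm]
  simp only [Pi.smul_apply, smul_eq_mul, mul_inv, mul_assoc]

theorem tendsto_apply_central {t : ι} (hp : 0 < p t) :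
    Tendsto (fun m ↦ m t) (central p) atTop := by
  have hratio : Tendsto (fun m ↦ p t * (1 + relativeDeviation p m t)) (central p) (𝓝 (p t)) := by
    simpa using ((tendsto_relativeDeviation_central p t).const_add 1).const_mul (p t)
  refine tendsto_natCast_atTop_iff (R := ℝ).1 <|
    ((tendsto_total_central p).atTop_mul_pos hp hratio).congr' ?_
  filter_upwards [(tendsto_total_central p).eventually_ne_atTop 0] with m hm
  rw [natCast_eq_mul_one_add_relativeDeviation hp.ne' hm]
  ring

theorem stirlingRemainder_sum_mem_expandable :
    (fun m ↦ stirlingRemainder (∑ t, m t)) ∈ (centralScale p).expandable :=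
  AsymptoticScale.comp_natCast_mem_expandable exists_polynomial_stirlingRemainder_sub_isBigO
    (tendsto_natCast_atTop_iff (R := ℝ).1 (tendsto_total_central p)) (inv_total_mem_expandable p)

theorem stirlingRemainder_apply_mem_expandable {t : ι} (hp : 0 < p t) :
    (fun m ↦ stirlingRemainder (m t)) ∈ (centralScale p).expandable :=
  AsymptoticScale.comp_natCast_mem_expandable exists_polynomial_stirlingRemainder_sub_isBigO
    (tendsto_apply_central hp) (inv_natCast_mem_expandable hp.ne')

theorem log_one_add_relativeDeviation_mem_expandable (t : ι) :
    (fun m ↦ Real.log (1 + relativeDeviation p m t)) ∈ (centralScale p).expandable := by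
  have hlog : AnalyticAt ℝ (fun z : ℝ ↦ Real.log (1 + z)) 0 :=
    AnalyticAt.log (by fun_prop) (by norm_num)
  simpa using AsymptoticScale.comp_sub_mem_expandable hlog (relativeDeviation_mem_expandable p t)

/-- The remainder of `(1 + z) log (1 + z)` after its second-order Taylor polynomial at `0`. -/
noncomputable def entropyRemainder (z : ℝ) : ℝ := (1 + z) * Real.log (1 + z) - z - z ^ 2 / 2

theorem total_mul_entropyRemainder_mem_expandable (t : ι) :
    (fun m ↦ total m * entropyRemainder (relativeDeviation p m t)) ∈
      (centralScale p).expandable := by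
  obtain ⟨H, hH, hlogH⟩ := exists_one_add_mul_log_one_add_eq
  have hcube : (fun m ↦ total m * relativeDeviation p m t ^ 3) ∈ (centralScale p).expandable := by
    refine AsymptoticScale.mem_expandable_congr (SMulMemClass.smul_mem (p t ^ 3)⁻¹ <|
      total_zpow_mul_deviation_pow_mem_expandable p t (i := -2) (j := 3) (by norm_num)
        (by norm_num)) ?_
    filter_upwards [(tendsto_total_central p).eventually_ne_atTop 0] with m hm
    simp only [relativeDeviation, Pi.smul_apply, smul_eq_mul]
    field_simp
  convert AsymptoticScale.mul_comp_mem_expandable hH (relativeDeviation_mem_expandable p t) hcube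
    using 2 with m
  rw [entropyRemainder, hlogH]
  ring

end Central

section Density

variable {ι : Type*} [Fintype ι]

/-- The multinomial probability `B_p(n; m_1, …, m_k)` with `n = ∑ t, m t`. -/
noncomputable def multinomialProb (p : ι → ℝ) (m : ι → ℕ) : ℝ :=
  (Nat.multinomial univ m : ℝ) * ∏ t, p t ^ m t

/-- The Gaussian density that approximates `multinomialProb p m` to leading order. -/
noncomputable def gaussianMain (p : ι → ℝ) (m : ι → ℕ) : ℝ :=
  (2 * Real.pi * total m) ^ (-((Fintype.card ι : ℝ) - 1) / 2) * (∏ t, p t) ^ (-(1 : ℝ) / 2) *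
    Real.exp (-∑ t, deviation p m t ^ 2 / (2 * p t * total m))

/-- The contribution of `log (m t)!` to the correction of the Gaussian density. -/
noncomputable def factorCorrection (p : ι → ℝ) (m : ι → ℕ) (t : ι) : ℝ :=
  stirlingRemainder (m t) + Real.log (1 + relativeDeviation p m t) / 2 +
    p t * (total m * entropyRemainder (relativeDeviation p m t))

/-- The logarithm of the ratio of the multinomial probability to its Gaussian approximation, when
all `m t` are positive. -/
noncomputable def correction (p : ι → ℝ) (m : ι → ℕ) : ℝ :=
  stirlingRemainder (∑ t, m t) - ∑ t, factorCorrection p m t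

variable {p : ι → ℝ}

theorem correction_mem_expandable (hp : ∀ t, 0 < p t) :
    correction p ∈ (centralScale p).expandable := by
  have hfactor (t : ι) : (factorCorrection p · t) ∈ (centralScale p).expandable := by
    convert add_mem (add_mem (stirlingRemainder_apply_mem_expandable (hp t))
      (SMulMemClass.smul_mem (2⁻¹ : ℝ) (log_one_add_relativeDeviation_mem_expandable t)))
      (SMulMemClass.smul_mem (p t) (total_mul_entropyRemainder_mem_expandable t)) using 1
    ext m
    simp only [factorCorrection, Pi.add_apply, Pi.smul_apply, smul_eq_mul]
    ring
  convert sub_mem stirlingRemainder_sum_mem_expandable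
    (sum_mem fun t (_ : t ∈ univ) ↦ hfactor t) using 1
  ext m
  simp only [correction, Pi.sub_apply, Finset.sum_apply]

theorem total_pos_of_ne_zero {t : ι} {m : ι → ℕ} (hm : m t ≠ 0) : 0 < total m :=
  Nat.cast_pos.2 ((Nat.pos_of_ne_zero hm).trans_le
    (single_le_sum (fun _ _ ↦ Nat.zero_le _) (mem_univ t)))

theorem log_factorial_apply {t : ι} (hp : 0 < p t) {m : ι → ℕ} (hm : m t ≠ 0) :
    Real.log (m t).factorial = m t * Real.log (p t) + m t * Real.log (total m) - m t +
      deviation p m t + deviation p m t ^ 2 / (2 * p t * total m) +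
      (Real.log (2 * Real.pi) + Real.log (total m)) / 2 + Real.log (p t) / 2 +
      factorCorrection p m t := by
  have htotal : 0 < total m := total_pos_of_ne_zero hm
  set v := relativeDeviation p m t with hv
  have hmt : (m t : ℝ) = p t * total m * (1 + v) :=
    natCast_eq_mul_one_add_relativeDeviation hp.ne' htotal.ne'
  have hv_pos : 0 < 1 + v := by
    have : (0 : ℝ) < m t := by positivity
    rw [hmt] at this
    exact pos_of_mul_pos_right this (by positivity)
  have hlog : Real.log (m t) = Real.log (p t) + Real.log (total m) + Real.log (1 + v) := by
    rw [hmt, Real.log_mul (by positivity) hv_pos.ne', Real.log_mul hp.ne' htotal.ne']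
  have hw : deviation p m t = p t * total m * v := by
    rw [hv, relativeDeviation]
    field_simp
  have hsq : (p t * total m * v) ^ 2 / (2 * p t * total m) = p t * total m * v ^ 2 / 2 := by
    field_simp
  rw [log_factorial_eq_add_stirlingRemainder hm, hlog, factorCorrection, ← hv, entropyRemainder,
    hw, hsq, hmt]
  ring

theorem multinomialProb_nonneg (hp : ∀ t, 0 ≤ p t) (m : ι → ℕ) : 0 ≤ multinomialProb p m :=
  mul_nonneg (Nat.cast_nonneg _) (prod_nonneg fun t _ ↦ pow_nonneg (hp t) _)

theorem gaussianMain_nonneg (hp : ∀ t, 0 ≤ p t) (m : ι → ℕ) : 0 ≤ gaussianMain p m := by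
  have hprod : 0 ≤ ∏ t, p t := prod_nonneg fun t _ ↦ hp t
  have htotal : 0 ≤ total m := Nat.cast_nonneg _
  unfold gaussianMain
  positivity

theorem log_multinomialProb (hp : ∀ t, p t ≠ 0) (m : ι → ℕ) :
    Real.log (multinomialProb p m) = Real.log (∑ t, m t).factorial -
      ∑ t, Real.log (m t).factorial + ∑ t, m t * Real.log (p t) := by
  have hmultinomial : (Nat.multinomial univ m : ℝ) ≠ 0 :=
    Nat.cast_ne_zero.2 (Nat.multinomial_pos _ _).ne'
  have hprod : ∏ t, ((m t).factorial : ℝ) ≠ 0 :=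
    prod_ne_zero_iff.2 fun t _ ↦ Nat.cast_ne_zero.2 (Nat.factorial_ne_zero _)
  rw [← Nat.multinomial_spec, multinomialProb, Real.log_mul hmultinomial
    (prod_ne_zero_iff.2 fun t _ ↦ pow_ne_zero _ (hp t)), Nat.cast_mul, Nat.cast_prod,
    Real.log_mul hprod hmultinomial, Real.log_prod fun t _ ↦ pow_ne_zero _ (hp t),
    Real.log_prod fun t _ ↦ Nat.cast_ne_zero.2 (Nat.factorial_ne_zero _)]
  simp only [Real.log_pow]
  ring

theorem log_gaussianMain (hp : ∀ t, 0 < p t) {m : ι → ℕ} (hm : 0 < total m) :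
    Real.log (gaussianMain p m) =
      -((Fintype.card ι : ℝ) - 1) / 2 * (Real.log (2 * Real.pi) + Real.log (total m)) -
        (∑ t, Real.log (p t)) / 2 - ∑ t, deviation p m t ^ 2 / (2 * p t * total m) := by
  have hprod : 0 < ∏ t, p t := prod_pos fun t _ ↦ hp t
  rw [gaussianMain, Real.log_mul (by positivity) (Real.exp_ne_zero _),
    Real.log_mul (by positivity) (by positivity), Real.log_exp, Real.log_rpow (by positivity),
    Real.log_rpow hprod, Real.log_mul (by positivity) hm.ne', Real.log_prod fun t _ ↦ (hp t).ne']
  ring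

theorem log_multinomialProb_eq_log_gaussianMain_add [Nonempty ι] (hp : ∀ t, 0 < p t)
    (hsum : ∑ t, p t = 1) {m : ι → ℕ} (hm : ∀ t, m t ≠ 0) :
    Real.log (multinomialProb p m) = Real.log (gaussianMain p m) + correction p m := by
  have htotal : 0 < total m := total_pos_of_ne_zero (hm (Classical.arbitrary ι))
  have htotal_sum : ∑ t, (m t : ℝ) = total m := (Nat.cast_sum _ _).symm
  rw [log_multinomialProb fun t ↦ (hp t).ne', log_gaussianMain hp htotal, correction,
    log_factorial_eq_add_stirlingRemainder (Nat.cast_ne_zero.1 htotal.ne'),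
    sum_congr rfl fun t _ ↦ log_factorial_apply (hp t) (hm t)]
  simp only [sum_add_distrib, sum_sub_distrib, sum_const, nsmul_eq_mul, card_univ, ← sum_mul,
    ← sum_div, sum_deviation hsum, htotal_sum, ← total.eq_1]
  ring

theorem multinomialProb_eq_gaussianMain_mul_exp_correction [Nonempty ι] (hp : ∀ t, 0 < p t)
    (hsum : ∑ t, p t = 1) {m : ι → ℕ} (hm : ∀ t, m t ≠ 0) :
    multinomialProb p m = gaussianMain p m * Real.exp (correction p m) := by
  have htotal : 0 < total m := total_pos_of_ne_zero (hm (Classical.arbitrary ι))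
  have hprod : 0 < ∏ t, p t := prod_pos fun t _ ↦ hp t
  have hmultinomial_pos : 0 < multinomialProb p m := mul_pos
    (Nat.cast_pos.2 (Nat.multinomial_pos _ _)) (prod_pos fun t _ ↦ pow_pos (hp t) _)
  have hgaussian_pos : 0 < gaussianMain p m := by
    unfold gaussianMain
    positivity
  rw [← Real.exp_log hmultinomial_pos, log_multinomialProb_eq_log_gaussianMain_add hp hsum hm,
    Real.exp_add, Real.exp_log hgaussian_pos]

theorem gaussianMain_le [Nonempty ι] (hp : ∀ t, 0 ≤ p t) {m : ι → ℕ} (hm : 1 ≤ total m) :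
    gaussianMain p m ≤ (∏ t, p t) ^ (-(1 : ℝ) / 2) *
      Real.exp (-∑ t, deviation p m t ^ 2 / (2 * p t * total m)) := by
  have hprod : 0 ≤ ∏ t, p t := prod_nonneg fun t _ ↦ hp t
  have hbase : 1 ≤ 2 * Real.pi * total m :=
    one_le_mul_of_one_le_of_one_le (by linarith [Real.pi_gt_three]) hm
  have hcard : (1 : ℝ) ≤ Fintype.card ι := Nat.one_le_cast.2 Fintype.card_pos
  have hpower : (2 * Real.pi * total m) ^ (-((Fintype.card ι : ℝ) - 1) / 2) ≤ 1 :=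
    Real.rpow_le_one_of_one_le_of_nonpos hbase (by linarith)
  rw [gaussianMain, mul_assoc]
  exact mul_le_of_le_one_left (by positivity) hpower

theorem gaussianMain_isBigO_one [Nonempty ι] (hp : ∀ t, 0 ≤ p t) :
    gaussianMain p =O[cofinite] fun _ ↦ (1 : ℝ) := by
  refine IsBigO.of_bound ((∏ t, p t) ^ (-(1 : ℝ) / 2)) ?_
  filter_upwards [tendsto_total_cofinite.eventually_ge_atTop 1] with m hm
  have hexponent : 0 ≤ ∑ t, deviation p m t ^ 2 / (2 * p t * total m) :=
    sum_nonneg fun t _ ↦ div_nonneg (sq_nonneg _)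
      (mul_nonneg (mul_nonneg zero_le_two (hp t)) (zero_le_one.trans hm))
  have hprod : 0 ≤ ∏ t, p t := prod_nonneg fun t _ ↦ hp t
  rw [Real.norm_of_nonneg (gaussianMain_nonneg hp m), norm_one]
  exact (gaussianMain_le hp hm).trans (by gcongr; exact Real.exp_le_one_iff.2 (by linarith))

theorem centralScale_size_pow_eventuallyEq (p : ι → ℝ) (K : ℕ) :
    (fun m ↦ (centralScale p).size m ^ (16 * K)) =ᶠ[central p] fun m ↦ (total m ^ K)⁻¹ := by
  filter_upwards [(tendsto_total_central p).eventually_gt_atTop 0] with m hm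
  calc (total m ^ (-(1 / 16) : ℝ)) ^ (16 * K)
      = total m ^ (-(1 / 16) * (16 * K : ℕ) : ℝ) := (Real.rpow_mul_natCast hm.le _ _).symm
    _ = total m ^ (-K : ℝ) := by congr 1; push_cast; ring
    _ = (total m ^ K)⁻¹ := by rw [Real.rpow_neg hm.le, Real.rpow_natCast]

theorem exists_multinomialProb_sub_isBigO_central [Nonempty ι] (hp : ∀ t, 0 < p t)
    (hsum : ∑ t, p t = 1) (K : ℕ) : ∃ a ∈ correctionTerms p,
      (fun m ↦ multinomialProb p m - gaussianMain p m * (1 + a m)) =O[central p]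
        fun m ↦ (total m ^ K)⁻¹ := by
  obtain ⟨a, ha, hexp⟩ := AsymptoticScale.comp_sub_mem_expandable (G := Real.exp)
    analyticAt_rexp (correction_mem_expandable hp) (16 * K)
  have hgaussian : gaussianMain p =O[central p] fun _ ↦ (1 : ℝ) :=
    (gaussianMain_isBigO_one fun t ↦ (hp t).le).mono inf_le_left
  refine ⟨a, ha, (hgaussian.mul hexp).congr' ?_ ?_⟩
  · filter_upwards [eventually_all.2 fun t ↦ (tendsto_apply_central (hp t)).eventually_ne_atTop 0]
      with m hm
    rw [multinomialProb_eq_gaussianMain_mul_exp_correction hp hsum hm, Real.exp_zero]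
    ring
  · simpa only [one_mul] using centralScale_size_pow_eventuallyEq p K

end Density

section Tail

variable {ι : Type*} [Fintype ι] {p : ι → ℝ}

theorem multinomial_mul_prod_pow_le {y : ι → ℝ} (hy : ∀ t, 0 ≤ y t) (m : ι → ℕ) :
    (Nat.multinomial univ m : ℝ) * ∏ t, y t ^ m t ≤ (∑ t, y t) ^ ∑ t, m t := by
  classical
  rw [sum_pow_eq_sum_piAntidiag]
  exact single_le_sum (f := fun l : ι → ℕ ↦ (Nat.multinomial univ l : ℝ) * ∏ t, y t ^ l t)
    (fun l _ ↦ mul_nonneg (Nat.cast_nonneg _) (prod_nonneg fun t _ ↦ pow_nonneg (hy t) _))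
    (by simp)

theorem multinomialProb_le_exp (hp : p ∈ stdSimplex ℝ ι) (m : ι → ℕ) (t : ι) (s : ℝ) :
    multinomialProb p m ≤
      Real.exp (total m * p t * (Real.exp s - 1 - s) - s * deviation p m t) := by
  classical
  set y : ι → ℝ := fun u ↦ p u * Real.exp (Pi.single (M := fun _ ↦ ℝ) t s u)
  have hprod : ∏ u, y u ^ m u = (∏ u, p u ^ m u) * Real.exp (s * m t) := by
    simp only [y, mul_pow, prod_mul_distrib, ← Real.exp_nat_mul, ← Real.exp_sum, Pi.single_apply,
      mul_ite, mul_zero, sum_ite_eq', mem_univ, if_true, mul_comm s]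
  have hsum : ∑ u, y u = 1 + p t * (Real.exp s - 1) := by
    have hy (u : ι) : y u = p u + if u = t then p t * (Real.exp s - 1) else 0 := by
      by_cases hu : u = t
      · simp [y, hu]; ring
      · simp [y, hu]
    simp only [hy, sum_add_distrib, hp.2, sum_ite_eq', mem_univ, if_true]
  have hy_nonneg (u : ι) : 0 ≤ y u := mul_nonneg (hp.1 u) (Real.exp_nonneg _)
  have hchernoff : multinomialProb p m * Real.exp (s * m t) ≤
      Real.exp (total m * (p t * (Real.exp s - 1))) :=
    calc multinomialProb p m * Real.exp (s * m t)
        = (Nat.multinomial univ m : ℝ) * ∏ u, y u ^ m u := by rw [hprod, multinomialProb, mul_assoc]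
      _ ≤ (1 + p t * (Real.exp s - 1)) ^ ∑ u, m u := hsum ▸ multinomial_mul_prod_pow_le hy_nonneg m
      _ ≤ Real.exp (p t * (Real.exp s - 1)) ^ ∑ u, m u := by
        gcongr
        · exact hsum ▸ sum_nonneg fun u _ ↦ hy_nonneg u
        · linarith [Real.add_one_le_exp (p t * (Real.exp s - 1))]
      _ = Real.exp (total m * (p t * (Real.exp s - 1))) := by rw [total, Real.exp_nat_mul]
  rw [← le_div_iff₀ (Real.exp_pos _), ← Real.exp_sub] at hchernoff
  refine hchernoff.trans_eq (congrArg _ ?_)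
  unfold deviation
  ring

theorem multinomialProb_le_exp_neg_sq (hp : p ∈ stdSimplex ℝ ι) {m : ι → ℕ} (hm : 0 < total m)
    (t : ι) : multinomialProb p m ≤ Real.exp (-(deviation p m t ^ 2 / (4 * total m))) := by
  have hpt := mem_Icc_of_mem_stdSimplex hp t
  set s := deviation p m t / (2 * total m) with hs_def
  have hdev : deviation p m t = 2 * total m * s := by
    rw [hs_def]
    field_simp
  have hs : |s| ≤ 1 := by
    rw [hs_def, abs_div, abs_of_pos (by positivity : 0 < 2 * total m), div_le_one (by positivity)]
    linarith [abs_deviation_le_total hpt m]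
  have hexp : Real.exp s - 1 - s ≤ s ^ 2 :=
    (le_abs_self _).trans (Real.abs_exp_sub_one_sub_id_le hs)
  have hvariance : total m * p t * (Real.exp s - 1 - s) ≤ total m * s ^ 2 := by
    calc total m * p t * (Real.exp s - 1 - s) ≤ total m * p t * s ^ 2 := by
          gcongr
          exact mul_nonneg hm.le hpt.1
      _ ≤ total m * s ^ 2 := by
          gcongr
          exact mul_le_of_le_one_right hm.le hpt.2
  refine (multinomialProb_le_exp hp m t s).trans (Real.exp_le_exp.2 ?_)
  have hsq : (2 * total m * s) ^ 2 / (4 * total m) = total m * s ^ 2 := by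
    field_simp
    ring
  rw [hdev, hsq]
  linarith

theorem gaussianMain_le_exp_neg_sq (hp : ∀ t, 0 < p t) (hsum : ∑ t, p t = 1) {m : ι → ℕ}
    (hm : 1 ≤ total m) (t : ι) : gaussianMain p m ≤
      (∏ u, p u) ^ (-(1 : ℝ) / 2) * Real.exp (-(deviation p m t ^ 2 / (4 * total m))) := by
  have : Nonempty ι := ⟨t⟩
  have hprod : 0 < ∏ u, p u := prod_pos fun u _ ↦ hp u
  have hpt : p t ≤ 1 := (mem_Icc_of_mem_stdSimplex ⟨fun u ↦ (hp u).le, hsum⟩ t).2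
  refine (gaussianMain_le (fun u ↦ (hp u).le) hm).trans ?_
  gcongr
  calc deviation p m t ^ 2 / (4 * total m) ≤ deviation p m t ^ 2 / (2 * p t * total m) := by
        have := hp t
        gcongr
        linarith
    _ ≤ ∑ u, deviation p m u ^ 2 / (2 * p u * total m) :=
        single_le_sum (f := fun u ↦ deviation p m u ^ 2 / (2 * p u * total m))
          (fun u _ ↦ by have := hp u; positivity) (mem_univ t)

theorem exp_neg_total_rpow_isBigO (K : ℕ) :
    (fun m : ι → ℕ ↦ Real.exp (-(1 / 4) * total m ^ (1 / 4 : ℝ))) =O[cofinite]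
      fun m ↦ (total m ^ K)⁻¹ := by
  have hroot : Tendsto (fun m : ι → ℕ ↦ total m ^ (1 / 4 : ℝ)) cofinite atTop :=
    (tendsto_rpow_atTop (by norm_num)).comp tendsto_total_cofinite
  refine ((isLittleO_exp_neg_mul_rpow_atTop (a := 1 / 4) (by norm_num) (-(4 * K))).isBigO
    |>.comp_tendsto hroot).congr_right fun m ↦ ?_
  have htotal : 0 ≤ total m := Nat.cast_nonneg _
  simp only [Function.comp_apply]
  rw [← Real.rpow_mul htotal, ← Real.rpow_natCast, ← Real.rpow_neg htotal]
  ring_nf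

variable (p) in
/-- The filter expressing that `n → ∞` outside the central region. -/
def tail : Filter (ι → ℕ) := cofinite ⊓ 𝓟 (centralRegion p)ᶜ

theorem central_sup_tail : central p ⊔ tail p = cofinite := by
  rw [central, tail, ← inf_sup_left, sup_principal, Set.union_compl_self, principal_univ,
    inf_top_eq]

theorem isBigO_tail_of_le_exp_neg_sq {f : (ι → ℕ) → ℝ} {C : ℝ} (hf : ∀ m, 0 ≤ f m)
    (hC : 0 ≤ C) (h : ∀ m, 1 ≤ total m → ∀ t,
      f m ≤ C * Real.exp (-(deviation p m t ^ 2 / (4 * total m)))) (K : ℕ) :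
    f =O[tail p] fun m ↦ (total m ^ K)⁻¹ := by
  refine IsBigO.trans (IsBigO.of_bound C ?_) ((exp_neg_total_rpow_isBigO K).mono inf_le_left)
  filter_upwards [mem_inf_of_right (mem_principal_self _),
    mem_inf_of_left (tendsto_total_cofinite.eventually_ge_atTop 1)] with m hm htotal
  obtain ⟨t, ht⟩ : ∃ t, total m ^ (5 / 8 : ℝ) < |deviation p m t| := by
    simpa [centralRegion] using hm
  have hpos : 0 < total m := one_pos.trans_le htotal
  have hsq : total m ^ (1 / 4 : ℝ) * total m ≤ deviation p m t ^ 2 := by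
    calc total m ^ (1 / 4 : ℝ) * total m = (total m ^ (5 / 8 : ℝ)) ^ 2 := by
          rw [← Real.rpow_add_one hpos.ne', ← Real.rpow_mul_natCast hpos.le]
          norm_num
      _ ≤ |deviation p m t| ^ 2 := by gcongr
      _ = deviation p m t ^ 2 := sq_abs _
  rw [Real.norm_of_nonneg (hf m), Real.norm_of_nonneg (Real.exp_nonneg _)]
  refine (h m htotal t).trans ?_
  gcongr
  rw [neg_mul, neg_le_neg_iff, le_div_iff₀ (by positivity)]
  linarith

theorem multinomialProb_isBigO_tail (hp : p ∈ stdSimplex ℝ ι) (K : ℕ) :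
    multinomialProb p =O[tail p] fun m ↦ (total m ^ K)⁻¹ :=
  isBigO_tail_of_le_exp_neg_sq (multinomialProb_nonneg hp.1) zero_le_one
    (fun _ hm t ↦ by simpa using multinomialProb_le_exp_neg_sq hp (one_pos.trans_le hm) t) K

theorem gaussianMain_isBigO_tail (hp : ∀ t, 0 < p t) (hsum : ∑ t, p t = 1) (K : ℕ) :
    gaussianMain p =O[tail p] fun m ↦ (total m ^ K)⁻¹ :=
  isBigO_tail_of_le_exp_neg_sq (gaussianMain_nonneg fun t ↦ (hp t).le)
    (Real.rpow_nonneg (prod_nonneg fun t _ ↦ (hp t).le) _)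
    (fun _ hm t ↦ gaussianMain_le_exp_neg_sq hp hsum hm t) K

theorem multinomialProb_sub_isBigO_tail (hp : ∀ t, 0 < p t) (hsum : ∑ t, p t = 1)
    {a : (ι → ℕ) → ℝ} (ha : a ∈ correctionTerms p) (K : ℕ) :
    (fun m ↦ multinomialProb p m - gaussianMain p m * (1 + a m)) =O[tail p]
      fun m ↦ (total m ^ K)⁻¹ := by
  have hsimplex : p ∈ stdSimplex ℝ ι := ⟨fun t ↦ (hp t).le, hsum⟩
  obtain ⟨D, hD⟩ := exists_isBigO_total_pow (mem_Icc_of_mem_stdSimplex hsimplex) ha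
  have hcorr : (fun m ↦ gaussianMain p m * a m) =O[tail p] fun m ↦ (total m ^ K)⁻¹ := by
    refine ((gaussianMain_isBigO_tail hp hsum (K + D)).mul (hD.mono inf_le_left)).trans_eventuallyEq
      ?_
    filter_upwards [mem_inf_of_left (tendsto_total_cofinite.eventually_gt_atTop 0)] with m hm
    rw [pow_add]
    field_simp
  refine (((multinomialProb_isBigO_tail hsimplex K).sub
    (gaussianMain_isBigO_tail hp hsum K)).sub hcorr).congr_left fun m ↦ ?_
  ring

theorem exists_multinomialProb_sub_isBigO [Nonempty ι] (hp : ∀ t, 0 < p t)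
    (hsum : ∑ t, p t = 1) (K : ℕ) : ∃ a ∈ correctionTerms p,
      (fun m ↦ multinomialProb p m - gaussianMain p m * (1 + a m)) =O[cofinite]
        fun m ↦ (total m ^ K)⁻¹ := by
  obtain ⟨a, ha, hcentral⟩ := exists_multinomialProb_sub_isBigO_central hp hsum K
  refine ⟨a, ha, ?_⟩
  rw [← central_sup_tail (p := p), isBigO_sup]
  exact ⟨hcentral, multinomialProb_sub_isBigO_tail hp hsum ha K⟩

end Tail

end MultinomialExpansion

open MultinomialExpansion in
theorem multinomial_expansion_general {ι : Type*} [Fintype ι] (p : ι → ℝ) (hp : ∀ t, 0 < p t)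
    (hsum : ∑ t, p t = 1) (K : ℕ) :
    ∃ (L : ℕ) (S : Finset (ℤ × (ι → ℕ))) (c : ℤ × (ι → ℕ) → ℝ),
      c (0, 0) = 1 ∧ (0, 0) ∈ S ∧
      (∀ x ∈ S, x = (0, 0) ∨
        (-(L : ℤ) ≤ x.1 ∧ x.1 < 0 ∧ 2 * ((∑ t, x.2 t : ℕ) : ℤ) ≤ -3 * x.1)) ∧
      ∃ C : ℝ, ∀ (n : ℕ) (m : ι → ℕ), 1 ≤ n → ∑ t, m t = n →
        |(Nat.multinomial Finset.univ m : ℝ) * ∏ t, p t ^ m t -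
            (2 * Real.pi * n) ^ (-((Fintype.card ι : ℝ) - 1) / 2) *
              (∏ t, p t) ^ (-(1 : ℝ) / 2) *
              Real.exp (-∑ t, ((m t : ℝ) - p t * n) ^ 2 / (2 * p t * n)) *
              ∑ x ∈ S, c x * (n : ℝ) ^ x.1 * ∏ t, ((m t : ℝ) - p t * n) ^ x.2 t| ≤
          C / n ^ K := by
  have : Nonempty ι := (isEmpty_or_nonempty ι).resolve_left fun _ ↦ by simp at hsum
  obtain ⟨a, ha, hbigO⟩ := exists_multinomialProb_sub_isBigO hp hsum K
  obtain ⟨L, S, c, hc, hzero, hS, hsum_eq⟩ := exists_finset_sum_of_mem_correctionTerms ha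
  obtain ⟨C, -, hC⟩ := Asymptotics.bound_of_isBigO_cofinite hbigO
  refine ⟨L, S, c, hc, hzero, hS, C, ?_⟩
  rintro _ m hm rfl
  have htotal : 0 < total m := Nat.cast_pos.2 hm
  have hbound := hC (by positivity : (total m ^ K)⁻¹ ≠ 0)
  rw [Real.norm_of_nonneg (by positivity : 0 ≤ (total m ^ K)⁻¹), ← div_eq_mul_inv,
    hsum_eq] at hbound
  simpa only [multinomialProb, gaussianMain, monomialFun, deviation, total, ← mul_assoc,
    Real.norm_eq_abs] using hbound

/-- **Multinomial local limit expansion** (Lemma 1).  For `p₁,…,p_k ∈ (0,1)` with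
`∑ pᵢ = 1` and any `K`, there are `L` and a rational function
`Q(n,w) = ∑ c_{i,j⃗} n^i w^{j⃗}` with `c_{0,0⃗} = 1` and `c_{i,j⃗} ≠ 0` only for
`-L ≤ i < 0`, `0 ≤ ∑ j⃗ < -2i`, such that uniformly over all admissible `m` (writing
`wᵢ = mᵢ - pᵢ n`),
`B_p(n;m) = (2πn)^{-(k-1)/2} (p₁⋯p_k)^{-1/2} exp(-∑ wᵢ²/(2pᵢn)) Q(n,w) + O(n^{-K})`. -/
theorem multinomial_expansion (k : ℕ) (hk : 1 ≤ k) (p : Fin k → ℝ)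
    (hp : ∀ t, p t ∈ Set.Ioo (0 : ℝ) 1) (hsum : ∑ t, p t = 1) (K : ℕ) :
    ∃ (L : ℕ) (S : Finset (ℤ × (Fin k → ℕ))) (c : ℤ × (Fin k → ℕ) → ℝ),
      c (0, 0) = 1 ∧ (0, 0) ∈ S ∧
      (∀ x ∈ S, c x ≠ 0 →
        x = (0, 0) ∨ (-(L : ℤ) ≤ x.1 ∧ x.1 < 0 ∧ ((∑ t, x.2 t : ℕ) : ℤ) < -2 * x.1)) ∧
      ∃ C : ℝ, ∀ (n : ℕ) (m : Fin k → ℕ), 1 ≤ n → ∑ t, m t = n →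
        |(Nat.multinomial Finset.univ m : ℝ) * ∏ t, p t ^ m t -
            (2 * Real.pi * n) ^ (-((k : ℝ) - 1) / 2) * (∏ t, p t) ^ (-(1 : ℝ) / 2) *
              Real.exp (-∑ t, ((m t : ℝ) - p t * n) ^ 2 / (2 * p t * n)) *
              ∑ x ∈ S, c x * (n : ℝ) ^ x.1 * ∏ t, ((m t : ℝ) - p t * n) ^ x.2 t| ≤
          C / n ^ K := by
  obtain ⟨L, S, c, hc, hzero, hS, hC⟩ :=
    multinomial_expansion_general p (fun t ↦ (hp t).1) hsum K
  exact ⟨L, S, c, hc, hzero, fun x hx _ ↦ (hS x hx).imp_right fun ⟨_, _, _⟩ ↦ by omega,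
    by simpa only [Fintype.card_fin] using hC⟩
end

section
/- Let A ∈ GL_d(ℝ). Then there exists c > 0 such that for every v ∈ ℝ^d and every n ≥ 1, ∑_{z ∈ ℤ^d} exp(−‖A(z+v)‖²/n) = (πn)^{d/2}/|det A| + O(e^{−c·n}), where the implied constant depends only on A and d (in particular the estimate is uniform in v). -/
open Finset
open scoped BigOperators

open Asymptotics Filter HurwitzZeta Matrix Real

/-!
A `QR` decomposition replaces `A` by an upper triangular matrix `R`, because an orthogonal factor
changes neither `‖A (z + v)‖` nor `|det A|`. With all coordinates of `z` but the first fixed, the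
summand is a shifted one-dimensional Gaussian, and the functional equation of the theta function
evaluates the sum over the first coordinate: it is `√(πn) / |R₀₀|` times `1 + δ`, where `δ` is the
dual theta series without its zeroth term. The shift enters `δ` only through phases, so `|δ|` is
largest for the zero shift. Hence it is harmless that the shift depends on the remaining
coordinates, and the sum over `ℤ ^ d` can be carried out one coordinate at a time. The factors
`1 + δ` multiply, and since each `δ` decays exponentially in `n`, so does the total error, even
after multiplication by the power `n ^ (d / 2)`.
-/

theorem exp_neg_mul_isBigO_of_le {p q : ℝ} (h : p ≤ q) :
    (fun x => exp (-q * x)) =O[atTop] fun x => exp (-p * x) := by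
  refine .of_bound' ?_
  filter_upwards [eventually_ge_atTop 0] with x hx
  simp only [norm_eq_abs, abs_exp]
  gcongr

/-- Exponential decay at `+∞`, at an unspecified rate. It is the form in which the error terms are
propagated before the rate `c` of the estimate is fixed. -/
def HasExpDecay (f : ℝ → ℝ) : Prop :=
  ∃ p > 0, f =O[atTop] fun x => exp (-p * x)

namespace HasExpDecay

variable {f g : ℝ → ℝ}

theorem add (hf : HasExpDecay f) (hg : HasExpDecay g) : HasExpDecay fun x => f x + g x := by
  obtain ⟨p, hp, hfp⟩ := hf
  obtain ⟨q, hq, hgq⟩ := hg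
  exact ⟨min p q, lt_min hp hq, (hfp.trans (exp_neg_mul_isBigO_of_le (min_le_left p q))).add
    (hgq.trans (exp_neg_mul_isBigO_of_le (min_le_right p q)))⟩

theorem mul_of_isBigO_rpow (hf : HasExpDecay f) {s : ℝ} (hg : g =O[atTop] fun x => x ^ s) :
    HasExpDecay fun x => f x * g x := by
  obtain ⟨p, hp, hfp⟩ := hf
  refine ⟨p / 2, half_pos hp, (hfp.mul (hg.trans
    (isLittleO_rpow_exp_pos_mul_atTop s (half_pos hp)).isBigO)).congr_right fun x => ?_⟩
  rw [← exp_add]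
  ring_nf

theorem isBigO_one (hf : HasExpDecay f) : f =O[atTop] fun _ => (1 : ℝ) := by
  obtain ⟨p, hp, hfp⟩ := hf
  simpa using hfp.trans (isLittleO_exp_neg_mul_rpow_atTop hp 0).isBigO

theorem mul (hf : HasExpDecay f) (hg : HasExpDecay g) : HasExpDecay fun x => f x * g x :=
  hf.mul_of_isBigO_rpow (s := 0) (by simpa using hg.isBigO_one)

theorem comp_const_mul (hf : HasExpDecay f) {a : ℝ} (ha : 0 < a) :
    HasExpDecay fun x => f (a * x) := by
  obtain ⟨p, hp, hfp⟩ := hf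
  refine ⟨p * a, mul_pos hp ha, ?_⟩
  simpa only [Function.comp_def, neg_mul, mul_assoc, id] using
    hfp.comp_tendsto (tendsto_id.const_mul_atTop ha)

theorem prod_sub_one {ι : Type*} {F : ι → ℝ → ℝ} {s : Finset ι}
    (hF : ∀ i ∈ s, HasExpDecay fun x => F i x - 1) : HasExpDecay fun x => ∏ i ∈ s, F i x - 1 := by
  classical
  induction s using Finset.induction_on with
  | empty => exact ⟨1, one_pos, by simpa using isBigO_zero _ _⟩
  | insert i s hi ih =>
    have hi_decay := hF i (mem_insert_self i s)
    have hs_decay := ih fun j hj => hF j (mem_insert_of_mem hj)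
    convert (hi_decay.mul hs_decay).add (hi_decay.add hs_decay) using 2 with x
    rw [prod_insert hi]
    ring

theorem exists_forall_ge (hf : HasExpDecay f) {a : ℝ} (hcont : ContinuousOn f (Set.Ici a)) :
    ∃ c > 0, ∃ C, ∀ x ≥ a, |f x| ≤ C * exp (-c * x) := by
  obtain ⟨c, hc, hfc⟩ := hf
  obtain ⟨C, hC⟩ := hfc.bound
  obtain ⟨b, hb⟩ := eventually_atTop.mp hC
  have hquot : ContinuousOn (fun x => f x / exp (-c * x)) (Set.Icc a b) :=
    (hcont.mono Set.Icc_subset_Ici_self).div (by fun_prop) fun x _ => (exp_pos _).ne'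
  obtain ⟨C', hC'⟩ := isCompact_Icc.exists_bound_of_continuousOn hquot
  refine ⟨c, hc, max C C', fun x hx => ?_⟩
  rcases le_total b x with hbx | hxb
  · refine (hb x hbx).trans ?_
    rw [norm_eq_abs, abs_exp]
    gcongr
    exact le_max_left C C'
  · rw [← div_le_iff₀ (exp_pos _)]
    simpa [abs_div] using (hC' x ⟨hx, hxb⟩).trans (le_max_right C C')

end HasExpDecay

/-- The series of `f` converges, and its sum agrees with `m` up to the relative error `θ - 1`.
Recording the error by the factor `θ` makes it multiplicative when sums are iterated. -/
def HasApproxSum {α : Type*} (f : α → ℝ) (m θ : ℝ) : Prop :=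
  ∃ s, HasSum f s ∧ |s - m| ≤ (θ - 1) * m

namespace HasApproxSum

variable {α β : Type*} {m M θ Θ : ℝ}

theorem abs_tsum_sub_le {f : α → ℝ} (hf : HasApproxSum f m θ) :
    |∑' x, f x - m| ≤ (θ - 1) * m := by
  obtain ⟨s, hs, hsm⟩ := hf
  rwa [hs.tsum_eq]

theorem of_comp_equiv {f : α → ℝ} (e : β ≃ α) (hf : HasApproxSum (f ∘ e) m θ) :
    HasApproxSum f m θ := by
  obtain ⟨s, hs, hsm⟩ := hf
  exact ⟨s, e.hasSum_iff.mp hs, hsm⟩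

theorem fiberwise_mul {q : α → ℝ} {g : α → β → ℝ} (hq : HasApproxSum q M Θ)
    (hg : ∀ x, HasApproxSum (g x) m θ) (hq₀ : ∀ x, 0 ≤ q x) (hg₀ : ∀ x y, 0 ≤ g x y)
    (hm : 0 ≤ m) (hθ : 1 ≤ θ) :
    HasApproxSum (fun p : α × β => q p.1 * g p.1 p.2) (M * m) (Θ * θ) := by
  obtain ⟨Q, hQ, hQM⟩ := hq
  choose T hT hTm using hg
  have hfiber (x : α) : HasSum (fun y => q x * g x y) (q x * T x) := (hT x).mul_left (q x)
  have hqT_near (x : α) : ‖q x * T x - q x * m‖ ≤ q x * ((θ - 1) * m) := by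
    rw [← mul_sub, norm_mul, norm_of_nonneg (hq₀ x)]
    exact mul_le_mul_of_nonneg_left (hTm x) (hq₀ x)
  have hqT : Summable fun x => q x * T x := by
    have hdiff := Summable.of_norm_bounded (hQ.summable.mul_right ((θ - 1) * m)) hqT_near
    simpa using hdiff.add (hQ.summable.mul_right m)
  have hsum : Summable fun p : α × β => q p.1 * g p.1 p.2 := by
    refine (summable_prod_of_nonneg fun p => mul_nonneg (hq₀ p.1) (hg₀ p.1 p.2)).mpr
      ⟨fun x => (hfiber x).summable, ?_⟩
    simpa only [(hfiber _).tsum_eq] using hqT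
  obtain ⟨s, hs⟩ := hsum
  have hqT_sum : HasSum (fun x => q x * T x) s := hs.prod_fiberwise hfiber
  refine ⟨s, hs, ?_⟩
  have h_inner : |s - Q * m| ≤ Q * ((θ - 1) * m) :=
    (hqT_sum.sub (hQ.mul_right m)).norm_le_of_bounded (hQ.mul_right _) hqT_near
  have h_outer : |Q * m - M * m| ≤ (Θ - 1) * M * m := by
    rw [← sub_mul, abs_mul, abs_of_nonneg hm]
    exact mul_le_mul_of_nonneg_right hQM hm
  have hQ_le : Q ≤ Θ * M := by linarith [(abs_le.mp hQM).2]
  calc |s - M * m| ≤ |s - Q * m| + |Q * m - M * m| := abs_sub_le _ _ _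
    _ ≤ Θ * M * ((θ - 1) * m) + (Θ - 1) * M * m := by
      have : 0 ≤ (θ - 1) * m := mul_nonneg (sub_nonneg.mpr hθ) hm
      exact add_le_add (h_inner.trans (by gcongr)) h_outer
    _ = (Θ * θ - 1) * (M * m) := by ring

end HasApproxSum

theorem hasSum_int_cosKernel_zero_sub_one {t : ℝ} (ht : 0 < t) :
    HasSum (fun k : ℤ => if k = 0 then 0 else exp (-π * k ^ 2 * t)) (cosKernel 0 t - 1) := by
  rw [← Complex.hasSum_ofReal]
  convert hasSum_int_cosKernel₀ 0 ht using 2 with k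
  · split_ifs <;> simp
  · simp

theorem abs_cosKernel_sub_one_le (a : ℝ) {t : ℝ} (ht : 0 < t) :
    |cosKernel a t - 1| ≤ cosKernel 0 t - 1 := by
  rw [← norm_eq_abs, ← Complex.norm_real, Complex.ofReal_sub, Complex.ofReal_one]
  refine (hasSum_int_cosKernel₀ a ht).norm_le_of_bounded
    (hasSum_int_cosKernel_zero_sub_one ht) fun k => ?_
  have hphase : 2 * π * Complex.I * a * k = ((2 * π * a * k : ℝ) : ℂ) * Complex.I := by
    push_cast
    ring
  split_ifs
  · simp
  · rw [norm_mul, hphase, Complex.norm_exp_ofReal_mul_I, one_mul, Complex.norm_real, norm_eq_abs,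
      abs_exp]

theorem one_le_cosKernel_zero {t : ℝ} (ht : 0 < t) : 1 ≤ cosKernel 0 t :=
  sub_nonneg.mp ((abs_nonneg _).trans (abs_cosKernel_sub_one_le 0 ht))

theorem hasApproxSum_exp_neg_pi_mul_sq (a : ℝ) {t : ℝ} (ht : 0 < t) :
    HasApproxSum (fun k : ℤ => exp (-π * (k + a) ^ 2 * t)) (1 / √t) (cosKernel 0 (1 / t)) := by
  refine ⟨evenKernel a t, hasSum_int_evenKernel a ht, ?_⟩
  rw [evenKernel_functional_equation, ← sqrt_eq_rpow, ← mul_sub_one, abs_mul,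
    abs_of_nonneg (by positivity), mul_comm]
  gcongr
  exact abs_cosKernel_sub_one_le a (by positivity)

theorem hasApproxSum_exp_neg_sq_div {r n : ℝ} (hr : r ≠ 0) (hn : 0 < n) (s : ℝ) :
    HasApproxSum (fun k : ℤ => exp (-(r * k + s) ^ 2 / n)) (√(π * n) / |r|)
      (cosKernel 0 (π / r ^ 2 * n)) := by
  have hmass : 1 / √(r ^ 2 / (π * n)) = √(π * n) / |r| := by
    rw [sqrt_div (sq_nonneg r), sqrt_sq_eq_abs, one_div_div]
  have h := hasApproxSum_exp_neg_pi_mul_sq (s / r) (t := r ^ 2 / (π * n)) (by positivity)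
  rw [hmass, one_div_div, ← div_mul_eq_mul_div] at h
  convert h using 4 with k
  field_simp

section ProdCosKernel

variable {ι : Type*} [Fintype ι] (a : ι → UnitAddCircle) {t : ι → ℝ}

theorem hasExpDecay_prod_cosKernel_sub_one (ht : ∀ i, 0 < t i) :
    HasExpDecay fun x => ∏ i, cosKernel (a i) (t i * x) - 1 :=
  .prod_sub_one fun i _ => .comp_const_mul (f := fun x => cosKernel (a i) x - 1)
    (isBigO_atTop_cosKernel_sub (a i)) (ht i)

theorem continuousOn_prod_cosKernel (ht : ∀ i, 0 < t i) :
    ContinuousOn (fun x => ∏ i, cosKernel (a i) (t i * x)) (Set.Ioi 0) :=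
  continuousOn_finsetProd _ fun i _ => (continuousOn_cosKernel (a i)).comp (by fun_prop)
    fun _ hx => mul_pos (ht i) hx

theorem exists_prod_cosKernel_sub_one_mul_rpow_le (ht : ∀ i, 0 < t i) (s D : ℝ) :
    ∃ c > 0, ∃ C, ∀ n ≥ 1,
      (∏ i, cosKernel (a i) (t i * n) - 1) * ((π * n) ^ s / D) ≤ C * exp (-c * n) := by
  have hpow : (fun n => (π * n) ^ s / D) =O[atTop] fun n => n ^ s := by
    refine ((isBigO_refl (fun n : ℝ => n ^ s) atTop).const_mul_left (π ^ s / D)).congr' ?_ .rfl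
    filter_upwards [eventually_ge_atTop 0] with n hn
    rw [mul_rpow pi_pos.le hn, div_mul_eq_mul_div]
  have hcont : ContinuousOn
      (fun n => (∏ i, cosKernel (a i) (t i * n) - 1) * ((π * n) ^ s / D)) (Set.Ici 1) := by
    have hpos : Set.Ici (1 : ℝ) ⊆ Set.Ioi 0 := Set.Ici_subset_Ioi.mpr one_pos
    refine (((continuousOn_prod_cosKernel a ht).mono hpos).sub continuousOn_const).mul ?_
    refine (ContinuousOn.rpow_const (by fun_prop) fun n hn => .inl ?_).div_const D
    exact (mul_pos pi_pos (hpos hn)).ne'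
  obtain ⟨c, hc, C, hC⟩ :=
    ((hasExpDecay_prod_cosKernel_sub_one a ht).mul_of_isBigO_rpow hpow).exists_forall_ge hcont
  exact ⟨c, hc, C, fun n hn => (le_abs_self _).trans (hC n hn)⟩

end ProdCosKernel

section Orthogonal

variable {ι : Type*} [Fintype ι] [DecidableEq ι] {Q : Matrix ι ι ℝ}

theorem abs_det_of_mem_orthogonalGroup (hQ : Q ∈ orthogonalGroup ι ℝ) : |Q.det| = 1 :=
  CStarRing.norm_of_mem_unitary (det_of_mem_unitary hQ)

theorem sum_sq_mulVec_of_mem_orthogonalGroup (hQ : Q ∈ orthogonalGroup ι ℝ) (x : ι → ℝ) :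
    ∑ i, (Q *ᵥ x) i ^ 2 = ∑ i, x i ^ 2 := by
  have hQQ : Qᵀ * Q = 1 := (mem_orthogonalGroup_iff' _ _).mp hQ
  have hdot : Q *ᵥ x ⬝ᵥ Q *ᵥ x = x ⬝ᵥ x := by
    rw [dotProduct_mulVec, vecMul_mulVec, hQQ, vecMul_one]
  simpa only [dotProduct, ← sq] using hdot

end Orthogonal

theorem exists_mem_unitaryGroup_isUpperTriangular_mul_eq {ι 𝕜 : Type*} [RCLike 𝕜] [Fintype ι]
    [LinearOrder ι] [LocallyFiniteOrderBot ι] [WellFoundedLT ι] (A : Matrix ι ι 𝕜) :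
    ∃ Q ∈ unitaryGroup ι 𝕜, ∃ R : Matrix ι ι 𝕜, R.IsUpperTriangular ∧ Q * R = A := by
  let e := EuclideanSpace.basisFun ι 𝕜
  let columns : ι → EuclideanSpace 𝕜 ι := fun j => WithLp.toLp 2 fun i => A i j
  let b := InnerProductSpace.gramSchmidtOrthonormalBasis (𝕜 := 𝕜) finrank_euclideanSpace columns
  refine ⟨e.toBasis.toMatrix b, e.toMatrix_orthonormalBasis_mem_unitary b,
    b.toBasis.toMatrix columns,
    InnerProductSpace.gramSchmidtOrthonormalBasis_inv_isUpperTriangular _ columns, ?_⟩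
  ext i j
  rw [← b.coe_toBasis, Module.Basis.toMatrix_mul_toMatrix]
  simp [e, columns, Module.Basis.toMatrix_apply]

section LatticeGaussian

variable {m ι : Type*} [Fintype m] [Fintype ι]

/-- The function `z ↦ exp (-‖A (z + v)‖² / n)` on the lattice `ι → ℤ`. The squared Euclidean norm is
written as a sum of squares because functions into `ℝ` carry the supremum norm. -/
noncomputable def latticeGaussian (A : Matrix m ι ℝ) (v : ι → ℝ) (n : ℝ) (z : ι → ℤ) : ℝ :=
  exp (-(∑ i, (A *ᵥ fun j => (z j : ℝ) + v j) i ^ 2) / n)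

theorem latticeGaussian_nonneg (A : Matrix m ι ℝ) (v : ι → ℝ) (n : ℝ) (z : ι → ℤ) :
    0 ≤ latticeGaussian A v n z :=
  exp_nonneg _

theorem latticeGaussian_orthogonal_mul [DecidableEq m] {Q : Matrix m m ℝ}
    (hQ : Q ∈ orthogonalGroup m ℝ) (A : Matrix m ι ℝ) (v : ι → ℝ) (n : ℝ) :
    latticeGaussian (Q * A) v n = latticeGaussian A v n := by
  funext z
  simp only [latticeGaussian, ← mulVec_mulVec, sum_sq_mulVec_of_mem_orthogonalGroup hQ]

end LatticeGaussian

theorem latticeGaussian_cons {d : ℕ} {R : Matrix (Fin (d + 1)) (Fin (d + 1)) ℝ}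
    (hR : ∀ i : Fin d, R i.succ 0 = 0) (v : Fin (d + 1) → ℝ) (n : ℝ) (k : ℤ) (z : Fin d → ℤ) :
    latticeGaussian R v n (Fin.cons k z) =
      latticeGaussian (R.submatrix Fin.succ Fin.succ) (Fin.tail v) n z *
        exp (-(R 0 0 * k +
          (R 0 0 * v 0 + ∑ j : Fin d, R 0 j.succ * (z j + v j.succ))) ^ 2 / n) := by
  simp only [latticeGaussian, mulVec, dotProduct, Fin.sum_univ_succ (n := d), Fin.cons_zero,
    Fin.cons_succ, hR, zero_mul, zero_add, submatrix_apply, Fin.tail, ← exp_add]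
  ring_nf

theorem hasApproxSum_latticeGaussian_of_isUpperTriangular {d : ℕ}
    {R : Matrix (Fin d) (Fin d) ℝ} (hR : R.IsUpperTriangular) (hdiag : ∀ i, R i i ≠ 0)
    (v : Fin d → ℝ) {n : ℝ} (hn : 0 < n) :
    HasApproxSum (latticeGaussian R v n) (∏ i, √(π * n) / |R i i|)
      (∏ i, cosKernel 0 (π / R i i ^ 2 * n)) := by
  induction d with
  | zero =>
    exact ⟨1, by simpa [latticeGaussian] using hasSum_unique (latticeGaussian R v n), by simp⟩
  | succ d ih =>
    have htail := ih (R := R.submatrix Fin.succ Fin.succ)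
      (fun i j hij => hR (Fin.succ_lt_succ_iff.mpr hij)) (fun i => hdiag i.succ) (Fin.tail v)
    let e : (Fin d → ℤ) × ℤ ≃ (Fin (d + 1) → ℤ) :=
      (Equiv.prodComm _ _).trans (Fin.consEquiv fun _ => ℤ)
    have hcol (i : Fin d) : R i.succ 0 = 0 := hR i.succ_pos
    have hsq : 0 < R 0 0 ^ 2 := sq_pos_of_ne_zero (hdiag 0)
    refine .of_comp_equiv e ?_
    convert htail.fiberwise_mul
      (fun z => hasApproxSum_exp_neg_sq_div (hdiag 0) hn
        (R 0 0 * v 0 + ∑ j : Fin d, R 0 j.succ * (z j + v j.succ)))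
      (latticeGaussian_nonneg _ _ _) (fun _ _ => exp_nonneg _) (by positivity)
      (one_le_cosKernel_zero (by positivity)) using 1
    · exact funext fun p => latticeGaussian_cons hcol v n p.2 p.1
    · rw [Fin.prod_univ_succ, mul_comm]
      rfl
    · rw [Fin.prod_univ_succ, mul_comm]
      rfl

theorem exists_hasApproxSum_latticeGaussian {d : ℕ} {A : Matrix (Fin d) (Fin d) ℝ}
    (hA : A.det ≠ 0) :
    ∃ t : Fin d → ℝ, (∀ i, 0 < t i) ∧ ∀ (v : Fin d → ℝ) {n : ℝ}, 0 < n →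
      HasApproxSum (latticeGaussian A v n) ((π * n) ^ ((d : ℝ) / 2) / |A.det|)
        (∏ i, cosKernel 0 (t i * n)) := by
  obtain ⟨Q, hQ, R, hR, rfl⟩ := exists_mem_unitaryGroup_isUpperTriangular_mul_eq A
  have hdet : |(Q * R).det| = ∏ i, |R i i| := by
    rw [det_mul, abs_mul, abs_det_of_mem_orthogonalGroup hQ, one_mul, det_of_isUpperTriangular hR,
      abs_prod]
  have hdiag : ∀ i, R i i ≠ 0 := by
    rw [← abs_ne_zero, hdet, prod_ne_zero_iff] at hA
    exact fun i => abs_ne_zero.mp (hA i (mem_univ i))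
  refine ⟨fun i => π / R i i ^ 2, fun i => div_pos pi_pos (sq_pos_of_ne_zero (hdiag i)),
    fun v n hn => ?_⟩
  have hmass : ∏ i, √(π * n) / |R i i| = (π * n) ^ ((d : ℝ) / 2) / |(Q * R).det| := by
    rw [prod_div_distrib, prod_const, card_univ, Fintype.card_fin, hdet,
      rpow_div_two_eq_sqrt _ (by positivity), rpow_natCast]
  rw [latticeGaussian_orthogonal_mul hQ, ← hmass]
  exact hasApproxSum_latticeGaussian_of_isUpperTriangular hR hdiag v hn

/-- **Theta-function estimate** (Lemma 2, first part).  For invertible `A ∈ GL_d(ℝ)` there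
is `c > 0` with
`∑_{z ∈ ℤ^d} exp(-‖A(z+v)‖²/n) = (πn)^{d/2}/|det A| + O(e^{-cn})`,
uniformly in `v ∈ ℝ^d`, for all `n ≥ 1`. -/
theorem lattice_gaussian_sum (d : ℕ) (A : Matrix (Fin d) (Fin d) ℝ) (hA : IsUnit A.det) :
    ∃ c > (0 : ℝ), ∃ C : ℝ, ∀ (v : Fin d → ℝ) (n : ℝ), 1 ≤ n →
      abs ((∑' z : Fin d → ℤ,
            Real.exp (-(∑ i, A.mulVec (fun j => (z j : ℝ) + v j) i ^ 2) / n)) -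
          (Real.pi * n) ^ ((d : ℝ) / 2) / |A.det|) ≤ C * Real.exp (-c * n) := by
  obtain ⟨t, ht, h⟩ := exists_hasApproxSum_latticeGaussian hA.ne_zero
  obtain ⟨c, hc, C, hC⟩ :=
    exists_prod_cosKernel_sub_one_mul_rpow_le (fun _ => 0) ht ((d : ℝ) / 2) |A.det|
  exact ⟨c, hc, C, fun v n hn =>
    (h v (one_pos.trans_le hn)).abs_tsum_sub_le.trans (hC n hn)⟩
end

section
/- Let R be a d-dimensional balanced bounded random walk on a lattice Z and let K ∈ ℕ. Then there exist a (d+1)-dimensional sublattice Y ⊆ ℤ × Z, a constant τ' > 0, a positive definite quadratic form B on ℝ^d, an integer L ≥ 0 and a function Q(n,z) such that n^L·Q(n,z) is a polynomial in n and in the coordinates of z, Q(n,z) = 1 + o(1) uniformly for ‖z‖ ≤ C√(n log n), and P_n(z) = τ'·n^{−d/2}·e^{−B(z)/n}·Q(n,z) + O(n^{−K}) for all (n,z) ∈ Y, while P_n(z) = 0 for all (n,z) ∈ (ℕ × Z) \ Y. -/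
open Finset
open scoped BigOperators Classical

noncomputable section

/-- A bounded random walk on `ℝ^d`, given by its finitely supported step
distribution `p` (nonnegative, total mass one). Finite support encodes boundedness. -/
structure RW (d : ℕ) where
  p : EuclideanSpace ℝ (Fin d) →₀ ℝ
  nonneg : ∀ v, 0 ≤ p v
  total : ∑ v ∈ p.support, p v = 1

namespace RW

variable {d : ℕ}

/-- `P R n z` is the probability that the walk is at `z` after `n` steps. -/
def P (R : RW d) : ℕ → EuclideanSpace ℝ (Fin d) → ℝ
  | 0 => fun z => if z = 0 then 1 else 0
  | n + 1 => fun z => ∑ v ∈ R.p.support, R.p v * R.P n (z - v)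

/-- The discrete harmonic potential `a(z) = ∑ₙ (Pₙ(0) - Pₙ(z))`. -/
def pot (R : RW d) (z : EuclideanSpace ℝ (Fin d)) : ℝ :=
  ∑' n : ℕ, (R.P n 0 - R.P n z)

/-- The walk is balanced: zero drift. -/
def Balanced (R : RW d) : Prop :=
  ∑ v ∈ R.p.support, R.p v • v = 0

/-- The walk lives on the lattice `Z` and reaches every point of `Z`. -/
def OnLattice (R : RW d) (Z : AddSubgroup (EuclideanSpace ℝ (Fin d))) : Prop :=
  (∀ v ∈ R.p.support, v ∈ Z) ∧ ∀ z ∈ Z, ∃ n, 0 < R.P n z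

/-- The correlation matrix `M i j = 𝔼⟨X₁,eᵢ⟩⟨X₁,eⱼ⟩` of the walk. -/
def corr (R : RW d) : Matrix (Fin d) (Fin d) ℝ :=
  Matrix.of fun i j => ∑ v ∈ R.p.support, R.p v * v i * v j

/-- A spherical walk: balanced with correlation matrix a positive multiple of the identity. -/
def Spherical (R : RW d) : Prop :=
  R.Balanced ∧ ∃ C > 0, ∀ i j, R.corr i j = if i = j then C else 0

end RW

/-- `Z` is a `d`-dimensional lattice in `ℝ^d`: a discrete additive subgroup spanning `ℝ^d`. -/
def IsLattice {d : ℕ} (Z : AddSubgroup (EuclideanSpace ℝ (Fin d))) : Prop :=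
  (∃ ε > 0, ∀ z ∈ Z, z ≠ 0 → ε ≤ ‖z‖) ∧
    Submodule.span ℝ (Z : Set (EuclideanSpace ℝ (Fin d))) = ⊤

/-- `μ_d(r)`: `log r` in dimension `2`, and `r^(2-d)` otherwise. -/
def mu (d : ℕ) (r : ℝ) : ℝ :=
  if d = 2 then Real.log r else r ^ ((2 : ℝ) - d)

/-!
Let `Y` be the lattice generated by the space-time steps `(1, v)` and `Λ = {z | (0, z) ∈ Y}`.
Fourier inversion over a cell dual to `Λ`, in coordinates where the covariance of a step is the
identity, writes `P_n(z)` on `Y` as the integral of `φ(s)^n e^{-i s·z}`, where `φ` is the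
characteristic function of a step. On the cell `|φ| < 1` except at `0`, so only a neighbourhood of
`0` contributes, up to an exponentially small error. There `φ = e^{-|s|²/2} (1 + T + O(|s|^N))`
with `T` a polynomial vanishing to third order, and `φ^n` may be replaced by
`e^{-n|s|²/2} ∑_{j < J} C(n,j) T^j` at the cost of `O(n^{-K})`. The Gaussian moments are explicit: a
monomial of degree `k` contributes `n^{-k/2}` times a polynomial in `z/√n`, so the `j`-th term is of
order `n^{j-3j/2} = n^{-j/2}` and the correction factor is `1 + o(1)`.
-/

section GaussianMoments

open MeasureTheory Complex

/-- The integrand `e^{-a t² / 2 - i w t}` of the Fourier transform of a centred Gaussian. -/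
def gaussianWave (a w t : ℝ) : ℂ :=
  cexp (-((a / 2 : ℝ) : ℂ) * (t : ℂ) ^ 2 - I * w * t)

/-- The moments `∫ t^k e^{-a t² / 2 - i w t} dt`, divided by the one with `k = 0`. They are
defined by the recurrence that integration by parts gives; `waveMoment a w (0 - 1)`, which occurs
for the first moment, is multiplied by `0`. -/
def waveMoment (a w : ℝ) : ℕ → ℂ
  | 0 => 1
  | k + 1 => (k * waveMoment a w (k - 1) - I * w * waveMoment a w k) / a

lemma norm_gaussianWave (a w t : ℝ) : ‖gaussianWave a w t‖ = Real.exp (-(a / 2) * t ^ 2) := by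
  rw [gaussianWave, norm_exp]
  congr 1
  simp only [← ofReal_neg, ← ofReal_pow, sub_re, ofReal_re, mul_comm I, mul_re,
    mul_im, I_re, I_im, ofReal_im]
  ring

@[fun_prop]
lemma continuous_gaussianWave (a w : ℝ) : Continuous (gaussianWave a w) := by
  unfold gaussianWave
  fun_prop

lemma hasDerivAt_gaussianWave (a w t : ℝ) :
    HasDerivAt (gaussianWave a w) ((-(a * t) - I * w) * gaussianWave a w t) t := by
  have hasDerivAt_coe : HasDerivAt (fun t : ℝ => (t : ℂ)) 1 t := ofRealCLM.hasDerivAt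
  have hasDerivAt_exponent := ((hasDerivAt_coe.pow 2).const_mul (-((a / 2 : ℝ) : ℂ))).sub
    (hasDerivAt_coe.const_mul (I * w))
  refine hasDerivAt_exponent.cexp.congr_deriv ?_
  simp only [gaussianWave, Pi.sub_apply, Pi.pow_apply]
  push_cast
  ring

variable {a : ℝ}

lemma integrable_pow_mul_gaussianWave (ha : 0 < a) (w : ℝ) (k : ℕ) :
    Integrable fun t : ℝ => (t : ℂ) ^ k * gaussianWave a w t := by
  have real_case := integrable_rpow_mul_exp_neg_mul_sq (half_pos ha)
    (neg_one_lt_zero.trans_le k.cast_nonneg)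
  refine real_case.mono (by fun_prop) (.of_forall fun t => ?_)
  simp only [norm_mul, norm_pow, norm_real, norm_gaussianWave, Real.rpow_natCast,
    Real.norm_of_nonneg (Real.exp_pos _).le, le_refl]

lemma mul_integral_pow_succ_mul_gaussianWave (ha : 0 < a) (w : ℝ) (k : ℕ) :
    a * ∫ t : ℝ, (t : ℂ) ^ (k + 1) * gaussianWave a w t =
      k * (∫ t : ℝ, (t : ℂ) ^ (k - 1) * gaussianWave a w t) -
        I * w * ∫ t : ℝ, (t : ℂ) ^ k * gaussianWave a w t := by
  have hasDerivAt_wave (t : ℝ) : HasDerivAt (fun t : ℝ => (t : ℂ) ^ k * gaussianWave a w t)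
      (k * ((t : ℂ) ^ (k - 1) * gaussianWave a w t) - a * ((t : ℂ) ^ (k + 1) * gaussianWave a w t) -
        I * w * ((t : ℂ) ^ k * gaussianWave a w t)) t := by
    refine ((ofRealCLM.hasDerivAt.pow k).mul (hasDerivAt_gaussianWave a w t)).congr_deriv ?_
    simp only [Pi.pow_apply, ofRealCLM_apply, ofReal_one]
    ring
  have int_pred := (integrable_pow_mul_gaussianWave ha w (k - 1)).const_mul (k : ℂ)
  have int_succ := (integrable_pow_mul_gaussianWave ha w (k + 1)).const_mul (a : ℂ)
  have int_self := (integrable_pow_mul_gaussianWave ha w k).const_mul (I * w)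
  have by_parts := integral_eq_zero_of_hasDerivAt_of_integrable hasDerivAt_wave
    ((int_pred.sub int_succ).sub int_self) (integrable_pow_mul_gaussianWave ha w k)
  rw [integral_sub (by exact int_pred.sub int_succ) int_self, integral_sub int_pred int_succ,
    integral_const_mul, integral_const_mul, integral_const_mul] at by_parts
  linear_combination -by_parts

lemma integral_gaussianWave (ha : 0 < a) (w : ℝ) :
    ∫ t : ℝ, gaussianWave a w t =
      ((Real.sqrt (2 * Real.pi / a) * Real.exp (-(w ^ 2) / (2 * a)) : ℝ) : ℂ) := by
  have fourier := fourierIntegral_gaussian (b := ((a / 2 : ℝ) : ℂ))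
    (by rw [ofReal_re]; exact half_pos ha) (-(w : ℂ))
  have integrand (t : ℝ) : gaussianWave a w t =
      cexp (I * (-(w : ℂ)) * t) * cexp (-((a / 2 : ℝ) : ℂ) * (t : ℂ) ^ 2) := by
    rw [gaussianWave, ← Complex.exp_add]
    congr 1
    ring
  simp_rw [integrand]
  rw [fourier, ofReal_mul]
  congr 1
  · rw [Real.sqrt_eq_rpow, ofReal_cpow (by positivity)]
    congr 1
    · push_cast
      field_simp
    · push_cast
      rfl
  · rw [ofReal_exp]
    congr 1
    push_cast
    field_simp
    ring

lemma integral_pow_mul_gaussianWave (ha : 0 < a) (w : ℝ) (k : ℕ) :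
    ∫ t : ℝ, (t : ℂ) ^ k * gaussianWave a w t =
      ((Real.sqrt (2 * Real.pi / a) * Real.exp (-(w ^ 2) / (2 * a)) : ℝ) : ℂ) *
        waveMoment a w k := by
  induction k using Nat.strong_induction_on with
  | _ k ih =>
    cases k with
    | zero => simp only [pow_zero, one_mul, waveMoment, mul_one, integral_gaussianWave ha w]
    | succ k =>
      have ha' : (a : ℂ) ≠ 0 := ofReal_ne_zero.mpr ha.ne'
      have recurrence := mul_integral_pow_succ_mul_gaussianWave ha w k
      rw [ih k k.lt_succ_self, ih (k - 1) (by omega)] at recurrence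
      rw [waveMoment, mul_div_assoc', eq_div_iff ha']
      linear_combination recurrence

end GaussianMoments

section PolynomialTimesGaussian

open MeasureTheory Complex

variable {ι : Type*}

/-- Evaluation of a complex polynomial at a real point. -/
abbrev evalReal (s : ι → ℝ) : MvPolynomial ι ℂ →+* ℂ :=
  MvPolynomial.eval fun i => (s i : ℂ)

variable [Fintype ι]

/-- The character `s ↦ e^{-i s·x}` of frequency `x`. -/
def planeWave (x s : ι → ℝ) : ℂ := cexp (-((s ⬝ᵥ x : ℝ) : ℂ) * I)

/-- The integrand `e^{-a |s|² / 2 - i s·x}`, with `|s|` the Euclidean norm. -/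
def gaussianPlaneWave (a : ℝ) (x s : ι → ℝ) : ℂ :=
  (Real.exp (-(a / 2) * (s ⬝ᵥ s)) : ℂ) * planeWave x s

/-- The integral of `gaussianPlaneWave a x`. -/
def gaussianMass (a : ℝ) (x : ι → ℝ) : ℝ :=
  Real.sqrt (2 * Real.pi / a) ^ Fintype.card ι * Real.exp (-(x ⬝ᵥ x) / (2 * a))

/-- The integral of `T` against `gaussianPlaneWave a x`, divided by `gaussianMass a x`. -/
def gaussianMoment (T : MvPolynomial ι ℂ) (a : ℝ) (x : ι → ℝ) : ℂ :=
  ∑ α ∈ T.support, T.coeff α * ∏ i, waveMoment a (x i) (α i)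

lemma exists_norm_evalReal_le {m : ℕ} {T : MvPolynomial ι ℂ}
    (hT : T ∈ MvPolynomial.idealOfVars ι ℂ ^ m) :
    ∃ C, 0 ≤ C ∧ ∀ s : ι → ℝ, ‖s‖ ≤ 1 → ‖evalReal s T‖ ≤ C * ‖s‖ ^ m := by
  refine ⟨∑ α ∈ T.support, ‖T.coeff α‖, sum_nonneg fun _ _ => norm_nonneg _, fun s hs => ?_⟩
  rw [evalReal, MvPolynomial.eval_eq', sum_mul]
  refine norm_sum_le_of_le _ fun α hα => ?_
  rw [norm_mul, norm_prod]
  gcongr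
  calc ∏ i, ‖(s i : ℂ) ^ α i‖ ≤ ∏ i, ‖s‖ ^ α i := by
        gcongr with i
        rw [norm_pow, norm_real]
        gcongr
        exact norm_le_pi_norm s i
    _ = ‖s‖ ^ α.degree := by rw [prod_pow_eq_pow_sum, Finsupp.degree_eq_sum]
    _ ≤ ‖s‖ ^ m := pow_le_pow_of_le_one (norm_nonneg _) hs
        ((MvPolynomial.mem_pow_idealOfVars_iff m T).mp hT α hα)

@[fun_prop]
lemma continuous_planeWave (x : ι → ℝ) : Continuous (planeWave x) := by
  unfold planeWave dotProduct
  fun_prop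

lemma norm_planeWave (x s : ι → ℝ) : ‖planeWave x s‖ = 1 := by
  rw [planeWave, ← ofReal_neg, norm_exp_ofReal_mul_I]

lemma exp_mul_planeWave (x y s : ι → ℝ) :
    cexp (((s ⬝ᵥ x : ℝ) : ℂ) * I) * planeWave y s = planeWave (y - x) s := by
  rw [planeWave, planeWave, ← Complex.exp_add, dotProduct_sub]
  congr 1
  push_cast
  ring

lemma norm_gaussianPlaneWave (a : ℝ) (x s : ι → ℝ) :
    ‖gaussianPlaneWave a x s‖ = Real.exp (-(a / 2) * (s ⬝ᵥ s)) := by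
  rw [gaussianPlaneWave, norm_mul, norm_planeWave, mul_one, norm_real, Real.norm_eq_abs,
    Real.abs_exp]

lemma gaussianPlaneWave_eq_prod (a : ℝ) (x s : ι → ℝ) :
    gaussianPlaneWave a x s = ∏ i, gaussianWave a (x i) (s i) := by
  simp only [gaussianPlaneWave, planeWave, gaussianWave, ← Complex.exp_sum, ofReal_exp,
    ← Complex.exp_add, dotProduct]
  congr 1
  push_cast
  rw [mul_sum, ← sum_neg_distrib, sum_mul, ← sum_add_distrib]
  exact sum_congr rfl fun i _ => by ring

lemma evalReal_mul_gaussianPlaneWave (T : MvPolynomial ι ℂ) (a : ℝ) (x s : ι → ℝ) :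
    evalReal s T * gaussianPlaneWave a x s =
      ∑ α ∈ T.support, T.coeff α * ∏ i, (s i : ℂ) ^ α i * gaussianWave a (x i) (s i) := by
  simp only [evalReal, MvPolynomial.eval_eq', gaussianPlaneWave_eq_prod, sum_mul,
    prod_mul_distrib, mul_assoc]

variable {a : ℝ}

lemma integrable_monomial_mul_gaussianWave (ha : 0 < a) (x : ι → ℝ) (α : ι →₀ ℕ) :
    Integrable fun s : ι → ℝ => ∏ i, (s i : ℂ) ^ α i * gaussianWave a (x i) (s i) :=
  Integrable.fintype_prod fun i => integrable_pow_mul_gaussianWave ha (x i) (α i)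

lemma integrable_evalReal_mul_gaussianPlaneWave (ha : 0 < a) (T : MvPolynomial ι ℂ) (x : ι → ℝ) :
    Integrable fun s => evalReal s T * gaussianPlaneWave a x s := by
  simp only [evalReal_mul_gaussianPlaneWave]
  exact integrable_finsetSum _ fun α _ =>
    (integrable_monomial_mul_gaussianWave ha x α).const_mul _

lemma prod_gaussianMass (x : ι → ℝ) :
    ∏ i, Real.sqrt (2 * Real.pi / a) * Real.exp (-(x i ^ 2) / (2 * a)) = gaussianMass a x := by
  rw [gaussianMass, prod_mul_distrib, ← Real.exp_sum, prod_const, card_univ, dotProduct,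
    ← sum_div, sum_neg_distrib]
  simp only [sq]

lemma integral_evalReal_mul_gaussianPlaneWave (ha : 0 < a) (T : MvPolynomial ι ℂ) (x : ι → ℝ) :
    ∫ s, evalReal s T * gaussianPlaneWave a x s = gaussianMass a x * gaussianMoment T a x := by
  simp only [evalReal_mul_gaussianPlaneWave]
  rw [integral_finsetSum _ fun α _ =>
    (integrable_monomial_mul_gaussianWave ha x α).const_mul _, gaussianMoment, mul_sum]
  refine sum_congr rfl fun α _ => ?_
  rw [integral_const_mul, integral_fintype_prod_volume_eq_prod
    fun i (t : ℝ) => (t : ℂ) ^ α i * gaussianWave a (x i) t]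
  simp only [integral_pow_mul_gaussianWave ha, prod_mul_distrib, ← ofReal_prod]
  rw [← prod_mul_distrib, prod_gaussianMass]
  ring

end PolynomialTimesGaussian

section ExpansionCoefficients

open Complex

variable {ι : Type*}

lemma exists_mvPolynomial_eval_eq_choose (j : ℕ) :
    ∃ Q : MvPolynomial (Option ι) ℂ, ∀ (n : ℕ) (x : ι → ℂ),
      MvPolynomial.eval (fun o => o.elim (n : ℂ) x) Q = n.choose j := by
  refine ⟨MvPolynomial.C ((j.factorial : ℂ)⁻¹) *
    (descPochhammer ℂ j).eval₂ MvPolynomial.C (MvPolynomial.X none), fun n x => ?_⟩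
  rw [Nat.cast_choose_eq_descPochhammer_div, map_mul, MvPolynomial.eval_C, Polynomial.hom_eval₂,
    MvPolynomial.eval_X, Option.elim_none, MvPolynomial.eval, MvPolynomial.eval₂Hom_comp_C,
    Polynomial.eval₂_id, inv_mul_eq_div]

variable [Fintype ι]

/-- `F n x` is a coefficient of order `m` of an expansion in powers of `1/√n` at scale `|x| ~ √n`:
up to a power of `n` it is a polynomial in `n` (the variable `none`) and in the coordinates of `x`,
and it is bounded by `n^{-m/2}` times a polynomial in `‖x‖/√n`. -/
structure IsExpansionCoeff (m : ℕ) (F : ℕ → (ι → ℝ) → ℂ) : Prop where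
  exists_polynomial : ∃ (L : ℕ) (Q : MvPolynomial (Option ι) ℂ), ∀ n : ℕ, n ≠ 0 → ∀ x : ι → ℝ,
    F n x * (n : ℂ) ^ L = MvPolynomial.eval (fun o => o.elim (n : ℂ) fun i => (x i : ℂ)) Q
  exists_bound : ∃ (C : ℝ) (N : ℕ), 0 ≤ C ∧ ∀ n : ℕ, n ≠ 0 → ∀ x : ι → ℝ,
    ‖F n x‖ ≤ C * (1 / Real.sqrt n) ^ m * (1 + ‖x‖ / Real.sqrt n) ^ N

lemma one_div_sqrt_natCast_le_one (n : ℕ) : 1 / Real.sqrt n ≤ 1 := by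
  rcases n.eq_zero_or_pos with rfl | hn
  · simp
  · exact div_le_one_of_le₀ (Real.one_le_sqrt.mpr (by exact_mod_cast hn)) (Real.sqrt_nonneg _)

namespace IsExpansionCoeff

variable {m m' : ℕ} {F G : ℕ → (ι → ℝ) → ℂ}

lemma mul (hF : IsExpansionCoeff m F) (hG : IsExpansionCoeff m' G) :
    IsExpansionCoeff (m + m') fun n x => F n x * G n x := by
  obtain ⟨⟨L, Q, hQ⟩, C, N, hC, F_le⟩ := hF
  obtain ⟨⟨L', Q', hQ'⟩, C', N', hC', G_le⟩ := hG
  refine ⟨⟨L + L', Q * Q', fun n hn x => ?_⟩, C * C', N + N', by positivity, fun n hn x => ?_⟩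
  · rw [map_mul, ← hQ n hn x, ← hQ' n hn x]
    ring
  · calc ‖F n x * G n x‖ = ‖F n x‖ * ‖G n x‖ := norm_mul _ _
      _ ≤ _ := mul_le_mul (F_le n hn x) (G_le n hn x) (norm_nonneg _) (by positivity)
      _ = _ := by ring

lemma add (hF : IsExpansionCoeff m F) (hG : IsExpansionCoeff m G) :
    IsExpansionCoeff m fun n x => F n x + G n x := by
  obtain ⟨⟨L, Q, hQ⟩, C, N, hC, F_le⟩ := hF
  obtain ⟨⟨L', Q', hQ'⟩, C', N', hC', G_le⟩ := hG
  refine ⟨⟨L + L', Q * MvPolynomial.X none ^ L' + Q' * MvPolynomial.X none ^ L,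
    fun n hn x => ?_⟩, C + C', N + N', by positivity, fun n hn x => ?_⟩
  · simp only [map_add, map_mul, map_pow, ← hQ n hn x, ← hQ' n hn x, MvPolynomial.eval_X,
      Option.elim_none]
    ring
  · have one_le : (1 : ℝ) ≤ 1 + ‖x‖ / Real.sqrt n := le_add_of_nonneg_right (by positivity)
    have pow_N_le := pow_le_pow_right₀ one_le (Nat.le_add_right N N')
    have pow_N'_le := pow_le_pow_right₀ one_le (Nat.le_add_left N' N)
    refine norm_add_le_of_le (F_le n hn x) (G_le n hn x) |>.trans ?_
    rw [add_mul, add_mul]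
    gcongr

lemma mono (hF : IsExpansionCoeff m' F) (hm : m ≤ m') : IsExpansionCoeff m F := by
  obtain ⟨C, N, hC, F_le⟩ := hF.exists_bound
  refine ⟨hF.exists_polynomial, C, N, hC, fun n hn x => (F_le n hn x).trans ?_⟩
  have pow_le := pow_le_pow_of_le_one (by positivity) (one_div_sqrt_natCast_le_one n) hm
  gcongr

lemma zero : IsExpansionCoeff m fun _ (_ : ι → ℝ) => 0 :=
  ⟨⟨0, 0, fun n _ x => by simp⟩, 0, 0, le_rfl, fun n _ x => by simp⟩

lemma const (c : ℂ) : IsExpansionCoeff 0 fun _ (_ : ι → ℝ) => c :=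
  ⟨⟨0, MvPolynomial.C c, fun n _ x => by simp⟩, ‖c‖, 0, norm_nonneg _, fun n _ x => by simp⟩

lemma sum {κ : Type*} {s : Finset κ} {F : κ → ℕ → (ι → ℝ) → ℂ}
    (hF : ∀ k ∈ s, IsExpansionCoeff m (F k)) :
    IsExpansionCoeff m fun n x => ∑ k ∈ s, F k n x := by
  induction s using Finset.induction_on with
  | empty => simpa only [sum_empty] using zero
  | insert k s hk ih =>
    simp only [sum_insert hk]
    exact (hF k (mem_insert_self k s)).add (ih fun l hl => hF l (mem_insert_of_mem hl))

lemma prod {κ : Type*} {s : Finset κ} {m : κ → ℕ} {F : κ → ℕ → (ι → ℝ) → ℂ}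
    (hF : ∀ k ∈ s, IsExpansionCoeff (m k) (F k)) :
    IsExpansionCoeff (∑ k ∈ s, m k) fun n x => ∏ k ∈ s, F k n x := by
  induction s using Finset.induction_on with
  | empty => simpa only [sum_empty, prod_empty] using const 1
  | insert k s hk ih =>
    simp only [sum_insert hk, prod_insert hk]
    exact (hF k (mem_insert_self k s)).mul (ih fun l hl => hF l (mem_insert_of_mem hl))

lemma coord_div (i : ι) : IsExpansionCoeff 1 fun n x => (x i : ℂ) / n := by
  refine ⟨⟨1, MvPolynomial.X (some i), fun n hn x => ?_⟩, 1, 1, zero_le_one, fun n hn x => ?_⟩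
  · rw [pow_one, div_mul_cancel₀ _ (Nat.cast_ne_zero.mpr hn), MvPolynomial.eval_X,
      Option.elim_some]
  · calc ‖(x i : ℂ) / n‖ = ‖x i‖ / n := by rw [norm_div, norm_real, norm_natCast]
      _ ≤ ‖x‖ / n := by gcongr; exact norm_le_pi_norm x i
      _ = 1 / Real.sqrt n * (‖x‖ / Real.sqrt n) := by
        rw [div_mul_div_comm, Real.mul_self_sqrt n.cast_nonneg, one_mul]
      _ ≤ 1 / Real.sqrt n * (1 + ‖x‖ / Real.sqrt n) := by gcongr; linarith
      _ = _ := by ring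

lemma natCast_inv : IsExpansionCoeff 2 fun n (_ : ι → ℝ) => (n : ℂ)⁻¹ := by
  refine ⟨⟨1, 1, fun n hn x => ?_⟩, 1, 0, zero_le_one, fun n _ x => ?_⟩
  · rw [pow_one, map_one, inv_mul_cancel₀ (Nat.cast_ne_zero.mpr hn)]
  · rw [norm_inv, norm_natCast, div_pow, Real.sq_sqrt n.cast_nonneg]
    simp

lemma waveMoment_coord (i : ι) (k : ℕ) :
    IsExpansionCoeff k fun n x => waveMoment n (x i) k := by
  induction k using Nat.strong_induction_on with
  | _ k ih =>
    rcases k with _ | k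
    · simpa only [waveMoment] using const 1
    have drift := ((const (-I)).mul (coord_div i)).mul (ih k k.lt_succ_self)
    have variance : IsExpansionCoeff (k + 1) fun n (x : ι → ℝ) =>
        k * (n : ℂ)⁻¹ * waveMoment n (x i) (k - 1) := by
      rcases k with _ | k
      · simpa only [Nat.cast_zero, zero_mul] using zero
      · exact (((const _).mul natCast_inv).mul (ih k (by omega))).mono (by omega)
    convert variance.add (drift.mono (by omega)) using 3
    rw [waveMoment, ofReal_natCast]
    ring

lemma gaussianMoment {T : MvPolynomial ι ℂ} (hT : T ∈ MvPolynomial.idealOfVars ι ℂ ^ m) :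
    IsExpansionCoeff m fun n x => gaussianMoment T n x := by
  unfold _root_.gaussianMoment
  refine sum fun α hα => ((const _).mul (prod fun i _ => waveMoment_coord i (α i))).mono ?_
  rw [zero_add, ← Finsupp.degree_eq_sum]
  exact (MvPolynomial.mem_pow_idealOfVars_iff m T).mp hT α hα

lemma choose_mul {j : ℕ} (hF : IsExpansionCoeff (m + 2 * j) F) :
    IsExpansionCoeff m fun n x => (n.choose j : ℂ) * F n x := by
  obtain ⟨⟨L, Q, hQ⟩, C, N, hC, F_le⟩ := hF
  obtain ⟨Q', hQ'⟩ := exists_mvPolynomial_eval_eq_choose (ι := ι) j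
  refine ⟨⟨L, Q' * Q, fun n hn x => ?_⟩, C, N, hC, fun n hn x => ?_⟩
  · rw [map_mul, ← hQ n hn x, hQ', mul_assoc]
  · have choose_le : (n.choose j : ℝ) ≤ (n : ℝ) ^ j := by exact_mod_cast Nat.choose_le_pow n j
    have sqrt_pow : (n : ℝ) ^ j * (1 / Real.sqrt n) ^ (2 * j) = 1 := by
      rw [pow_mul, div_pow, Real.sq_sqrt n.cast_nonneg, ← mul_pow, one_pow,
        mul_one_div_cancel (Nat.cast_ne_zero.mpr hn), one_pow]
    calc ‖(n.choose j : ℂ) * F n x‖ = n.choose j * ‖F n x‖ := by rw [norm_mul, norm_natCast]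
      _ ≤ (n : ℝ) ^ j * (C * (1 / Real.sqrt n) ^ (m + 2 * j) * (1 + ‖x‖ / Real.sqrt n) ^ N) :=
        mul_le_mul choose_le (F_le n hn x) (norm_nonneg _) (by positivity)
      _ = (n : ℝ) ^ j * (1 / Real.sqrt n) ^ (2 * j) *
          (C * (1 / Real.sqrt n) ^ m * (1 + ‖x‖ / Real.sqrt n) ^ N) := by ring
      _ = _ := by rw [sqrt_pow, one_mul]

end IsExpansionCoeff
end ExpansionCoefficients

section TruncatedBinomial

variable {R : Type*} [NormedCommRing R]

/-- The first `J` terms of the binomial expansion of `(1 + t) ^ n`. -/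
def truncBinom (J n : ℕ) (t : R) : R := ∑ j ∈ range J, (n.choose j : R) * t ^ j

lemma truncBinom_succ_succ (J n : ℕ) (t : R) :
    truncBinom (J + 1) (n + 1) t = truncBinom (J + 1) n t + t * truncBinom J n t := by
  simp only [truncBinom, sum_range_succ' _ J, Nat.choose_succ_succ', Nat.cast_add, add_mul,
    sum_add_distrib, mul_sum, Nat.choose_zero_right, pow_succ']
  simp only [mul_left_comm t]
  ring

variable [NormOneClass R]

lemma norm_one_add_pow_sub_truncBinom_le (J n : ℕ) (t : R) :
    ‖(1 + t) ^ n - truncBinom J n t‖ ≤ (n * ‖t‖) ^ J * (1 + ‖t‖) ^ n := by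
  have norm_one_add_le : ‖1 + t‖ ≤ 1 + ‖t‖ := norm_add_le_of_le norm_one.le le_rfl
  induction J generalizing n with
  | zero =>
    simp only [truncBinom, range_zero, sum_empty, sub_zero, pow_zero, one_mul]
    exact (norm_pow_le _ n).trans (pow_le_pow_left₀ (norm_nonneg _) norm_one_add_le n)
  | succ J ih =>
    induction n with
    | zero => simp [truncBinom, sum_range_succ']
    | succ n ihn =>
      have pascal : (1 + t) ^ (n + 1) - truncBinom (J + 1) (n + 1) t =
          ((1 + t) ^ n - truncBinom (J + 1) n t) + t * ((1 + t) ^ n - truncBinom J n t) := by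
        rw [truncBinom_succ_succ]
        ring
      rw [pascal]
      calc _ ≤ (n * ‖t‖) ^ (J + 1) * (1 + ‖t‖) ^ n +
            ‖t‖ * ((n * ‖t‖) ^ J * (1 + ‖t‖) ^ n) :=
          norm_add_le_of_le ihn ((norm_mul_le _ _).trans (by gcongr; exact ih n))
        _ = (n : ℝ) ^ J * (n + 1) * ‖t‖ ^ (J + 1) * (1 + ‖t‖) ^ n := by ring
        _ ≤ ((n : ℝ) + 1) ^ J * (n + 1) * ‖t‖ ^ (J + 1) * (1 + ‖t‖) ^ (n + 1) := by
          gcongr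
          · linarith
          · linarith [norm_nonneg t]
          · omega
        _ = _ := by
          push_cast
          rw [mul_pow]
          ring

lemma norm_pow_sub_pow_le {M : ℝ} (hM : 1 ≤ M) {a b : R} (ha : ‖a‖ ≤ M) (hb : ‖b‖ ≤ M) (n : ℕ) :
    ‖a ^ n - b ^ n‖ ≤ n * ‖a - b‖ * M ^ n := by
  induction n with
  | zero => simp
  | succ n ih =>
    have norm_b_pow_le : ‖b ^ n‖ ≤ M ^ (n + 1) := (norm_pow_le b n).trans <|
      (pow_le_pow_left₀ (norm_nonneg _) hb n).trans (pow_le_pow_right₀ hM n.le_succ)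
    calc ‖a ^ (n + 1) - b ^ (n + 1)‖ = ‖a * (a ^ n - b ^ n) + (a - b) * b ^ n‖ := by
          congr 1
          ring
      _ ≤ ‖a‖ * ‖a ^ n - b ^ n‖ + ‖a - b‖ * ‖b ^ n‖ :=
        norm_add_le_of_le (norm_mul_le _ _) (norm_mul_le _ _)
      _ ≤ M * (n * ‖a - b‖ * M ^ n) + ‖a - b‖ * M ^ (n + 1) := by gcongr
      _ = _ := by
        push_cast
        ring

lemma norm_one_add_pow_sub_truncBinom_le_mul_exp {ε : ℝ} {h t : R} (hh : ‖h‖ ≤ ε) (ht : ‖t‖ ≤ ε)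
    (J n : ℕ) :
    ‖(1 + h) ^ n - truncBinom J n t‖ ≤ (n * ‖h - t‖ + (n * ‖t‖) ^ J) * Real.exp (n * ε) := by
  have norm_one_add_le {u : R} (hu : ‖u‖ ≤ ε) : ‖1 + u‖ ≤ 1 + ε :=
    norm_add_le_of_le norm_one.le hu
  have one_add_pow_le {η : ℝ} (hη : 0 ≤ η) (hηε : η ≤ ε) : (1 + η) ^ n ≤ Real.exp (n * ε) := by
    rw [Real.exp_nat_mul]
    gcongr
    linarith [Real.add_one_le_exp ε]
  have hε : 0 ≤ ε := (norm_nonneg t).trans ht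
  calc ‖(1 + h) ^ n - truncBinom J n t‖
      ≤ ‖(1 + h) ^ n - (1 + t) ^ n‖ + ‖(1 + t) ^ n - truncBinom J n t‖ :=
      norm_sub_le_norm_sub_add_norm_sub _ _ _
    _ ≤ n * ‖1 + h - (1 + t)‖ * (1 + ε) ^ n + (n * ‖t‖) ^ J * (1 + ‖t‖) ^ n :=
      add_le_add (norm_pow_sub_pow_le (by linarith) (norm_one_add_le hh) (norm_one_add_le ht) n)
        (norm_one_add_pow_sub_truncBinom_le J n t)
    _ ≤ n * ‖h - t‖ * Real.exp (n * ε) + (n * ‖t‖) ^ J * Real.exp (n * ε) := by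
      rw [add_sub_add_left_eq_sub]
      gcongr
      · exact one_add_pow_le hε le_rfl
      · exact one_add_pow_le (norm_nonneg t) ht
    _ = _ := by ring

lemma pow_mul_exp_neg_le (m : ℕ) {y : ℝ} (hy : 0 ≤ y) : y ^ m * Real.exp (-y) ≤ m.factorial := by
  rw [Real.exp_neg, mul_inv_le_iff₀ (Real.exp_pos y), ← div_le_iff₀' (by positivity)]
  exact Real.pow_div_factorial_le_exp y hy m

end TruncatedBinomial

section EdgeworthExpansion

open Complex

lemma exists_mul_exp_neg_le_div_pow {C₁ C₂ : ℝ} (hC₁ : 0 ≤ C₁) (hC₂ : 0 ≤ C₂) (K : ℕ) :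
    ∃ C, 0 ≤ C ∧ ∀ n : ℕ, n ≠ 0 → ∀ r : ℝ, 0 ≤ r →
      (n * (C₁ * r ^ (2 * K + 4)) + (n * (C₂ * r ^ 3)) ^ (2 * K + 2)) *
        Real.exp (-(n * r ^ 2 / 4)) ≤ C / (n : ℝ) ^ K := by
  refine ⟨C₁ * 4 ^ (K + 2) * (K + 2).factorial +
    C₂ ^ (2 * K + 2) * 4 ^ (3 * K + 3) * (3 * K + 3).factorial, by positivity, fun n hn r hr => ?_⟩
  have one_le : (1 : ℝ) ≤ n := by exact_mod_cast Nat.one_le_iff_ne_zero.mpr hn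
  set y : ℝ := n * r ^ 2 / 4 with hy
  have decay (m : ℕ) : y ^ m * Real.exp (-y) ≤ m.factorial :=
    pow_mul_exp_neg_le m (by positivity)
  have absorb {c : ℝ} (hc : 0 ≤ c) : c ≤ n * c := le_mul_of_one_le_left hc one_le
  rw [le_div_iff₀ (by positivity)]
  calc _ = C₁ * ((n : ℝ) ^ (K + 1) * r ^ (2 * K + 4)) * Real.exp (-y) +
        C₂ ^ (2 * K + 2) * ((n : ℝ) ^ (3 * K + 2) * r ^ (6 * K + 6)) * Real.exp (-y) := by ring
    _ ≤ C₁ * (n * ((n : ℝ) ^ (K + 1) * r ^ (2 * K + 4))) * Real.exp (-y) +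
        C₂ ^ (2 * K + 2) * (n * ((n : ℝ) ^ (3 * K + 2) * r ^ (6 * K + 6))) * Real.exp (-y) := by
      gcongr C₁ * ?_ * _ + _ * ?_ * _ <;> exact absorb (by positivity)
    _ = C₁ * 4 ^ (K + 2) * (y ^ (K + 2) * Real.exp (-y)) +
        C₂ ^ (2 * K + 2) * 4 ^ (3 * K + 3) * (y ^ (3 * K + 3) * Real.exp (-y)) := by
      have pow_eq (m : ℕ) : (4 : ℝ) ^ m * y ^ m = n ^ m * r ^ (2 * m) := by
        rw [← mul_pow, hy, mul_div_cancel₀ _ four_ne_zero, mul_pow, pow_mul]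
      linear_combination -(C₁ * Real.exp (-y)) * pow_eq (K + 2) -
        C₂ ^ (2 * K + 2) * Real.exp (-y) * pow_eq (3 * K + 3)
    _ ≤ _ := by
      gcongr
      · exact decay _
      · exact decay _

variable {ι : Type*} [Fintype ι]

lemma sq_norm_le_dotProduct_self (s : ι → ℝ) : ‖s‖ ^ 2 ≤ s ⬝ᵥ s := by
  have nonneg : 0 ≤ s ⬝ᵥ s := sum_nonneg fun i _ => mul_self_nonneg (s i)
  refine (Real.le_sqrt (norm_nonneg s) nonneg).mp ?_
  refine (pi_norm_le_iff_of_nonneg (Real.sqrt_nonneg _)).mpr fun i => Real.abs_le_sqrt ?_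
  rw [sq]
  exact single_le_sum (fun i _ => mul_self_nonneg (s i)) (mem_univ i)

/-- The linear form `s ↦ s·x` as a polynomial. -/
def dotPoly (x : ι → ℝ) : MvPolynomial ι ℂ := ∑ i, MvPolynomial.C (x i : ℂ) * MvPolynomial.X i

variable (ι) in
/-- The quadratic form `s ↦ |s|² / 2` as a polynomial. -/
def halfSqPoly : MvPolynomial ι ℂ := MvPolynomial.C (1 / 2) * ∑ i, MvPolynomial.X i ^ 2

/-- The polynomial `s ↦ i s·x + |s|² / 2`. -/
def exponentPoly (x : ι → ℝ) : MvPolynomial ι ℂ := MvPolynomial.C I * dotPoly x + halfSqPoly ι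

lemma evalReal_dotPoly (x s : ι → ℝ) : evalReal s (dotPoly x) = ((s ⬝ᵥ x : ℝ) : ℂ) := by
  simp only [dotPoly, evalReal, map_sum, map_mul, MvPolynomial.eval_C, MvPolynomial.eval_X,
    dotProduct, ofReal_sum, ofReal_mul, mul_comm]

lemma evalReal_halfSqPoly (s : ι → ℝ) :
    evalReal s (halfSqPoly ι) = ((s ⬝ᵥ s : ℝ) : ℂ) / 2 := by
  simp only [halfSqPoly, evalReal, map_sum, map_mul, MvPolynomial.eval_C,
    MvPolynomial.eval_X, dotProduct, ofReal_sum, ofReal_mul, sq, one_div, inv_mul_eq_div]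

lemma evalReal_exponentPoly (x s : ι → ℝ) :
    evalReal s (exponentPoly x) = ((s ⬝ᵥ x : ℝ) : ℂ) * I + ((s ⬝ᵥ s : ℝ) : ℂ) / 2 := by
  rw [exponentPoly, map_add, map_mul, evalReal_dotPoly, evalReal_halfSqPoly, MvPolynomial.eval_C,
    mul_comm I]

lemma dotPoly_mem (x : ι → ℝ) : dotPoly x ∈ MvPolynomial.idealOfVars ι ℂ :=
  Ideal.sum_mem _ fun i _ => Ideal.mul_mem_left _ _ (Ideal.subset_span (Set.mem_range_self i))

lemma halfSqPoly_mem : halfSqPoly ι ∈ MvPolynomial.idealOfVars ι ℂ ^ 2 :=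
  Ideal.mul_mem_left _ _ <| Ideal.sum_mem _ fun i _ =>
    Ideal.pow_mem_pow (Ideal.subset_span (Set.mem_range_self i)) 2

lemma exponentPoly_mem (x : ι → ℝ) : exponentPoly x ∈ MvPolynomial.idealOfVars ι ℂ :=
  Ideal.add_mem _ (Ideal.mul_mem_left _ _ (dotPoly_mem x))
    (Ideal.pow_le_self two_ne_zero halfSqPoly_mem)

variable {κ : Type*}

/-- The characteristic function of the distribution giving weight `p v` to the vector `X v`,
`v ∈ S`. -/
def stepCharFun (S : Finset κ) (p : κ → ℝ) (X : κ → ι → ℝ) (s : ι → ℝ) : ℂ :=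
  ∑ v ∈ S, (p v : ℂ) * cexp (((s ⬝ᵥ X v : ℝ) : ℂ) * I)

/-- The distribution giving weight `p v` to the vector `X v`, `v ∈ S`, has total mass one, is
centred, and its covariance matrix is the identity. -/
structure IsStandardized (S : Finset κ) (p : κ → ℝ) (X : κ → ι → ℝ) : Prop where
  sum_weight : ∑ v ∈ S, p v = 1
  sum_dot : ∀ s, ∑ v ∈ S, p v * (s ⬝ᵥ X v) = 0
  sum_dot_sq : ∀ s, ∑ v ∈ S, p v * (s ⬝ᵥ X v) ^ 2 = s ⬝ᵥ s

/-- The polynomial part of the expansion of `φ(s) e^{|s|² / 2} - 1` to order `D + 3`, where `φ` is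
the characteristic function. The terms of degree one and two cancel when the distribution is
standardized, and are left out. -/
def edgeworthPoly (S : Finset κ) (p : κ → ℝ) (X : κ → ι → ℝ) (D : ℕ) : MvPolynomial ι ℂ :=
  ∑ v ∈ S, MvPolynomial.C (p v : ℂ) * (MvPolynomial.C I * (dotPoly (X v) * halfSqPoly ι) +
    MvPolynomial.C (1 / 2) * halfSqPoly ι ^ 2 +
    ∑ k ∈ range D, MvPolynomial.C (((k + 3).factorial : ℂ)⁻¹) * exponentPoly (X v) ^ (k + 3))

lemma edgeworthPoly_mem (S : Finset κ) (p : κ → ℝ) (X : κ → ι → ℝ) (D : ℕ) :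
    edgeworthPoly S p X D ∈ MvPolynomial.idealOfVars ι ℂ ^ 3 := by
  refine Ideal.sum_mem _ fun v _ => Ideal.mul_mem_left _ _ <| Ideal.add_mem _ (Ideal.add_mem _
    (Ideal.mul_mem_left _ _ ?_) (Ideal.mul_mem_left _ _ ?_))
    (Ideal.sum_mem _ fun k _ => Ideal.mul_mem_left _ _ ?_)
  · rw [pow_succ']
    exact Ideal.mul_mem_mul (dotPoly_mem _) halfSqPoly_mem
  · refine Ideal.pow_le_pow_right (show 3 ≤ 2 * 2 by norm_num) ?_
    rw [pow_mul]
    exact Ideal.pow_mem_pow halfSqPoly_mem 2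
  · exact Ideal.pow_le_pow_right (by omega) (Ideal.pow_mem_pow (exponentPoly_mem _) _)

variable {S : Finset κ} {p : κ → ℝ} {X : κ → ι → ℝ}

lemma stepCharFun_mul_exp (S : Finset κ) (p : κ → ℝ) (X : κ → ι → ℝ) (s : ι → ℝ) :
    stepCharFun S p X s * cexp (((s ⬝ᵥ s : ℝ) : ℂ) / 2) =
      ∑ v ∈ S, (p v : ℂ) * cexp (evalReal s (exponentPoly (X v))) := by
  simp only [stepCharFun, sum_mul, mul_assoc, ← Complex.exp_add, evalReal_exponentPoly]

lemma IsStandardized.one_add_evalReal_edgeworthPoly (h : IsStandardized S p X) (D : ℕ)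
    (s : ι → ℝ) :
    1 + evalReal s (edgeworthPoly S p X D) = ∑ v ∈ S, (p v : ℂ) *
      ∑ k ∈ range (D + 3), evalReal s (exponentPoly (X v)) ^ k / k.factorial := by
  have zeroth : ∑ v ∈ S, (p v : ℂ) = 1 := by exact_mod_cast h.sum_weight
  have first : ∑ v ∈ S, (p v : ℂ) * (s ⬝ᵥ X v : ℝ) = 0 := by exact_mod_cast h.sum_dot s
  have second : ∑ v ∈ S, (p v : ℂ) * ((s ⬝ᵥ X v : ℝ) : ℂ) ^ 2 = (s ⬝ᵥ s : ℝ) := by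
    exact_mod_cast h.sum_dot_sq s
  set q : ℂ := ((s ⬝ᵥ s : ℝ) : ℂ)
  have low_order (v : κ) : (p v : ℂ) *
      ∑ k ∈ range (D + 3), evalReal s (exponentPoly (X v)) ^ k / k.factorial =
      p v * (I * ((s ⬝ᵥ X v : ℝ) * (q / 2)) + 1 / 2 * (q / 2) ^ 2 +
        ∑ k ∈ range D, ((k + 3).factorial : ℂ)⁻¹ * evalReal s (exponentPoly (X v)) ^ (k + 3)) +
      (p v * (1 + q / 2) + p v * (s ⬝ᵥ X v : ℝ) * I -
        p v * ((s ⬝ᵥ X v : ℝ) : ℂ) ^ 2 * (1 / 2)) := by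
    rw [sum_range_succ', sum_range_succ', sum_range_succ']
    simp only [add_assoc, Nat.reduceAdd, div_eq_inv_mul]
    generalize ∑ k ∈ range D, ((k + 3).factorial : ℂ)⁻¹ *
      evalReal s (exponentPoly (X v)) ^ (k + 3) = tail
    rw [evalReal_exponentPoly]
    simp only [Nat.factorial]
    push_cast
    linear_combination (p v * ((s ⬝ᵥ X v : ℝ) : ℂ) ^ 2 / 2 : ℂ) * I_sq
  simp only [low_order]
  rw [sum_add_distrib, sum_sub_distrib, sum_add_distrib, ← sum_mul, ← sum_mul, ← sum_mul, zeroth,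
    first, second]
  simp only [edgeworthPoly, map_sum, map_mul, map_add, map_pow, MvPolynomial.eval_C,
    evalReal_dotPoly, evalReal_halfSqPoly]
  ring

lemma IsStandardized.exists_norm_sub_edgeworthPoly_le (h : IsStandardized S p X) (D : ℕ) :
    ∃ C, 0 ≤ C ∧ ∀ s : ι → ℝ, ‖s‖ ≤ 1 →
      ‖stepCharFun S p X s * cexp (((s ⬝ᵥ s : ℝ) : ℂ) / 2) - 1 -
        evalReal s (edgeworthPoly S p X D)‖ ≤ C * ‖s‖ ^ (D + 3) := by
  choose C hC norm_exponent_le using fun v =>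
    exists_norm_evalReal_le (m := 1) (by simpa only [pow_one] using exponentPoly_mem (X v))
  refine ⟨∑ v ∈ S, |p v| * (C v ^ (D + 3) * Real.exp (C v)),
    sum_nonneg fun v _ => by have := hC v; positivity, fun s hs => ?_⟩
  rw [sub_sub, h.one_add_evalReal_edgeworthPoly, stepCharFun_mul_exp, ← sum_sub_distrib, sum_mul]
  refine norm_sum_le_of_le S fun v _ => ?_
  rw [← mul_sub, norm_mul, norm_real, Real.norm_eq_abs, mul_assoc]
  gcongr
  have hCv := hC v
  have norm_le : ‖evalReal s (exponentPoly (X v))‖ ≤ C v * ‖s‖ := by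
    simpa only [pow_one] using norm_exponent_le v s hs
  calc _ ≤ ‖evalReal s (exponentPoly (X v))‖ ^ (D + 3) *
        Real.exp ‖evalReal s (exponentPoly (X v))‖ := norm_exp_sub_sum_le_norm_mul_exp _ _
    _ ≤ (C v * ‖s‖) ^ (D + 3) * Real.exp (C v) := by
      gcongr
      exact norm_le.trans (mul_le_of_le_one_right hCv hs)
    _ = _ := by ring

end EdgeworthExpansion

section UniformBigO

open MeasureTheory

variable {α β E F : Type*} [NormedAddCommGroup E] [NormedAddCommGroup F]

/-- `f n x = O(n^{-K})` uniformly in `x`, with one constant for all `n ≠ 0`. -/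
def IsUniformBigO (K : ℕ) (f : ℕ → α → E) : Prop :=
  ∃ C : ℝ, ∀ n : ℕ, n ≠ 0 → ∀ x, ‖f n x‖ ≤ C / (n : ℝ) ^ K

namespace IsUniformBigO

variable {K : ℕ} {f g : ℕ → α → E}

lemma add (hf : IsUniformBigO K f) (hg : IsUniformBigO K g) :
    IsUniformBigO K fun n x => f n x + g n x := by
  obtain ⟨C, hC⟩ := hf
  obtain ⟨C', hC'⟩ := hg
  refine ⟨C + C', fun n hn x => ?_⟩
  rw [add_div]
  exact norm_add_le_of_le (hC n hn x) (hC' n hn x)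

lemma neg (hf : IsUniformBigO K f) : IsUniformBigO K fun n x => -f n x := by
  simpa only [IsUniformBigO, norm_neg] using hf

lemma sub (hf : IsUniformBigO K f) (hg : IsUniformBigO K g) :
    IsUniformBigO K fun n x => f n x - g n x := by
  simpa only [sub_eq_add_neg] using hf.add hg.neg

lemma sum {κ : Type*} {s : Finset κ} {f : κ → ℕ → α → E} (hf : ∀ k ∈ s, IsUniformBigO K (f k)) :
    IsUniformBigO K fun n x => ∑ k ∈ s, f k n x := by
  choose! C hC using hf
  refine ⟨∑ k ∈ s, C k, fun n hn x => ?_⟩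
  rw [sum_div]
  exact norm_sum_le_of_le s fun k hk => hC k hk n hn x

lemma comp (hf : IsUniformBigO K f) (e : β → α) : IsUniformBigO K fun n y => f n (e y) := by
  obtain ⟨C, hC⟩ := hf
  exact ⟨C, fun n hn y => hC n hn (e y)⟩

lemma of_norm_le {g : ℕ → α → F} (hg : IsUniformBigO K g)
    (hfg : ∀ n x, ‖f n x‖ ≤ ‖g n x‖) : IsUniformBigO K f := by
  obtain ⟨C, hC⟩ := hg
  exact ⟨C, fun n hn x => (hfg n x).trans (hC n hn x)⟩

lemma setIntegral [NormedSpace ℝ E] [MeasurableSpace β] {μ : Measure β} {A : Set β}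
    (hA : μ A < ⊤) {f : ℕ → α → β → E}
    (hf : IsUniformBigO K fun n (q : α × A) => f n q.1 q.2) :
    IsUniformBigO K fun n x => ∫ s in A, f n x s ∂μ := by
  obtain ⟨C, hC⟩ := hf
  refine ⟨C * μ.real A, fun n hn x => ?_⟩
  rw [mul_div_right_comm]
  exact norm_setIntegral_le_of_norm_le_const hA fun s hs => hC n hn (x, ⟨s, hs⟩)

end IsUniformBigO

lemma exists_pow_mul_pow_le {ρ : ℝ} (hρ : 0 ≤ ρ) (hρ_lt : ρ < 1) (k : ℕ) :
    ∃ C, 0 ≤ C ∧ ∀ n : ℕ, (n : ℝ) ^ k * ρ ^ n ≤ C := by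
  obtain ⟨C, hC⟩ := (tendsto_pow_const_mul_const_pow_of_abs_lt_one k
    (by rwa [abs_of_nonneg hρ])).bddAbove_range
  refine ⟨C, ?_, fun n => hC ⟨n, rfl⟩⟩
  exact le_trans (by positivity) (hC ⟨0, rfl⟩)

lemma isUniformBigO_pow_of_isCompact [TopologicalSpace β] {A : Set β} (hA : IsCompact A)
    {φ : β → ℂ} (hφ : ContinuousOn φ A) (norm_lt_one : ∀ s ∈ A, ‖φ s‖ < 1) (K : ℕ) :
    IsUniformBigO K fun n (s : A) => φ s ^ n := by
  rcases A.eq_empty_or_nonempty with rfl | nonempty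
  · exact ⟨0, fun n _ s => s.2.elim⟩
  obtain ⟨s₀, hs₀, isMaxOn⟩ := hA.exists_isMaxOn nonempty hφ.norm
  obtain ⟨C, -, hC⟩ := exists_pow_mul_pow_le (norm_nonneg _) (norm_lt_one s₀ hs₀) K
  refine ⟨C, fun n hn s => ?_⟩
  rw [norm_pow, le_div_iff₀' (by positivity)]
  refine le_trans ?_ (hC n)
  gcongr
  exact isMaxOn s.2

end UniformBigO

section LocalExpansion

open MeasureTheory Complex

variable {ι : Type*} [Fintype ι]

lemma isUniformBigO_setIntegral_compl_ball (T : MvPolynomial ι ℂ) (j : ℕ) {δ : ℝ} (hδ : 0 < δ)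
    (K : ℕ) :
    IsUniformBigO K fun n (x : ι → ℝ) => (n.choose j : ℂ) *
      ∫ s in (Metric.ball 0 δ)ᶜ, evalReal s T * gaussianPlaneWave n x s := by
  have integrable_norm :=
    (integrable_evalReal_mul_gaussianPlaneWave one_pos T (0 : ι → ℝ)).norm
  set M := ∫ s : ι → ℝ, ‖evalReal s T * gaussianPlaneWave 1 0 s‖
  have : 0 ≤ M := integral_nonneg fun _ => norm_nonneg _
  set ρ := Real.exp (-(δ ^ 2 / 2)) with hρ
  obtain ⟨C, -, pow_mul_pow_le⟩ := exists_pow_mul_pow_le (ρ := ρ) (Real.exp_pos _).le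
    (Real.exp_lt_one_iff.mpr <| by linarith [pow_pos hδ 2]) (j + K)
  have integrand_le {n : ℕ} (hn : n ≠ 0) (x s : ι → ℝ) (hs : s ∈ (Metric.ball 0 δ)ᶜ) :
      ‖evalReal s T * gaussianPlaneWave n x s‖ ≤
        ‖evalReal s T * gaussianPlaneWave 1 0 s‖ * (ρ ^ n / ρ) := by
    have δ_le : δ ≤ ‖s‖ := by simpa using hs
    have one_le : (1 : ℝ) ≤ n := by exact_mod_cast Nat.one_le_iff_ne_zero.mpr hn
    have sq_le : δ ^ 2 ≤ s ⬝ᵥ s :=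
      (pow_le_pow_left₀ hδ.le δ_le 2).trans (sq_norm_le_dotProduct_self s)
    rw [norm_mul, norm_mul, mul_assoc, norm_gaussianPlaneWave, norm_gaussianPlaneWave, hρ,
      ← Real.exp_nat_mul, ← Real.exp_sub, ← Real.exp_add]
    gcongr
    nlinarith
  refine ⟨M * C / ρ, fun n hn x => ?_⟩
  have tail_le : ‖∫ s in (Metric.ball 0 δ)ᶜ, evalReal s T * gaussianPlaneWave n x s‖ ≤
      M * (ρ ^ n / ρ) := by
    rw [← integral_mul_const]
    exact (norm_integral_le_of_norm_le (integrable_norm.mul_const _).integrableOn <|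
      (ae_restrict_mem Metric.isOpen_ball.measurableSet.compl).mono fun s hs =>
        integrand_le hn x s hs).trans <| setIntegral_le_integral (integrable_norm.mul_const _) <|
          .of_forall fun s => by positivity
  have choose_le : (n.choose j : ℝ) ≤ (n : ℝ) ^ j := by exact_mod_cast Nat.choose_le_pow n j
  rw [norm_mul, Complex.norm_natCast, le_div_iff₀ (by positivity)]
  calc _ ≤ (n : ℝ) ^ j * (M * (ρ ^ n / ρ)) * (n : ℝ) ^ K := by gcongr
    _ = M * ((n : ℝ) ^ (j + K) * ρ ^ n) / ρ := by ring
    _ ≤ _ := by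
      gcongr
      exact pow_mul_pow_le n

variable {κ : Type*} {S : Finset κ} {p : κ → ℝ} {X : κ → ι → ℝ}

lemma continuous_stepCharFun (S : Finset κ) (p : κ → ℝ) (X : κ → ι → ℝ) :
    Continuous (stepCharFun S p X) := by
  unfold stepCharFun dotProduct
  fun_prop

lemma stepCharFun_pow (S : Finset κ) (p : κ → ℝ) (X : κ → ι → ℝ) (s : ι → ℝ) (n : ℕ) :
    stepCharFun S p X s ^ n =
      (1 + (stepCharFun S p X s * cexp (((s ⬝ᵥ s : ℝ) : ℂ) / 2) - 1)) ^ n *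
        (Real.exp (-(n / 2) * (s ⬝ᵥ s)) : ℂ) := by
  have exp_pow : (Real.exp (-(n / 2) * (s ⬝ᵥ s)) : ℂ) = cexp (-(((s ⬝ᵥ s : ℝ) : ℂ) / 2)) ^ n := by
    rw [← Complex.exp_nat_mul, ofReal_exp]
    congr 1
    push_cast
    ring
  rw [exp_pow, add_sub_cancel, ← mul_pow, mul_assoc, ← Complex.exp_add, add_neg_cancel,
    Complex.exp_zero, mul_one]

namespace IsStandardized

lemma exists_norm_stepCharFun_mul_exp_sub_one_le (h : IsStandardized S p X) (D : ℕ) :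
    ∃ T ∈ MvPolynomial.idealOfVars ι ℂ ^ 3, ∃ C₁ C₂ : ℝ, 0 ≤ C₁ ∧ 0 ≤ C₂ ∧
      ∀ᶠ s in nhds (0 : ι → ℝ),
        ‖stepCharFun S p X s * cexp (((s ⬝ᵥ s : ℝ) : ℂ) / 2) - 1 - evalReal s T‖ ≤
          C₁ * ‖s‖ ^ (D + 3) ∧
        ‖evalReal s T‖ ≤ C₂ * ‖s‖ ^ 3 ∧ ‖evalReal s T‖ ≤ ‖s‖ ^ 2 / 4 ∧
        ‖stepCharFun S p X s * cexp (((s ⬝ᵥ s : ℝ) : ℂ) / 2) - 1‖ ≤ ‖s‖ ^ 2 / 4 := by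
  have T_mem := edgeworthPoly_mem S p X D
  obtain ⟨C₁, hC₁, remainder_le⟩ := h.exists_norm_sub_edgeworthPoly_le D
  obtain ⟨C₂, hC₂, T_le⟩ := exists_norm_evalReal_le T_mem
  refine ⟨_, T_mem, C₁, C₂, hC₁, hC₂, ?_⟩
  have small : Filter.Tendsto (fun s : ι → ℝ => (C₁ + C₂) * ‖s‖) (nhds 0) (nhds 0) :=
    (continuous_const.mul continuous_norm).tendsto' _ _ (by simp)
  filter_upwards [Metric.closedBall_mem_nhds (0 : ι → ℝ) one_pos,
    small.eventually_le_const (show (0 : ℝ) < 1 / 4 by norm_num)] with s hs hs'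
  rw [mem_closedBall_zero_iff] at hs
  have cubic_le : C₁ * ‖s‖ ^ 3 + C₂ * ‖s‖ ^ 3 ≤ ‖s‖ ^ 2 / 4 := by
    nlinarith [sq_nonneg ‖s‖]
  have remainder_le' : C₁ * ‖s‖ ^ (D + 3) ≤ C₁ * ‖s‖ ^ 3 := by
    gcongr C₁ * ?_
    exact pow_le_pow_of_le_one (norm_nonneg _) hs (by omega)
  have hC₁' : 0 ≤ C₁ * ‖s‖ ^ 3 := by positivity
  refine ⟨remainder_le s hs, T_le s hs, (T_le s hs).trans (by linarith), ?_⟩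
  refine (norm_le_norm_sub_add _ (evalReal s (edgeworthPoly S p X D))).trans
    (le_trans ?_ cubic_le)
  exact add_le_add ((remainder_le s hs).trans remainder_le') (T_le s hs)

lemma exists_isUniformBigO_stepCharFun_pow_sub (h : IsStandardized S p X) (K : ℕ) :
    ∃ T ∈ MvPolynomial.idealOfVars ι ℂ ^ 3, ∃ U ∈ nhds (0 : ι → ℝ),
      IsUniformBigO K fun n (s : U) => stepCharFun S p X s ^ n -
        truncBinom (2 * K + 2) n (evalReal s.1 T) * (Real.exp (-(n / 2) * (s.1 ⬝ᵥ s.1)) : ℂ) := by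
  obtain ⟨T, T_mem, C₁, C₂, hC₁, hC₂, estimates⟩ :=
    h.exists_norm_stepCharFun_mul_exp_sub_one_le (2 * K + 1)
  obtain ⟨C, -, decay⟩ := exists_mul_exp_neg_le_div_pow hC₁ hC₂ K
  refine ⟨T, T_mem, _, estimates, C, fun n hn ⟨s, sub_le, T_le, T_le', le'⟩ => ?_⟩
  dsimp only
  rw [stepCharFun_pow, ← sub_mul, norm_mul, norm_real, Real.norm_eq_abs, Real.abs_exp]
  set t := stepCharFun S p X s * cexp (((s ⬝ᵥ s : ℝ) : ℂ) / 2) - 1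
  have sq_le := sq_norm_le_dotProduct_self s
  calc
    _ ≤ (n * ‖t - evalReal s T‖ + (n * ‖evalReal s T‖) ^ (2 * K + 2)) *
        Real.exp (n * (‖s‖ ^ 2 / 4)) * Real.exp (-(n / 2) * (s ⬝ᵥ s)) := by
      gcongr
      exact norm_one_add_pow_sub_truncBinom_le_mul_exp le' T_le' _ n
    _ ≤ (n * (C₁ * ‖s‖ ^ (2 * K + 4)) + (n * (C₂ * ‖s‖ ^ 3)) ^ (2 * K + 2)) *
        Real.exp (-(n * ‖s‖ ^ 2 / 4)) := by
      rw [mul_assoc, ← Real.exp_add]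
      gcongr
      nlinarith [mul_le_mul_of_nonneg_left sq_le n.cast_nonneg (α := ℝ)]
    _ ≤ _ := decay n hn _ (norm_nonneg s)

end IsStandardized

lemma truncBinom_evalReal_mul (J n : ℕ) (T : MvPolynomial ι ℂ) (x s : ι → ℝ) :
    truncBinom J n (evalReal s T) * gaussianPlaneWave n x s =
      ∑ j ∈ range J, (n.choose j : ℂ) * (evalReal s (T ^ j) * gaussianPlaneWave n x s) := by
  simp only [truncBinom, sum_mul, map_pow, mul_assoc]

lemma integrable_truncBinom_mul_gaussianPlaneWave (J : ℕ) {n : ℕ} (hn : n ≠ 0)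
    (T : MvPolynomial ι ℂ) (x : ι → ℝ) :
    Integrable fun s => truncBinom J n (evalReal s T) * gaussianPlaneWave n x s := by
  simp only [truncBinom_evalReal_mul]
  exact integrable_finsetSum _ fun j _ =>
    (integrable_evalReal_mul_gaussianPlaneWave (by positivity) _ x).const_mul _

lemma integral_truncBinom_mul_gaussianPlaneWave (J : ℕ) {n : ℕ} (hn : n ≠ 0)
    (T : MvPolynomial ι ℂ) (x : ι → ℝ) :
    ∫ s, truncBinom J n (evalReal s T) * gaussianPlaneWave n x s =
      gaussianMass n x * ∑ j ∈ range J, n.choose j * gaussianMoment (T ^ j) n x := by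
  have n_pos : (0 : ℝ) < n := by positivity
  simp only [truncBinom_evalReal_mul]
  rw [integral_finsetSum _ fun j _ =>
    (integrable_evalReal_mul_gaussianPlaneWave n_pos _ x).const_mul _, mul_sum]
  refine sum_congr rfl fun j _ => ?_
  rw [integral_const_mul, integral_evalReal_mul_gaussianPlaneWave n_pos, mul_left_comm]

lemma isUniformBigO_setIntegral_compl_ball_truncBinom (J : ℕ) (T : MvPolynomial ι ℂ) {δ : ℝ}
    (hδ : 0 < δ) (K : ℕ) :
    IsUniformBigO K fun n (x : ι → ℝ) =>
      ∫ s in (Metric.ball 0 δ)ᶜ, truncBinom J n (evalReal s T) * gaussianPlaneWave n x s := by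
  obtain ⟨C, hC⟩ := IsUniformBigO.sum (s := range J) fun j _ =>
    isUniformBigO_setIntegral_compl_ball (T ^ j) j hδ K
  refine ⟨C, fun n hn x => ?_⟩
  simp only [truncBinom_evalReal_mul]
  rw [integral_finsetSum _ fun j _ => ((integrable_evalReal_mul_gaussianPlaneWave
    (by positivity) _ x).const_mul _).integrableOn]
  simpa only [integral_const_mul] using hC n hn x

lemma isExpansionCoeff_sum_choose_mul_gaussianMoment {T : MvPolynomial ι ℂ}
    (hT : T ∈ MvPolynomial.idealOfVars ι ℂ ^ 3) (J : ℕ) :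
    IsExpansionCoeff 1 fun n x =>
      ∑ j ∈ range J, (n.choose (j + 1) : ℂ) * gaussianMoment (T ^ (j + 1)) n x := by
  refine .sum fun j _ => .choose_mul (.mono (.gaussianMoment (m := 3 * (j + 1)) ?_) (by omega))
  rw [pow_mul]
  exact Ideal.pow_mem_pow hT _

lemma gaussianMoment_one (a : ℝ) (x : ι → ℝ) : gaussianMoment 1 a x = 1 := by
  rw [gaussianMoment, MvPolynomial.support_one, sum_singleton]
  simp [waveMoment]

lemma setIntegral_sub_eq {D B : Set (ι → ℝ)} (hB : MeasurableSet B) (hBD : B ⊆ D)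
    {f g : (ι → ℝ) → ℂ} (hf : IntegrableOn f D) (hg : Integrable g) :
    (∫ s in D, f s) - ∫ s, g s =
      (∫ s in B, (f s - g s)) + (∫ s in D \ B, f s) - ∫ s in Bᶜ, g s := by
  rw [integral_sub (hf.mono_set hBD) hg.integrableOn, ← integral_add_compl hB hg,
    ← integral_inter_add_sdiff hB hf, Set.inter_eq_right.mpr hBD]
  ring

lemma isUniformBigO_setIntegral_pow_mul_planeWave_sub {φ : (ι → ℝ) → ℂ} {D : Set (ι → ℝ)}
    {δ : ℝ} {J K : ℕ} {T : MvPolynomial ι ℂ} (hφ : ContinuousOn φ D) (hD : IsCompact D)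
    (hδ : 0 < δ) (ball_subset : Metric.ball 0 δ ⊆ D)
    (norm_lt_one : ∀ s ∈ D, s ≠ 0 → ‖φ s‖ < 1)
    (approx : IsUniformBigO K fun n (s : Metric.ball (0 : ι → ℝ) δ) => φ s ^ n -
      truncBinom J n (evalReal s.1 T) * (Real.exp (-(n / 2) * (s.1 ⬝ᵥ s.1)) : ℂ)) :
    IsUniformBigO K fun n (x : ι → ℝ) => (∫ s in D, φ s ^ n * planeWave x s) -
      ∫ s, truncBinom J n (evalReal s T) * gaussianPlaneWave n x s := by
  set B := Metric.ball (0 : ι → ℝ) δ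
  have near : IsUniformBigO K fun n (q : (ι → ℝ) × B) => φ q.2 ^ n * planeWave q.1 q.2 -
      truncBinom J n (evalReal q.2 T) * gaussianPlaneWave n q.1 q.2 := by
    refine (approx.comp Prod.snd).of_norm_le fun n q => ?_
    rw [gaussianPlaneWave, ← mul_assoc, ← sub_mul, norm_mul, norm_planeWave, mul_one]
  have norm_lt_one_far (s : ι → ℝ) (hs : s ∈ D \ B) : ‖φ s‖ < 1 :=
    norm_lt_one s hs.1 fun h0 => hs.2 (by rw [h0]; exact Metric.mem_ball_self hδ)
  have far : IsUniformBigO K fun n (q : (ι → ℝ) × ↥(D \ B)) => φ q.2 ^ n * planeWave q.1 q.2 := by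
    refine ((isUniformBigO_pow_of_isCompact (hD.diff Metric.isOpen_ball) (hφ.mono Set.sdiff_subset)
      norm_lt_one_far K).comp Prod.snd).of_norm_le fun n q => ?_
    rw [norm_mul, norm_planeWave, mul_one]
  have total : IsUniformBigO K fun n (x : ι → ℝ) =>
      (∫ s in B, (φ s ^ n * planeWave x s -
        truncBinom J n (evalReal s T) * gaussianPlaneWave n x s)) +
      (∫ s in D \ B, φ s ^ n * planeWave x s) -
      ∫ s in Bᶜ, truncBinom J n (evalReal s T) * gaussianPlaneWave n x s :=
    .sub (.add (.setIntegral measure_ball_lt_top near)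
      (.setIntegral (hD.diff Metric.isOpen_ball).measure_lt_top far))
      (isUniformBigO_setIntegral_compl_ball_truncBinom J T hδ K)
  obtain ⟨C, hC⟩ := total
  refine ⟨C, fun n hn x => ?_⟩
  have integrableOn : IntegrableOn (fun s => φ s ^ n * planeWave x s) D :=
    ContinuousOn.integrableOn_compact hD (by fun_prop)
  beta_reduce
  rw [setIntegral_sub_eq Metric.isOpen_ball.measurableSet ball_subset integrableOn
    (integrable_truncBinom_mul_gaussianPlaneWave _ hn T x)]
  exact hC n hn x

theorem IsStandardized.exists_isExpansionCoeff_setIntegral (h : IsStandardized S p X)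
    {D : Set (ι → ℝ)} (hD : IsCompact D) (hD_nhds : D ∈ nhds 0)
    (norm_lt_one : ∀ s ∈ D, s ≠ 0 → ‖stepCharFun S p X s‖ < 1) (K : ℕ) :
    ∃ F, IsExpansionCoeff 1 F ∧ IsUniformBigO K fun n (x : ι → ℝ) =>
      (∫ s in D, stepCharFun S p X s ^ n * planeWave x s) -
        (gaussianMass n x : ℂ) * (1 + F n x) := by
  obtain ⟨T, T_mem, U, hU, approx⟩ := h.exists_isUniformBigO_stepCharFun_pow_sub K
  obtain ⟨δ, hδ, ball_subset⟩ := Metric.nhds_basis_ball.mem_iff.mp (Filter.inter_mem hU hD_nhds)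
  obtain ⟨C, hC⟩ := isUniformBigO_setIntegral_pow_mul_planeWave_sub
    (continuous_stepCharFun S p X).continuousOn hD hδ (fun s hs => (ball_subset hs).2) norm_lt_one
    (approx.comp fun s : Metric.ball (0 : ι → ℝ) δ => ⟨s.1, (ball_subset s.2).1⟩)
  refine ⟨_, isExpansionCoeff_sum_choose_mul_gaussianMoment T_mem (2 * K + 1), C,
    fun n hn x => ?_⟩
  have mass_eq := integral_truncBinom_mul_gaussianPlaneWave (2 * K + 2) hn T x
  rw [sum_range_succ', pow_zero, gaussianMoment_one, Nat.choose_zero_right, Nat.cast_one, one_mul,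
    add_comm (Finset.sum _ _)] at mass_eq
  beta_reduce
  rw [← mass_eq]
  exact hC n hn x

end LocalExpansion

section DualCell

open MeasureTheory Complex
open scoped Matrix

variable {ι : Type*} [Fintype ι]

/-- A fundamental domain of the lattice of all `s` with `s · k ∈ 2πℤ` for every `k` in the lattice
generated by the rows of `M`. -/
def dualCell (M : Matrix ι ι ℝ) : Set (ι → ℝ) :=
  M.mulVec ⁻¹' Set.univ.pi fun _ => Set.Icc (-Real.pi) Real.pi

lemma dualCell_mem_nhds_zero (M : Matrix ι ι ℝ) : dualCell M ∈ nhds 0 := by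
  refine (continuous_const.matrix_mulVec continuous_id).tendsto' 0 0 M.mulVec_zero ?_
  exact set_pi_mem_nhds Set.finite_univ fun _ _ =>
    Icc_mem_nhds (neg_lt_zero.mpr Real.pi_pos) Real.pi_pos

lemma setIntegral_Icc_exp_neg_mul_int {k : ℤ} (hk : k ≠ 0) :
    ∫ t in Set.Icc (-Real.pi) Real.pi, cexp (-(t * k) * I) = 0 := by
  have coeff_ne_zero : -(k * I) ≠ 0 := by simpa using hk
  have endpoints :
      -(k * I) * (Real.pi : ℂ) + k * (2 * Real.pi * I) = -(k * I) * (-Real.pi : ℝ) := by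
    push_cast
    ring
  calc
    _ = ∫ t : ℝ in (-Real.pi)..Real.pi, cexp (-(k * I) * t) := by
      rw [integral_Icc_eq_integral_Ioc,
        ← intervalIntegral.integral_of_le (by linarith [Real.pi_pos])]
      congr! 3
      ring
    _ = 0 := by
      rw [integral_exp_mul_complex coeff_ne_zero, ← endpoints, Complex.exp_add,
        Complex.exp_int_mul_two_pi_mul_I, mul_one, sub_self, zero_div]

lemma setIntegral_pi_planeWave_int {k : ι → ℤ} (hk : k ≠ 0) :
    ∫ t in Set.univ.pi fun _ => Set.Icc (-Real.pi) Real.pi,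
      planeWave (fun i => (k i : ℝ)) t = 0 := by
  obtain ⟨i, hi⟩ := Function.ne_iff.mp hk
  have planeWave_eq (t : ι → ℝ) :
      planeWave (fun i => (k i : ℝ)) t = ∏ i, cexp (-(t i * k i) * I) := by
    rw [planeWave, dotProduct, ← Complex.exp_sum, ← sum_mul, sum_neg_distrib]
    push_cast
    rfl
  simp only [planeWave_eq]
  rw [volume_pi, Measure.restrict_pi_pi,
    integral_fintype_prod_eq_prod fun i (t : ℝ) => cexp (-(t * k i) * I)]
  exact prod_eq_zero (mem_univ i) (setIntegral_Icc_exp_neg_mul_int hi)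

variable [DecidableEq ι] {M : Matrix ι ι ℝ}

lemma isCompact_dualCell (hM : IsUnit M) : IsCompact (dualCell M) := by
  rw [dualCell, ← Set.image_eq_preimage_of_inverse (f := M⁻¹.mulVec)]
  · exact (isCompact_univ_pi fun _ => isCompact_Icc).image
      (continuous_const.matrix_mulVec continuous_id)
  · intro s
    rw [Matrix.mulVec_mulVec, Matrix.mul_nonsing_inv _ (M.isUnit_iff_isUnit_det.mp hM),
      Matrix.one_mulVec]
  · intro s
    rw [Matrix.mulVec_mulVec, Matrix.nonsing_inv_mul _ (M.isUnit_iff_isUnit_det.mp hM),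
      Matrix.one_mulVec]

lemma eq_zero_of_mem_dualCell (hM : IsUnit M) {s : ι → ℝ} (hs : s ∈ dualCell M)
    (exp_eq_one : ∀ i, cexp (((s ⬝ᵥ M i : ℝ) : ℂ) * I) = 1) : s = 0 := by
  refine Matrix.mulVec_injective_of_isUnit hM ?_
  rw [Matrix.mulVec_zero]
  funext i
  have mem_Icc : s ⬝ᵥ M i ∈ Set.Icc (-Real.pi) Real.pi := by
    simpa only [Matrix.mulVec, dotProduct_comm] using hs i trivial
  obtain ⟨k, hk⟩ := Complex.exp_eq_one_iff.mp (exp_eq_one i)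
  have dot_eq : s ⬝ᵥ M i = k * (2 * Real.pi) := by
    rw [← mul_assoc] at hk
    exact_mod_cast mul_right_cancel₀ I_ne_zero hk
  have k_eq : k = 0 := by
    rw [dot_eq, Set.mem_Icc] at mem_Icc
    have lt_one : (k : ℝ) < 1 := by nlinarith [Real.pi_pos]
    have neg_one_lt : (-1 : ℝ) < k := by nlinarith [Real.pi_pos]
    have : k < 1 := by exact_mod_cast lt_one
    have : -1 < k := by exact_mod_cast neg_one_lt
    omega
  rw [k_eq, Int.cast_zero, zero_mul, dotProduct_comm] at dot_eq
  exact dot_eq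

lemma setIntegral_dualCell_comp_mulVec (hM : IsUnit M) (f : (ι → ℝ) → ℂ) :
    ∫ s in dualCell M, f (M *ᵥ s) =
      |M.det⁻¹| • ∫ t in Set.univ.pi fun _ => Set.Icc (-Real.pi) Real.pi, f t := by
  have embedding : MeasurableEmbedding (Matrix.toLin' M) :=
    (continuous_const.matrix_mulVec continuous_id).measurableEmbedding
      (Matrix.mulVec_injective_of_isUnit hM)
  have det_ne_zero : M.det ≠ 0 := (M.isUnit_iff_isUnit_det.mp hM).ne_zero
  calc
    _ = ∫ t in Set.univ.pi fun _ => Set.Icc (-Real.pi) Real.pi, f t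
          ∂Measure.map (Matrix.toLin' M) volume := (embedding.setIntegral_map f _).symm
    _ = _ := by
      rw [Real.map_matrix_volume_pi_eq_smul_volume_pi det_ne_zero, Measure.restrict_smul,
        integral_smul_measure, ENNReal.toReal_ofReal (abs_nonneg _)]

lemma setIntegral_dualCell_planeWave_vecMul (hM : IsUnit M) {k : ι → ℤ} (hk : k ≠ 0) :
    ∫ s in dualCell M, planeWave ((fun i => (k i : ℝ)) ᵥ* M) s = 0 := by
  have planeWave_vecMul (s : ι → ℝ) :
      planeWave ((fun i => (k i : ℝ)) ᵥ* M) s = planeWave (fun i => (k i : ℝ)) (M *ᵥ s) := by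
    rw [planeWave, planeWave, dotProduct_comm, ← Matrix.dotProduct_mulVec, dotProduct_comm]
  simp only [planeWave_vecMul]
  rw [setIntegral_dualCell_comp_mulVec hM, setIntegral_pi_planeWave_int hk, smul_zero]

lemma setIntegral_dualCell_planeWave_sum_smul {V : Type*} [AddCommGroup V] [Module ℝ V]
    {b : ι → V} {X : V →ₗ[ℝ] (ι → ℝ)} (hM : IsUnit (Matrix.of fun i => X (b i))) {k : ι → ℤ}
    (hk : ∑ i, (k i : ℝ) • b i ≠ 0) :
    ∫ s in dualCell (Matrix.of fun i => X (b i)), planeWave (X (∑ i, (k i : ℝ) • b i)) s = 0 := by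
  have X_sum : X (∑ i, (k i : ℝ) • b i) =
      (fun i => (k i : ℝ)) ᵥ* Matrix.of fun i => X (b i) := by
    rw [Matrix.vecMul_eq_sum, map_sum]
    exact sum_congr rfl fun i _ => map_smul X _ _
  rw [X_sum]
  refine setIntegral_dualCell_planeWave_vecMul hM ?_
  rintro rfl
  simp at hk

end DualCell

namespace RW

variable {d : ℕ} {R : RW d}

lemma pos_of_mem_support {v : EuclideanSpace ℝ (Fin d)} (hv : v ∈ R.p.support) : 0 < R.p v :=
  (R.nonneg v).lt_of_ne' (Finsupp.mem_support_iff.mp hv)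

lemma support_nonempty (R : RW d) : R.p.support.Nonempty :=
  nonempty_of_sum_ne_zero (f := R.p) (by rw [R.total]; exact one_ne_zero)

/-- The subgroup of `ℤ × ℝ^d` generated by the steps of the space-time walk `n ↦ (n, R_n)`. It is
the sublattice `Y` that the walk lives on. -/
def spaceTimeLattice (R : RW d) : AddSubgroup (ℤ × EuclideanSpace ℝ (Fin d)) :=
  AddSubgroup.closure ((fun v => ((1 : ℤ), v)) '' (R.p.support : Set (EuclideanSpace ℝ (Fin d))))

lemma one_mem_spaceTimeLattice {v : EuclideanSpace ℝ (Fin d)} (hv : v ∈ R.p.support) :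
    ((1 : ℤ), v) ∈ R.spaceTimeLattice :=
  AddSubgroup.subset_closure (Set.mem_image_of_mem _ hv)

lemma mem_spaceTimeLattice_of_P_ne_zero {n : ℕ} {z : EuclideanSpace ℝ (Fin d)}
    (hP : R.P n z ≠ 0) : ((n : ℤ), z) ∈ R.spaceTimeLattice := by
  induction n generalizing z with
  | zero =>
    obtain rfl : z = 0 := by
      by_contra hz
      exact hP (if_neg hz)
    exact R.spaceTimeLattice.zero_mem
  | succ n ih =>
    obtain ⟨v, hv, hPv⟩ := exists_ne_zero_of_sum_ne_zero hP
    simpa using R.spaceTimeLattice.add_mem (ih (right_ne_zero_of_mul hPv))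
      (one_mem_spaceTimeLattice hv)

lemma snd_mem_of_mem_spaceTimeLattice {H : AddSubgroup (EuclideanSpace ℝ (Fin d))}
    (hH : ∀ v ∈ R.p.support, v ∈ H) {q : ℤ × EuclideanSpace ℝ (Fin d)}
    (hq : q ∈ R.spaceTimeLattice) : q.2 ∈ H := by
  have closure_le : R.spaceTimeLattice ≤ H.comap (AddMonoidHom.snd ℤ _) := by
    rw [spaceTimeLattice, AddSubgroup.closure_le]
    rintro _ ⟨v, hv, rfl⟩
    exact hH v hv
  exact closure_le hq

lemma span_support_eq_top {Z : AddSubgroup (EuclideanSpace ℝ (Fin d))}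
    (hZ : Submodule.span ℝ (Z : Set (EuclideanSpace ℝ (Fin d))) = ⊤) (hRZ : R.OnLattice Z) :
    Submodule.span ℝ (R.p.support : Set (EuclideanSpace ℝ (Fin d))) = ⊤ := by
  rw [eq_top_iff, ← hZ, Submodule.span_le]
  intro z hz
  obtain ⟨n, hn⟩ := hRZ.2 z hz
  exact snd_mem_of_mem_spaceTimeLattice (H := (Submodule.span ℝ _).toAddSubgroup)
    (fun v hv => Submodule.subset_span hv) (mem_spaceTimeLattice_of_P_ne_zero hn.ne')

/-- The slice `{z | (0, z) ∈ Y}` of the space-time lattice `Y` at time zero; it is generated by the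
differences of the steps. -/
def timeZeroLattice (R : RW d) : AddSubgroup (EuclideanSpace ℝ (Fin d)) :=
  R.spaceTimeLattice.comap (AddMonoidHom.inr ℤ _)

lemma sub_mem_timeZeroLattice {u v : EuclideanSpace ℝ (Fin d)} (hu : u ∈ R.p.support)
    (hv : v ∈ R.p.support) : u - v ∈ R.timeZeroLattice := by
  have := R.spaceTimeLattice.sub_mem (one_mem_spaceTimeLattice hu) (one_mem_spaceTimeLattice hv)
  rwa [Prod.mk_sub_mk, sub_self] at this

lemma span_timeZeroLattice_eq_top (hbal : R.Balanced)
    (hspan : Submodule.span ℝ (R.p.support : Set (EuclideanSpace ℝ (Fin d))) = ⊤) :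
    Submodule.span ℝ (R.timeZeroLattice : Set (EuclideanSpace ℝ (Fin d))) = ⊤ := by
  rw [eq_top_iff, ← hspan, Submodule.span_le]
  intro u hu
  -- a balanced walk has each step `u` as the mean of the differences `u - v`
  have mean_sub : ∑ v ∈ R.p.support, R.p v • (u - v) = u := by
    simp only [smul_sub, sum_sub_distrib, ← sum_smul, R.total, one_smul]
    rw [show ∑ v ∈ R.p.support, R.p v • v = 0 from hbal, sub_zero]
  rw [SetLike.mem_coe, ← mean_sub]
  exact Submodule.sum_smul_mem _ _ fun v hv =>
    Submodule.subset_span (sub_mem_timeZeroLattice hu hv)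

lemma span_spaceTimeLattice_eq_top (hbal : R.Balanced)
    (hspan : Submodule.span ℝ (R.p.support : Set (EuclideanSpace ℝ (Fin d))) = ⊤) :
    Submodule.span ℝ ((fun q : ℤ × EuclideanSpace ℝ (Fin d) => ((q.1 : ℝ), q.2)) ''
      (R.spaceTimeLattice : Set (ℤ × EuclideanSpace ℝ (Fin d)))) = ⊤ := by
  set W := Submodule.span ℝ ((fun q : ℤ × EuclideanSpace ℝ (Fin d) => ((q.1 : ℝ), q.2)) ''
      (R.spaceTimeLattice : Set (ℤ × EuclideanSpace ℝ (Fin d))))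
  have zero_mem (x : EuclideanSpace ℝ (Fin d)) : ((0 : ℝ), x) ∈ W := by
    have span_le : Submodule.span ℝ (R.timeZeroLattice : Set (EuclideanSpace ℝ (Fin d))) ≤
        W.comap (LinearMap.inr ℝ ℝ _) :=
      Submodule.span_le.mpr fun z hz => Submodule.subset_span ⟨(0, z), hz, by simp⟩
    rw [span_timeZeroLattice_eq_top hbal hspan] at span_le
    exact span_le Submodule.mem_top
  obtain ⟨v, hv⟩ := R.support_nonempty
  have one_mem : ((1 : ℝ), v) ∈ W :=
    Submodule.subset_span ⟨(1, v), one_mem_spaceTimeLattice hv, by simp⟩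
  rw [eq_top_iff]
  rintro ⟨a, x⟩ -
  simpa using W.add_mem (W.smul_mem a one_mem) (zero_mem (x - a • v))

lemma timeZeroLattice_le {Z : AddSubgroup (EuclideanSpace ℝ (Fin d))}
    (hsupp : ∀ v ∈ R.p.support, v ∈ Z) : R.timeZeroLattice ≤ Z :=
  fun _ hz => snd_mem_of_mem_spaceTimeLattice hsupp hz

end RW

namespace IsLattice

variable {d : ℕ} {Z Λ : AddSubgroup (EuclideanSpace ℝ (Fin d))}

lemma mono (hZ : IsLattice Z) (hΛ : Λ ≤ Z)
    (hspan : Submodule.span ℝ (Λ : Set (EuclideanSpace ℝ (Fin d))) = ⊤) : IsLattice Λ :=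
  ⟨hZ.1.imp fun _ hε => ⟨hε.1, fun z hz => hε.2 z (hΛ hz)⟩, hspan⟩

lemma exists_basis (hΛ : IsLattice Λ) :
    ∃ b : Module.Basis (Fin d) ℝ (EuclideanSpace ℝ (Fin d)),
      (∀ i, b i ∈ Λ) ∧ ∀ z ∈ Λ, ∃ k : Fin d → ℤ, z = ∑ i, (k i : ℝ) • b i := by
  let L : Submodule ℤ (EuclideanSpace ℝ (Fin d)) := AddSubgroup.toIntSubmodule Λ
  have discrete : DiscreteTopology L := by
    obtain ⟨ε, hε, ε_le_norm⟩ := hΛ.1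
    refine discreteTopology_of_isOpen_singleton_zero
      (Metric.isOpen_singleton_iff.mpr ⟨ε, hε, fun y hy => ?_⟩)
    by_contra hy_ne
    refine (ε_le_norm y y.2 fun h => hy_ne (Subtype.ext h)).not_gt ?_
    rwa [← dist_zero_right]
  have : IsZLattice ℝ L := ⟨hΛ.2⟩
  have := ZLattice.module_free ℝ L
  have := ZLattice.module_finite ℝ L
  have finrank_eq : Module.finrank ℤ L = d := by
    rw [ZLattice.rank ℝ L, finrank_euclideanSpace_fin]
  let b := Module.finBasisOfFinrankEq ℤ L finrank_eq
  refine ⟨b.ofZLatticeBasis ℝ L, fun i => ?_, fun z hz => ⟨fun i => b.repr ⟨z, hz⟩ i, ?_⟩⟩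
  · rw [Module.Basis.ofZLatticeBasis_apply]
    exact (b i).2
  · conv_lhs => rw [← (b.ofZLatticeBasis ℝ L).sum_repr z]
    exact sum_congr rfl fun i _ =>
      congrArg (· • _) (Module.Basis.ofZLatticeBasis_repr_apply ℝ L b ⟨z, hz⟩ i)

end IsLattice

section Inversion

open MeasureTheory Complex
open scoped Matrix

variable {d : ℕ} {R : RW d} {ι F : Type*} [Fintype ι]

lemma exists_exp_dotProduct_eq_of_one_le_norm_stepCharFun {κ : Type*} {S : Finset κ} {p : κ → ℝ}
    {X : κ → ι → ℝ} {s : ι → ℝ} (pos : ∀ v ∈ S, 0 < p v) (total : ∑ v ∈ S, p v = 1)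
    (h : 1 ≤ ‖stepCharFun S p X s‖) :
    ∃ u : ℂ, u ≠ 0 ∧ ∀ v ∈ S, cexp (((s ⬝ᵥ X v : ℝ) : ℂ) * I) = u := by
  obtain ⟨v₀, hv₀⟩ : S.Nonempty :=
    nonempty_of_sum_ne_zero (f := p) (by rw [total]; exact one_ne_zero)
  refine ⟨cexp (((s ⬝ᵥ X v₀ : ℝ) : ℂ) * I), Complex.exp_ne_zero _, fun v hv => ?_⟩
  by_contra hne
  refine h.not_gt ?_
  simp only [stepCharFun, ← Complex.real_smul]
  exact norm_sum_lt_of_strictConvexSpace (fun v hv => (pos v hv).le) total hv hv₀ hne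
    (pos v hv).ne' (pos v₀ hv₀).ne' fun v _ => (norm_exp_ofReal_mul_I _).le

namespace RW

variable [FunLike F (EuclideanSpace ℝ (Fin d)) (ι → ℝ)]
  [AddMonoidHomClass F (EuclideanSpace ℝ (Fin d)) (ι → ℝ)]

lemma exp_dotProduct_eq_zpow {X : F} {s : ι → ℝ} {u : ℂ} (hu : u ≠ 0)
    (h : ∀ v ∈ R.p.support, cexp (((s ⬝ᵥ X v : ℝ) : ℂ) * I) = u)
    {q : ℤ × EuclideanSpace ℝ (Fin d)} (hq : q ∈ R.spaceTimeLattice) :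
    cexp (((s ⬝ᵥ X q.2 : ℝ) : ℂ) * I) = u ^ q.1 := by
  induction hq using AddSubgroup.closure_induction with
  | mem q hq =>
    obtain ⟨v, hv, rfl⟩ := hq
    rw [zpow_one, h v hv]
  | zero => simp only [Prod.snd_zero, map_zero, dotProduct_zero, ofReal_zero, zero_mul,
      Complex.exp_zero, Prod.fst_zero, zpow_zero]
  | add q q' _ _ ih ih' =>
    rw [Prod.snd_add, map_add, dotProduct_add, ofReal_add, add_mul, Complex.exp_add, ih, ih',
      Prod.fst_add, zpow_add₀ hu]
  | neg q _ ih =>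
    rw [Prod.snd_neg, map_neg, dotProduct_neg, ofReal_neg, neg_mul, Complex.exp_neg, ih,
      Prod.fst_neg, zpow_neg]

lemma norm_stepCharFun_lt_one_of_mem_dualCell [DecidableEq ι] {X : F} {M : Matrix ι ι ℝ}
    (hM : IsUnit M) (row_mem : ∀ i, M i ∈ X '' (R.timeZeroLattice : Set _)) {s : ι → ℝ}
    (hs : s ∈ dualCell M) (hs_ne : s ≠ 0) : ‖stepCharFun R.p.support R.p X s‖ < 1 := by
  by_contra! one_le
  obtain ⟨u, hu, exp_eq⟩ := exists_exp_dotProduct_eq_of_one_le_norm_stepCharFun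
    (fun v hv => pos_of_mem_support hv) R.total one_le
  refine hs_ne (eq_zero_of_mem_dualCell hM hs fun i => ?_)
  obtain ⟨z, hz, z_eq⟩ := row_mem i
  rw [← z_eq, exp_dotProduct_eq_zpow (q := (0, z)) hu exp_eq hz, zpow_zero]

lemma stepCharFun_mul_planeWave (X : F) (z : EuclideanSpace ℝ (Fin d)) (s : ι → ℝ) :
    stepCharFun R.p.support R.p X s * planeWave (X z) s =
      ∑ v ∈ R.p.support, (R.p v : ℂ) * planeWave (X (z - v)) s := by
  simp only [stepCharFun, sum_mul, mul_assoc, exp_mul_planeWave, map_sub]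

lemma setIntegral_stepCharFun_pow_mul_planeWave {X : F} {D : Set (ι → ℝ)} (hD : IsCompact D)
    (orthogonal : ∀ z ∈ R.timeZeroLattice, z ≠ 0 → ∫ s in D, planeWave (X z) s = 0)
    {n : ℕ} {z : EuclideanSpace ℝ (Fin d)} (hz : ((n : ℤ), z) ∈ R.spaceTimeLattice) :
    ∫ s in D, stepCharFun R.p.support R.p X s ^ n * planeWave (X z) s =
      volume.real D * R.P n z := by
  induction n generalizing z with
  | zero =>
    simp only [pow_zero, one_mul, RW.P]
    split_ifs with hz0
    · simp [hz0, planeWave]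
    · rw [orthogonal z hz hz0, ofReal_zero, mul_zero]
  | succ n ih =>
    have integrableOn (v : EuclideanSpace ℝ (Fin d)) : IntegrableOn (fun s => (R.p v : ℂ) *
        (stepCharFun R.p.support R.p X s ^ n * planeWave (X (z - v)) s)) D := by
      have := continuous_stepCharFun R.p.support R.p X
      exact ContinuousOn.integrableOn_compact hD (by fun_prop)
    have sub_mem {v : EuclideanSpace ℝ (Fin d)} (hv : v ∈ R.p.support) :
        ((n : ℤ), z - v) ∈ R.spaceTimeLattice := by
      simpa using R.spaceTimeLattice.sub_mem hz (one_mem_spaceTimeLattice hv)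
    simp only [pow_succ, mul_assoc, stepCharFun_mul_planeWave, mul_sum,
      mul_left_comm _ ((R.p _ : ℝ) : ℂ)]
    rw [integral_finsetSum _ fun v _ => integrableOn v, RW.P, ofReal_sum, mul_sum]
    refine sum_congr rfl fun v hv => ?_
    rw [integral_const_mul, ih (sub_mem hv), ofReal_mul]
    ring

end RW

end Inversion

section Whitening

open scoped Matrix

open scoped MatrixOrder in
lemma exists_isUnit_mul_mul_transpose_eq_one {ι : Type*} [Fintype ι] [DecidableEq ι]
    {M : Matrix ι ι ℝ} (hM : M.PosDef) : ∃ W : Matrix ι ι ℝ, IsUnit W ∧ W * M * Wᵀ = 1 := by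
  obtain ⟨A, hA, rfl⟩ := CStarAlgebra.isStrictlyPositive_iff_eq_star_mul_self.mp
    hM.isStrictlyPositive
  have hdet : IsUnit A.det := A.isUnit_iff_isUnit_det.mp hA
  have hdet_transpose : IsUnit Aᵀ.det := by rwa [Matrix.det_transpose]
  refine ⟨Aᵀ⁻¹, ?_, ?_⟩
  · rwa [Matrix.isUnit_nonsing_inv_iff, Matrix.isUnit_transpose]
  · rw [Matrix.star_eq_conjTranspose, Matrix.conjTranspose_eq_transpose_of_trivial,
      Matrix.nonsing_inv_mul_cancel_left _ _ hdet_transpose, Matrix.transpose_nonsing_inv,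
      Matrix.transpose_transpose, Matrix.mul_nonsing_inv _ hdet]

lemma exists_posDef_dotProduct_eq {ι κ : Type*} [Fintype ι] [Fintype κ]
    {w : EuclideanSpace ℝ ι →ₗ[ℝ] (κ → ℝ)} (hw : Function.Injective w) :
    ∃ B : Matrix ι ι ℝ, B.PosDef ∧ ∀ z, (B *ᵥ z.ofLp) ⬝ᵥ z.ofLp = (w z ⬝ᵥ w z) / 2 := by
  let W := LinearMap.toMatrix' (w ∘ₗ (WithLp.linearEquiv 2 ℝ (ι → ℝ)).symm.toLinearMap)
  have mulVec_eq (z : EuclideanSpace ℝ ι) : W *ᵥ z.ofLp = w z := LinearMap.toMatrix'_mulVec _ _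
  have injective : Function.Injective W.mulVec := fun x y hxy =>
    WithLp.toLp_injective 2 (hw (by simpa only [← mulVec_eq] using hxy))
  refine ⟨(1 / 2 : ℝ) • (Wᵀ * W), ?_, fun z => ?_⟩
  · rw [← Matrix.conjTranspose_eq_transpose_of_trivial]
    exact (Matrix.PosDef.conjTranspose_mul_self W injective).smul one_half_pos
  · rw [Matrix.smul_mulVec, smul_dotProduct, ← Matrix.mulVec_mulVec, Matrix.mulVec_transpose,
      ← Matrix.dotProduct_mulVec, mulVec_eq, smul_eq_mul, one_div_mul_eq_div]

namespace RW

variable {d : ℕ} {R : RW d}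

lemma dotProduct_corr_mulVec (R : RW d) (x : Fin d → ℝ) :
    x ⬝ᵥ R.corr *ᵥ x = ∑ v ∈ R.p.support, R.p v * (x ⬝ᵥ v.ofLp) ^ 2 := by
  have corr_eq : R.corr = ∑ v ∈ R.p.support, R.p v • Matrix.vecMulVec v.ofLp v.ofLp := by
    ext i j
    simp [corr, Matrix.sum_apply, Matrix.vecMulVec_apply, mul_assoc]
  rw [corr_eq, Matrix.sum_mulVec, dotProduct_sum]
  refine sum_congr rfl fun v _ => ?_
  rw [Matrix.smul_mulVec, dotProduct_smul, Matrix.vecMulVec_mulVec, op_smul_eq_smul,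
    dotProduct_smul, smul_eq_mul, smul_eq_mul, dotProduct_comm v.ofLp x, sq]

lemma corr_posDef (hspan : Submodule.span ℝ (R.p.support : Set (EuclideanSpace ℝ (Fin d))) = ⊤) :
    R.corr.PosDef := by
  refine Matrix.PosDef.of_dotProduct_mulVec_pos ?_ fun x hx => ?_
  · ext i j
    simp only [corr, Matrix.conjTranspose_apply, Matrix.of_apply, star_trivial, mul_right_comm]
  rw [star_trivial, dotProduct_corr_mulVec]
  have nonneg (v : EuclideanSpace ℝ (Fin d)) : 0 ≤ R.p v * (x ⬝ᵥ v.ofLp) ^ 2 :=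
    mul_nonneg (R.nonneg v) (sq_nonneg _)
  refine (sum_nonneg fun v _ => nonneg v).lt_of_ne' fun sum_eq_zero => hx ?_
  let ℓ : EuclideanSpace ℝ (Fin d) →ₗ[ℝ] ℝ :=
    dotProductBilin ℝ ℝ x ∘ₗ (WithLp.linearEquiv 2 ℝ (Fin d → ℝ)).toLinearMap
  have ℓ_eq_zero (v : EuclideanSpace ℝ (Fin d)) (hv : v ∈ R.p.support) : ℓ v = 0 := by
    have := (sum_eq_zero_iff_of_nonneg fun v _ => nonneg v).mp sum_eq_zero v hv
    exact pow_eq_zero_iff two_ne_zero |>.mp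
      ((mul_eq_zero.mp this).resolve_left (pos_of_mem_support hv).ne')
  have top_le_ker : ⊤ ≤ LinearMap.ker ℓ := hspan ▸ Submodule.span_le.mpr ℓ_eq_zero
  exact dotProduct_self_eq_zero.mp (top_le_ker (Submodule.mem_top (x := WithLp.toLp 2 x)))

lemma exists_isStandardized (hbal : R.Balanced)
    (hspan : Submodule.span ℝ (R.p.support : Set (EuclideanSpace ℝ (Fin d))) = ⊤) :
    ∃ w : EuclideanSpace ℝ (Fin d) ≃ₗ[ℝ] (Fin d → ℝ), IsStandardized R.p.support R.p w := by
  obtain ⟨W, hW, W_corr⟩ := exists_isUnit_mul_mul_transpose_eq_one (corr_posDef hspan)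
  let w := (WithLp.linearEquiv 2 ℝ (Fin d → ℝ)).trans (W.toLinearEquiv' hW.invertible)
  refine ⟨w, R.total, fun s => ?_, fun s => ?_⟩
  · have dot_mean : s ⬝ᵥ w (∑ v ∈ R.p.support, R.p v • v) = 0 := by
      rw [show ∑ v ∈ R.p.support, R.p v • v = 0 from hbal, map_zero, dotProduct_zero]
    simpa only [map_sum, map_smul, dotProduct_sum, dotProduct_smul, smul_eq_mul] using dot_mean
  · have dot_eq (v : EuclideanSpace ℝ (Fin d)) : s ⬝ᵥ w v = (Wᵀ *ᵥ s) ⬝ᵥ v.ofLp := by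
      rw [Matrix.mulVec_transpose, ← Matrix.dotProduct_mulVec]
      rfl
    simp only [dot_eq]
    rw [← dotProduct_corr_mulVec, Matrix.mulVec_transpose, ← Matrix.dotProduct_mulVec,
      ← Matrix.mulVec_transpose, Matrix.mulVec_mulVec, Matrix.mulVec_mulVec, W_corr,
      Matrix.one_mulVec]

end RW

end Whitening

section RealPolynomial

lemma exists_eval_eq_re_eval {σ : Type*} (Q : MvPolynomial σ ℂ) : ∃ Q' : MvPolynomial σ ℝ,
    ∀ x : σ → ℝ, MvPolynomial.eval x Q' = (MvPolynomial.eval (fun i => (x i : ℂ)) Q).re := by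
  refine ⟨∑ α ∈ Q.support, MvPolynomial.monomial α (Q.coeff α).re, fun x => ?_⟩
  rw [map_sum, MvPolynomial.eval_eq, Complex.re_sum]
  refine sum_congr rfl fun α _ => ?_
  rw [MvPolynomial.eval_monomial, ← Complex.re_mul_ofReal, Finsupp.prod]
  push_cast
  rfl

variable {ι : Type*} [Fintype ι]

namespace IsExpansionCoeff

variable {m d : ℕ} {F : ℕ → (ι → ℝ) → ℂ}

lemma exists_real_polynomial (hF : IsExpansionCoeff m F)
    (w : EuclideanSpace ℝ (Fin d) →ₗ[ℝ] (ι → ℝ)) :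
    ∃ (L : ℕ) (Q : MvPolynomial (Fin (d + 1)) ℝ), ∀ n : ℕ, n ≠ 0 → ∀ z,
      MvPolynomial.eval (Fin.cons (n : ℝ) fun i => z i) Q / (n : ℝ) ^ L = (F n (w z)).re := by
  obtain ⟨L, Q, hQ⟩ := hF.exists_polynomial
  obtain ⟨Q', hQ'⟩ := exists_eval_eq_re_eval Q
  let coord (i : ι) : MvPolynomial (Fin (d + 1)) ℝ :=
    ∑ j, MvPolynomial.C (w (EuclideanSpace.single j 1) i) * MvPolynomial.X j.succ
  have eval_coord (a : ℝ) (z : EuclideanSpace ℝ (Fin d)) (i : ι) :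
      MvPolynomial.eval (Fin.cons a fun i => z i) (coord i) = w z i := by
    have sum_single : z = ∑ j, z j • EuclideanSpace.single j (1 : ℝ) := by
      simpa only [EuclideanSpace.basisFun_apply, EuclideanSpace.basisFun_repr] using
        ((EuclideanSpace.basisFun (Fin d) ℝ).sum_repr z).symm
    conv_rhs => rw [sum_single, map_sum, Finset.sum_apply]
    simp only [coord, map_sum, map_mul, map_smul, MvPolynomial.eval_C, MvPolynomial.eval_X,
      Fin.cons_succ, Pi.smul_apply, smul_eq_mul, mul_comm]
  refine ⟨L, MvPolynomial.bind₁ (fun o => o.elim (MvPolynomial.X 0) coord) Q', fun n hn z => ?_⟩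
  have eval_bind : MvPolynomial.eval (Fin.cons (n : ℝ) fun i => z i)
      (MvPolynomial.bind₁ (fun o => o.elim (MvPolynomial.X 0) coord) Q') =
      MvPolynomial.eval (fun o => o.elim (n : ℝ) (w z)) Q' := by
    rw [← MvPolynomial.coe_aeval_eq_eval, RingHom.coe_coe, MvPolynomial.aeval_bind₁,
      ← MvPolynomial.coe_aeval_eq_eval, RingHom.coe_coe]
    congr 2 with o
    cases o with
    | none => exact MvPolynomial.aeval_X _ _
    | some i => exact eval_coord n z i
  have elim_eq : (fun o : Option ι => ((o.elim (n : ℝ) (w z) : ℝ) : ℂ)) =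
      fun o => o.elim (n : ℂ) fun i => (w z i : ℂ) := by
    funext o
    cases o <;> rfl
  rw [eval_bind, hQ', elim_eq, ← hQ n hn, ← Complex.ofReal_natCast, ← Complex.ofReal_pow,
    Complex.re_mul_ofReal, mul_div_cancel_right₀ _ (by positivity)]

end IsExpansionCoeff

end RealPolynomial

section Asymptotics

open Filter Asymptotics

lemma tendsto_one_add_mul_sqrt_log_pow_div_sqrt (c : ℝ) (N : ℕ) :
    Tendsto (fun x : ℝ => (1 + c * Real.sqrt (Real.log x)) ^ N / Real.sqrt x) atTop (nhds 0) := by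
  have sqrt_log_le : (fun x => Real.sqrt (Real.log x)) =O[atTop] Real.log := by
    refine IsBigO.of_bound 1 ?_
    filter_upwards [Real.tendsto_log_atTop.eventually_ge_atTop 1] with x hx
    rw [one_mul, Real.norm_of_nonneg (Real.sqrt_nonneg _), Real.norm_of_nonneg (by positivity)]
    exact Real.sqrt_le_self_iff.mpr (Or.inr hx)
  have isBigO : (fun x => 1 + c * Real.sqrt (Real.log x)) =O[atTop] Real.log :=
    (Real.isLittleO_const_log_atTop).isBigO.add (sqrt_log_le.const_mul_left c)
  have isLittleO : (fun x => Real.log x ^ N) =o[atTop] Real.sqrt := by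
    simpa only [Real.rpow_natCast, ← Real.sqrt_eq_rpow] using
      isLittleO_log_rpow_rpow_atTop (N : ℝ) (one_half_pos (α := ℝ))
  exact ((isBigO.pow N).trans_isLittleO isLittleO).tendsto_div_nhds_zero

lemma IsExpansionCoeff.eventually_norm_le {ι : Type*} [Fintype ι] {F : ℕ → (ι → ℝ) → ℂ}
    (hF : IsExpansionCoeff 1 F) (c : ℝ) {ε : ℝ} (hε : 0 < ε) :
    ∀ᶠ n : ℕ in atTop, ∀ x, ‖x‖ ≤ c * Real.sqrt (n * Real.log n) → ‖F n x‖ ≤ ε := by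
  obtain ⟨C, N, hC, bound⟩ := hF.exists_bound
  have tendsto : Tendsto (fun n : ℕ => C * ((1 + c * Real.sqrt (Real.log n)) ^ N / Real.sqrt n))
      atTop (nhds 0) := by
    simpa only [mul_zero, Function.comp_def] using
      ((tendsto_one_add_mul_sqrt_log_pow_div_sqrt c N).comp
        tendsto_natCast_atTop_atTop).const_mul C
  filter_upwards [tendsto.eventually_le_const hε, eventually_ne_atTop 0] with n le_eps hn x hx
  have sqrt_pos : 0 < Real.sqrt n := Real.sqrt_pos.mpr (by positivity)
  have norm_div_le : ‖x‖ / Real.sqrt n ≤ c * Real.sqrt (Real.log n) := by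
    rwa [div_le_iff₀ sqrt_pos, mul_assoc, mul_comm (Real.sqrt (Real.log n)),
      ← Real.sqrt_mul n.cast_nonneg]
  calc
    ‖F n x‖ ≤ C * (1 / Real.sqrt n) ^ 1 * (1 + ‖x‖ / Real.sqrt n) ^ N := bound n hn x
    _ ≤ C * (1 / Real.sqrt n) ^ 1 * (1 + c * Real.sqrt (Real.log n)) ^ N := by gcongr
    _ = C * ((1 + c * Real.sqrt (Real.log n)) ^ N / Real.sqrt n) := by ring
    _ ≤ ε := le_eps

lemma IsExpansionCoeff.eventually_norm_comp_le {ι E : Type*} [Fintype ι] [NormedAddCommGroup E]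
    [NormedSpace ℝ E] {F : ℕ → (ι → ℝ) → ℂ} (hF : IsExpansionCoeff 1 F) (w : E →L[ℝ] (ι → ℝ))
    (c : ℝ) {ε : ℝ} (hε : 0 < ε) :
    ∀ᶠ n : ℕ in atTop, ∀ z, ‖z‖ ≤ c * Real.sqrt (n * Real.log n) → ‖F n (w z)‖ ≤ ε := by
  filter_upwards [hF.eventually_norm_le (‖w‖ * c) hε] with n hn z hz
  refine hn (w z) ((w.le_opNorm z).trans ?_)
  rw [mul_assoc]
  gcongr

end Asymptotics

lemma gaussianMass_natCast {ι : Type*} [Fintype ι] (n : ℕ) (x : ι → ℝ) :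
    gaussianMass n x = Real.sqrt (2 * Real.pi) ^ Fintype.card ι *
      (n : ℝ) ^ (-(Fintype.card ι : ℝ) / 2) * Real.exp (-((x ⬝ᵥ x) / 2) / n) := by
  have rpow_eq : (n : ℝ) ^ (-(Fintype.card ι : ℝ) / 2) =
      (Real.sqrt n ^ Fintype.card ι)⁻¹ := by
    rw [neg_div, Real.rpow_neg n.cast_nonneg, Real.rpow_div_two_eq_sqrt _ n.cast_nonneg,
      Real.rpow_natCast]
  rw [gaussianMass, rpow_eq, Real.sqrt_div (by positivity), div_pow, div_eq_mul_inv, ← neg_div,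
    div_div]

namespace RW

open MeasureTheory Complex
open scoped Matrix

variable {d : ℕ} {R : RW d} {Z : AddSubgroup (EuclideanSpace ℝ (Fin d))}

theorem exists_isExpansionCoeff_P (hZ : IsLattice Z) (hRZ : R.OnLattice Z) (hbal : R.Balanced)
    (K : ℕ) :
    ∃ w : EuclideanSpace ℝ (Fin d) ≃ₗ[ℝ] (Fin d → ℝ), ∃ τ : ℝ, 0 < τ ∧
      ∃ F, IsExpansionCoeff 1 F ∧ ∃ C : ℝ, ∀ n : ℕ, n ≠ 0 → ∀ z,
        ((n : ℤ), z) ∈ R.spaceTimeLattice →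
          ‖(R.P n z : ℂ) - τ * (gaussianMass n (w z) * (1 + F n (w z)))‖ ≤ C / (n : ℝ) ^ K := by
  have hspan := span_support_eq_top hZ.2 hRZ
  obtain ⟨b, b_mem, exists_coord⟩ := (hZ.mono (timeZeroLattice_le hRZ.1)
    (span_timeZeroLattice_eq_top hbal hspan)).exists_basis
  obtain ⟨w, hw⟩ := exists_isStandardized hbal hspan
  let M : Matrix (Fin d) (Fin d) ℝ := Matrix.of fun i => w (b i)
  have hM : IsUnit M := Matrix.linearIndependent_rows_iff_isUnit.mp
    (b.linearIndependent.map' w.toLinearMap w.ker)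
  have orthogonal (z : EuclideanSpace ℝ (Fin d)) (hz : z ∈ R.timeZeroLattice) (hz0 : z ≠ 0) :
      ∫ s in dualCell M, planeWave (w z) s = 0 := by
    obtain ⟨k, rfl⟩ := exists_coord z hz
    exact setIntegral_dualCell_planeWave_sum_smul (X := w.toLinearMap) hM hz0
  obtain ⟨F, hF, C, hC⟩ := hw.exists_isExpansionCoeff_setIntegral (isCompact_dualCell hM)
    (dualCell_mem_nhds_zero M) (fun s => norm_stepCharFun_lt_one_of_mem_dualCell hM fun i =>
      ⟨b i, b_mem i, rfl⟩) K
  have volume_pos : 0 < volume.real (dualCell M) := ENNReal.toReal_pos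
    (Measure.measure_pos_of_mem_nhds _ (dualCell_mem_nhds_zero M)).ne'
    (isCompact_dualCell hM).measure_lt_top.ne
  set V := volume.real (dualCell M)
  refine ⟨w, V⁻¹, inv_pos.mpr volume_pos, F, hF, V⁻¹ * C, fun n hn z hz => ?_⟩
  have inversion := setIntegral_stepCharFun_pow_mul_planeWave (isCompact_dualCell hM) orthogonal hz
  have P_eq : (R.P n z : ℂ) = (V⁻¹ : ℝ) * (V * R.P n z) := by
    rw [ofReal_inv, inv_mul_cancel_left₀ (ofReal_ne_zero.mpr volume_pos.ne')]
  rw [P_eq, ← mul_sub, ← inversion, norm_mul, norm_real,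
    Real.norm_of_nonneg (inv_pos.mpr volume_pos).le, mul_div_assoc]
  exact mul_le_mul_of_nonneg_left (hC n hn (w z)) (inv_pos.mpr volume_pos).le

lemma exists_abs_P_sub_le (hZ : IsLattice Z) (hRZ : R.OnLattice Z) (hbal : R.Balanced) (K : ℕ) :
    ∃ w : EuclideanSpace ℝ (Fin d) ≃ₗ[ℝ] (Fin d → ℝ), ∃ τ : ℝ, 0 < τ ∧
      ∃ F, IsExpansionCoeff 1 F ∧ ∃ C : ℝ, ∀ n : ℕ, n ≠ 0 → ∀ z,
        ((n : ℤ), z) ∈ R.spaceTimeLattice →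
          |R.P n z - τ * (n : ℝ) ^ (-(d : ℝ) / 2) * Real.exp (-((w z ⬝ᵥ w z) / 2) / n) *
            (1 + F n (w z)).re| ≤ C / (n : ℝ) ^ K := by
  obtain ⟨w, τ, hτ, F, hF, C, hC⟩ := exists_isExpansionCoeff_P hZ hRZ hbal K
  refine ⟨w, τ * Real.sqrt (2 * Real.pi) ^ d, by positivity, F, hF, C, fun n hn z hz => ?_⟩
  refine le_of_eq_of_le (congrArg abs ?_) ((abs_re_le_norm _).trans (hC n hn z hz))
  rw [sub_re, ofReal_re, re_ofReal_mul, re_ofReal_mul, gaussianMass_natCast, Fintype.card_fin]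
  ring

end RW

/-- **Local expansion of the `n`-step probabilities** (Lemma 3).  For a `d`-dimensional
balanced bounded random walk on a lattice `Z` and any `K`, there are a
`(d+1)`-dimensional sublattice `Y ⊆ ℤ × Z`, a constant `τ' > 0`, a positive definite
quadratic form `B` and a function `Q(n,z) = Qp(n,z)/n^L` (so `n^L·Q` is a polynomial in
`n` and the coordinates of `z`) with `Q = 1 + o(1)` uniformly for `‖z‖ ≤ C√(n log n)`,
such that `P_n(z) = τ'·n^{-d/2}·e^{-B(z)/n}·Q(n,z) + O(n^{-K})` on `Y`, while
`P_n(z) = 0` off `Y`. -/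
theorem local_expansion
    {d : ℕ} (hd : 1 ≤ d) (Z : AddSubgroup (EuclideanSpace ℝ (Fin d))) (hZ : IsLattice Z)
    (R : RW d) (hRZ : R.OnLattice Z) (hbal : R.Balanced) (K : ℕ) :
    ∃ (Y : AddSubgroup (ℤ × EuclideanSpace ℝ (Fin d))),
      (∀ q ∈ Y, q.2 ∈ Z) ∧
      Submodule.span ℝ
          ((fun q : ℤ × EuclideanSpace ℝ (Fin d) => ((q.1 : ℝ), q.2)) '' (Y : Set _)) = ⊤ ∧
      ∃ (τ' : ℝ), 0 < τ' ∧
      ∃ (MB : Matrix (Fin d) (Fin d) ℝ), MB.PosDef ∧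
      ∃ (L : ℕ) (Qp : MvPolynomial (Fin (d + 1)) ℝ),
        -- `Q(n,z) := Qp(n, z) / n^L` satisfies `Q = 1 + o(1)` uniformly for
        -- `‖z‖ ≤ C √(n log n)`:
        (∀ c > (0 : ℝ), ∀ ε > (0 : ℝ), ∃ N : ℕ, ∀ n : ℕ, N ≤ n →
          ∀ z : EuclideanSpace ℝ (Fin d),
            ‖z‖ ≤ c * Real.sqrt (n * Real.log n) →
            |MvPolynomial.eval (Fin.cons (n : ℝ) fun i => z i) Qp / (n : ℝ) ^ L - 1| ≤ ε) ∧
        (∃ C₀ : ℝ, ∀ (n : ℕ), 1 ≤ n → ∀ z ∈ Z, ((n : ℤ), z) ∈ Y →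
          |R.P n z -
              τ' * (n : ℝ) ^ (-(d : ℝ) / 2) *
                Real.exp (-(∑ i, MB.mulVec (fun j => z j) i * z i) / n) *
                (MvPolynomial.eval (Fin.cons (n : ℝ) fun i => z i) Qp / (n : ℝ) ^ L)| ≤
            C₀ / (n : ℝ) ^ K) ∧
        (∀ (n : ℕ), ∀ z ∈ Z, ((n : ℤ), z) ∉ Y → R.P n z = 0) := by
  have hspan := RW.span_support_eq_top hZ.2 hRZ
  obtain ⟨w, τ, hτ, F, hF, C, P_sub_le⟩ := RW.exists_abs_P_sub_le hZ hRZ hbal K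
  obtain ⟨B, hB, B_eq⟩ := exists_posDef_dotProduct_eq (w := w.toLinearMap) w.injective
  obtain ⟨L, Q, Q_eq⟩ :=
    ((IsExpansionCoeff.const 1).add (hF.mono zero_le_one)).exists_real_polynomial w.toLinearMap
  refine ⟨R.spaceTimeLattice, fun q hq => RW.snd_mem_of_mem_spaceTimeLattice hRZ.1 hq,
    RW.span_spaceTimeLattice_eq_top hbal hspan, τ, hτ, B, hB, L, Q, fun c _ ε hε => ?_,
    ⟨C, fun n hn z _ hz => ?_⟩,
    fun n z _ hz => by_contra fun hP => hz (RW.mem_spaceTimeLattice_of_P_ne_zero hP)⟩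
  · refine Filter.eventually_atTop.mp ?_
    filter_upwards [hF.eventually_norm_comp_le w.toLinearMap.toContinuousLinearMap c hε,
      Filter.eventually_ne_atTop 0] with n F_le hn z hz
    rw [Q_eq n hn, Complex.add_re, Complex.one_re, add_sub_cancel_left]
    exact (Complex.abs_re_le_norm _).trans (F_le z hz)
  · have hn0 : n ≠ 0 := Nat.one_le_iff_ne_zero.mp hn
    rw [Q_eq n hn0]
    change |R.P n z - τ * (n : ℝ) ^ (-(d : ℝ) / 2) *
      Real.exp (-((B.mulVec z.ofLp) ⬝ᵥ z.ofLp) / n) * _| ≤ _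
    rw [B_eq]
    exact P_sub_le n hn0 z hz
end
end
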